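/- arXiv:1901.07304 — 2 statements merged into one kernel-verified Lean document; each statement's English description precedes it below -/
import Mathlib

section
/- Let (X,f) be a TDS, φ: X → ℝ continuous, and μ ∈ M(X,f). For any ergodic decomposition τ of μ, P_μ(f,φ) = ess sup{P_ν(f,φ) : ν ∈ E(X,f)} = ess sup{h_ν(f) + ∫_X φ dν : ν ∈ E(X,f)}, with the essential supremum taken with respect to τ. Consequently, P_μ(f,φ) ≥ h_μ(f) + ∫_X φ dμ. -/
open MeasureTheory Filter Set
open scoped ENNReal NNReal

namespace Paper

variable {X : Type*}

/-- Birkhoff sum `S_n φ(x) = ∑_{i<n} φ(f^i x)`. -/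
def birk (f : X → X) (φ : X → ℝ) (n : ℕ) (x : X) : ℝ :=
  ∑ i ∈ Finset.range n, φ (f^[i] x)

section Metric

variable [MetricSpace X]

/-- The Bowen ball `B_n(x, ε) = {y : d_n(x,y) < ε}`. -/
def bowenBall (f : X → X) (x : X) (n : ℕ) (ε : ℝ) : Set X :=
  {y | ∀ i < n, dist (f^[i] x) (f^[i] y) < ε}

/-- The number of indices `0 ≤ j ≤ n-1` with `dist (f^j x, f^j y) > ε`. -/
noncomputable def sepCount (f : X → X) (ε : ℝ) (n : ℕ) (x y : X) : ℕ :=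
  Nat.card {j : ℕ // j < n ∧ ε < dist (f^[j] x) (f^[j] y)}

/-- `A` is an `(n,ε)`-separated set. -/
def IsNSep (f : X → X) (n : ℕ) (ε : ℝ) (A : Set X) : Prop :=
  ∀ x ∈ A, ∀ y ∈ A, x ≠ y → ∃ j < n, ε < dist (f^[j] x) (f^[j] y)

/-- `A` is a `(δ,n,ε)`-separated set. -/
def IsDeltaSep (f : X → X) (δ : ℝ) (n : ℕ) (ε : ℝ) (A : Set X) : Prop :=
  ∀ x ∈ A, ∀ y ∈ A, x ≠ y → δ * n ≤ (sepCount f ε n x y : ℝ)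

end Metric

section Entropy

variable [MeasurableSpace X]

/-- A finite measurable partition of `X`. -/
def IsFinPartition (s : Finset (Set X)) : Prop :=
  (∀ A ∈ s, MeasurableSet A) ∧ ⋃₀ (s : Set (Set X)) = Set.univ ∧
    (s : Set (Set X)).Pairwise Disjoint

/-- The entropy `H(μ, ⋁_{i<n} f^{-i} ξ)` of the `n`-th dynamical refinement of the
partition `s` (with the convention `0 · log 0 = 0`). -/
noncomputable def dynH (f : X → X) (μ : Measure X) (s : Finset (Set X)) (n : ℕ) : ℝ :=
  -∑ w : Fin n → {A // A ∈ s},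
      (μ (⋂ i : Fin n, f^[(i : ℕ)] ⁻¹' ((w i : Set X)))).toReal *
        Real.log (μ (⋂ i : Fin n, f^[(i : ℕ)] ⁻¹' ((w i : Set X)))).toReal

/-- The Kolmogorov–Sinai entropy `h_μ(f)`, as an extended real:
`sup_ξ lim_n H(μ, ξ^n)/n`. -/
noncomputable def ksEntropy (f : X → X) (μ : Measure X) : EReal :=
  ⨆ (s : Finset (Set X)) (_ : IsFinPartition s),
    Filter.atTop.liminf (fun n : ℕ => ((dynH f μ s n / n : ℝ) : EReal))

end Entropy

section Pressure

variable [MetricSpace X] [MeasurableSpace X]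

/-- Brin–Katok local entropy `h_μ(x) = lim_{ε→0} liminf_n -(1/n) log μ(B_n(x,ε))`
(the limit in `ε` being a supremum by monotonicity). -/
noncomputable def localEntropy (f : X → X) (μ : Measure X) (x : X) : EReal :=
  ⨆ (ε : ℝ) (_ : 0 < ε),
    Filter.atTop.liminf (fun n : ℕ =>
      (((n : ℝ)⁻¹ : ℝ) : EReal) * (-(μ (bowenBall f x n ε)).log))

/-- The point-wise measure theoretic pressure
`P_μ(f,φ,x) = lim_{ε→0} liminf_n (1/n)[-log μ(B_n(x,ε)) + S_nφ(x)]`. -/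
noncomputable def ptPressure (f : X → X) (φ : X → ℝ) (μ : Measure X) (x : X) : EReal :=
  ⨆ (ε : ℝ) (_ : 0 < ε),
    Filter.atTop.liminf (fun n : ℕ =>
      (((n : ℝ)⁻¹ : ℝ) : EReal) * (-(μ (bowenBall f x n ε)).log + ((birk f φ n x : ℝ) : EReal)))

/-- `M(Z,φ,α,N,ε)`: infimum of `∑_i exp(-α n_i + S_{n_i}φ(x_i))` over countable covers
of `Z` by Bowen balls `B_{n_i}(x_i,ε)` with `n_i ≥ N`. -/
noncomputable def Mcov (f : X → X) (φ : X → ℝ) (Z : Set X) (α : ℝ) (N : ℕ) (ε : ℝ) : ℝ≥0∞ :=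
  ⨅ (c : ℕ → X × ℕ)
    (_ : (∀ i, N ≤ (c i).2) ∧ Z ⊆ ⋃ i, bowenBall f (c i).1 (c i).2 ε),
      ∑' i, ENNReal.ofReal (Real.exp (-α * ((c i).2 : ℝ) + birk f φ (c i).2 (c i).1))

/-- `m(Z,φ,α,ε) = lim_{N→∞} M(Z,φ,α,N,ε)` (a supremum, by monotonicity in `N`). -/
noncomputable def mZ (f : X → X) (φ : X → ℝ) (Z : Set X) (α : ℝ) (ε : ℝ) : ℝ≥0∞ :=
  ⨆ N : ℕ, Mcov f φ Z α N ε

/-- `P_Z(f,φ,ε) = inf {α : m(Z,φ,α,ε) = 0}`, the jump-up point of `α ↦ m(Z,φ,α,ε)`. -/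
noncomputable def PZeps (f : X → X) (φ : X → ℝ) (Z : Set X) (ε : ℝ) : EReal :=
  ⨅ (α : ℝ) (_ : mZ f φ Z α ε = 0), ((α : ℝ) : EReal)

/-- The topological pressure `P_Z(f,φ) = lim_{ε→0} P_Z(f,φ,ε)` on an arbitrary set `Z`
(the limit in `ε` being a supremum by monotonicity). -/
noncomputable def PZ (f : X → X) (φ : X → ℝ) (Z : Set X) : EReal :=
  ⨆ (ε : ℝ) (_ : 0 < ε), PZeps f φ Z ε

/-- The measure theoretic pressure
`P_μ(f,φ) = lim_{ε→0} inf {P_Z(f,φ,ε) : Z Borel, μ(Z) = 1}`. -/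
noncomputable def Pmu (f : X → X) (φ : X → ℝ) (μ : Measure X) : EReal :=
  ⨆ (ε : ℝ) (_ : 0 < ε),
    ⨅ (Z : Set X) (_ : MeasurableSet Z ∧ μ Z = 1), PZeps f φ Z ε

end Pressure

noncomputable instance {Y : Type*} [MeasurableSpace Y] [TopologicalSpace Y]
    [OpensMeasurableSpace Y] : MeasurableSpace (ProbabilityMeasure Y) := borel _

section Decomp

variable [MeasurableSpace X] [TopologicalSpace X] [OpensMeasurableSpace X]

/-- `τ` is an ergodic decomposition of the invariant measure `μ` (supported on `J`):
a Borel probability measure on the space `M(X)` of Borel probability measures with the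
weak-star topology, giving full measure to the ergodic measures with full measure on `J`,
and such that `∫ ψ dμ = ∫ (∫ ψ dν) dτ(ν)` for every `ψ ∈ L¹(μ)`. -/
def IsErgodicDecomp (f : X → X) (J : Set X) (μ : Measure X)
    (τ : Measure (ProbabilityMeasure X)) : Prop :=
  IsProbabilityMeasure τ ∧
  τ {ν : ProbabilityMeasure X | Ergodic f ν.toMeasure ∧ ν.toMeasure J = 1} = 1 ∧
  ∀ ψ : X → ℝ, Integrable ψ μ →
    ∫ x, ψ x ∂μ = ∫ ν : ProbabilityMeasure X, (∫ x, ψ x ∂ν.toMeasure) ∂τ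

end Decomp

end Paper

open Paper

namespace PressureAux

/-- Prepend a letter to a sequence. -/
def consS {A : Type*} (a : A) (u : ℕ → A) : ℕ → A
  | 0 => a
  | (j+1) => u j

/-- Extend a finite word by a default letter. -/
def extW {A : Type*} [Inhabited A] (n : ℕ) (w : Fin n → A) : ℕ → A :=
  fun j => if h : j < n then w ⟨j, h⟩ else default

/-- Iterated sum over words of length `n`. -/
noncomputable def sumW {A : Type*} [Fintype A] [Inhabited A] : ℕ → ((ℕ → A) → ℝ) → ℝ
  | 0, F => F (fun _ => default)
  | (n+1), F => ∑ a, sumW n (fun u => F (consS a u))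

section Words
variable {A : Type*} [Fintype A] [Inhabited A]

lemma sumW_add (n : ℕ) (F G : (ℕ → A) → ℝ) :
    sumW n (fun u => F u + G u) = sumW n F + sumW n G := by
  induction n generalizing F G with
  | zero => rfl
  | succ n ih => simp only [sumW, ih, Finset.sum_add_distrib]

lemma sumW_mul (n : ℕ) (c : ℝ) (F : (ℕ → A) → ℝ) :
    sumW n (fun u => c * F u) = c * sumW n F := by
  induction n generalizing F with
  | zero => rfl
  | succ n ih => simp only [sumW, ih, Finset.mul_sum]

lemma sumW_zero (n : ℕ) : sumW n (fun _ : ℕ → A => (0:ℝ)) = 0 := by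
  have := sumW_mul n 0 (fun _ : ℕ → A => (0:ℝ))
  simpa using this

lemma sumW_sum {ι : Type*} (n : ℕ) (I : Finset ι) (F : ι → (ℕ → A) → ℝ) :
    sumW n (fun u => ∑ i ∈ I, F i u) = ∑ i ∈ I, sumW n (F i) := by
  classical
  induction I using Finset.induction_on with
  | empty => simpa using sumW_zero n
  | insert a s ha ih => simp only [Finset.sum_insert ha, sumW_add, ih]

lemma sumW_eq (n : ℕ) (F : (ℕ → A) → ℝ) :
    sumW n F = ∑ w : Fin n → A, F (extW n w) := by
  induction n generalizing F with
  | zero =>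
    simp only [sumW, Finset.univ_unique, Finset.sum_singleton]
    congr 1
  | succ n ih =>
    simp only [sumW, ih]
    rw [← (Fin.consEquiv (fun _ => A)).sum_comp, Fintype.sum_prod_type]
    refine Finset.sum_congr rfl fun a _ => Finset.sum_congr rfl fun w _ => ?_
    congr 1
    funext j
    cases j with
    | zero => simp [consS, extW, Fin.consEquiv]
    | succ j =>
      by_cases h : j < n
      · have hh : j + 1 < n + 1 := by omega
        simp only [consS, extW, h, hh, dite_true]
        rfl
      · simp [consS, extW, h]

lemma sumW_block (l n : ℕ) (e : ℕ → A → ℝ) (R : (ℕ → A) → ℝ) :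
    sumW (l + n) (fun u => (∏ j ∈ Finset.range l, e j (u j)) * R (fun j => u (j + l))) =
      (∏ j ∈ Finset.range l, ∑ a, e j a) * sumW n R := by
  induction l generalizing e with
  | zero => simp
  | succ l ih =>
    have h1 : l + 1 + n = (l + n) + 1 := by omega
    rw [h1]
    simp only [sumW]
    have : ∀ a : A, sumW (l + n) (fun u => (∏ j ∈ Finset.range (l+1), e j (consS a u j)) *
        R (fun j => consS a u (j + (l+1)))) =
        e 0 a * ((∏ j ∈ Finset.range l, ∑ a, e (j+1) a) * sumW n R) := by
      intro a
      rw [← ih (fun j => e (j+1)), ← sumW_mul]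
      congr 1
      funext u
      rw [Finset.prod_range_succ']
      have h2 : (fun j => consS a u (j + (l+1))) = fun j => u (j + l) := by
        funext j; rfl
      rw [h2]
      simp only [consS]
      ring
    simp only [this]
    rw [← Finset.sum_mul, Finset.prod_range_succ']
    ring

lemma birk_add {X : Type*} (f : X → X) (g : X → ℝ) (m n : ℕ) (x : X) :
    birk f g (m + n) x = birk f g m x + birk f g n (f^[m] x) := by
  simp only [birk, Finset.sum_range_add]
  congr 1
  refine Finset.sum_congr rfl fun i _ => ?_
  rw [← Function.iterate_add_apply, add_comm]

/-- Coding lemma: existence of sub-probability vectors on words with controlled cost. -/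
lemma coding {X : Type*} (f : X → X) (π : X → A) (I : Finset ℕ) (l : ℕ → ℕ) (L : ℕ)
    (hL : 1 ≤ L) (hl : ∀ i ∈ I, 1 ≤ l i ∧ l i ≤ L) (q : ℕ → ℝ) (hq : ∀ i, 0 < q i)
    (hqs : ∑ i ∈ I, q i ≤ 1) (e : ℕ → ℕ → A → ℝ) (he : ∀ i j a, 0 < e i j a)
    (hes : ∀ i j, ∑ a, e i j a ≤ 1) (g : X → ℝ) (K : ℝ)
    (hstep : ∀ x, (Real.log (2 * Fintype.card A) ≤ g x) ∨ ∃ i ∈ I,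
      Real.log 2 - Real.log (q i) - ∑ j ∈ Finset.range (l i), Real.log (e i j (π (f^[j] x)))
        ≤ birk f g (l i) x)
    (hbase : ∀ x n, n < L → n * Real.log (Fintype.card A) ≤ birk f g n x + K) (n : ℕ) :
    ∃ Q : (ℕ → A) → ℝ, (∀ u, 0 < Q u) ∧ (∀ u v, (∀ j < n, u j = v j) → Q u = Q v) ∧
      sumW n Q ≤ 1 ∧ ∀ x, - Real.log (Q (fun j => π (f^[j] x))) ≤ birk f g n x + K := by
  have hc : (0:ℝ) < Fintype.card A := by exact_mod_cast Fintype.card_pos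
  induction n using Nat.strong_induction_on with
  | _ n ih =>
  by_cases hn : n < L
  · refine ⟨fun _ => ((Fintype.card A : ℝ)⁻¹)^n, fun _ => by positivity, fun _ _ _ => rfl, ?_, ?_⟩
    · rw [sumW_eq]
      simp [hc.ne']
    · intro x
      rw [Real.log_pow, Real.log_inv]
      have := hbase x n hn
      linarith
  · choose Q hQ using ih
    have h1 : n - 1 < n := by omega
    have hli : ∀ i ∈ I, n - l i < n := fun i hi => by have := hl i hi; omega
    let R : ℕ → (ℕ → A) → ℝ := fun m => if h : m < n then Q m h else 0
    have hR : ∀ m (h : m < n), R m = Q m h := fun m h => by simp [R, h]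
    have hR' : ∀ m < n, (∀ u, 0 < R m u) ∧ (∀ u v, (∀ j < m, u j = v j) → R m u = R m v) ∧
      sumW m (R m) ≤ 1 ∧ ∀ x, - Real.log (R m (fun j => π (f^[j] x))) ≤ birk f g m x + K := by
      intro m h
      rw [hR m h]; exact hQ m h
    clear_value R
    clear hR hQ Q
    let T0 : (ℕ → A) → ℝ := fun u => (2 * (Fintype.card A : ℝ))⁻¹ * R (n-1) (fun j => u (j+1))
    let T : ℕ → (ℕ → A) → ℝ := fun i u => (q i / 2) *
      ((∏ j ∈ Finset.range (l i), e i j (u j)) * R (n - l i) (fun j => u (j + l i)))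
    have hT0 : ∀ u, 0 < T0 u := fun u => mul_pos (by positivity) ((hR' _ h1).1 _)
    have hT : ∀ i ∈ I, ∀ u, 0 < T i u := fun i hi u =>
      mul_pos (by have := hq i; positivity)
        (mul_pos (Finset.prod_pos fun j _ => he _ _ _) ((hR' _ (hli i hi)).1 _))
    refine ⟨fun u => T0 u + ∑ i ∈ I, T i u, ?_, ?_, ?_, ?_⟩
    · intro u
      exact add_pos_of_pos_of_nonneg (hT0 u) (Finset.sum_nonneg fun i hi => (hT i hi u).le)
    · intro u v huv
      have a1 : T0 u = T0 v := by
        simp only [T0]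
        rw [(hR' _ h1).2.1 _ (fun j => v (j+1))]
        intro j hj; exact huv _ (by omega)
      have a2 : ∀ i ∈ I, T i u = T i v := by
        intro i hi
        have := hl i hi
        simp only [T]
        rw [(hR' _ (hli i hi)).2.1 _ (fun j => v (j+l i))]
        · congr 2
          refine Finset.prod_congr rfl fun j hj => ?_
          rw [huv j (by have := Finset.mem_range.1 hj; omega)]
        · intro j hj; exact huv _ (by omega)
      simp only [a1, Finset.sum_congr rfl a2]
    · rw [sumW_add, sumW_sum]
      have b0 : sumW n T0 ≤ 1/2 := by
        have h := sumW_block 1 (n-1) (fun _ (_ : A) => (1:ℝ)) (R (n-1))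
        rw [show 1 + (n-1) = n by omega] at h
        simp only [T0]
        rw [sumW_mul]
        simp at h
        rw [h]
        have := (hR' _ h1).2.2.1
        have h3 : (2 * (Fintype.card A : ℝ))⁻¹ * ((Fintype.card A : ℝ) * sumW (n-1) (R (n-1)))
            = sumW (n-1) (R (n-1)) / 2 := by field_simp
        rw [h3]; linarith
      have b1 : ∀ i ∈ I, sumW n (T i) ≤ q i / 2 := by
        intro i hi
        have hh := hl i hi
        have h := sumW_block (l i) (n - l i) (e i) (R (n - l i))
        rw [show l i + (n-l i) = n by omega] at h
        simp only [T]
        rw [sumW_mul, h]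
        have := (hR' _ (hli i hi)).2.2.1
        have hp : ∏ j ∈ Finset.range (l i), ∑ a, e i j a ≤ 1 :=
          Finset.prod_le_one (fun j _ => Finset.sum_nonneg fun a _ => (he _ _ _).le)
            (fun j _ => hes i j)
        have hp0 : 0 ≤ ∏ j ∈ Finset.range (l i), ∑ a, e i j a :=
          Finset.prod_nonneg (fun j _ => Finset.sum_nonneg fun a _ => (he _ _ _).le)
        have : (∏ j ∈ Finset.range (l i), ∑ a, e i j a) * sumW (n - l i) (R (n - l i)) ≤ 1 := by
          calc _ ≤ (∏ j ∈ Finset.range (l i), ∑ a, e i j a) * 1 := by gcongr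
            _ ≤ 1 := by linarith
        have hqi := hq i
        calc _ ≤ q i / 2 * 1 := by gcongr
          _ = _ := by ring
      have := Finset.sum_le_sum b1
      rw [← Finset.sum_div] at this
      linarith
    · intro x
      set u : ℕ → A := fun j => π (f^[j] x) with hu
      have hsh : ∀ m, (fun j => u (j + m)) = fun j => π (f^[j] (f^[m] x)) := by
        intro m; funext j; simp only [hu, Function.iterate_add_apply]
      rcases hstep x with h | ⟨i, hi, h⟩
      · have hle : T0 u ≤ T0 u + ∑ i ∈ I, T i u := by
          have := Finset.sum_nonneg fun i hi => (hT i hi u).le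
          linarith
        have h5 := Real.log_le_log (hT0 u) hle
        have h6 := (hR' _ h1).2.2.2 (f^[1] x)
        rw [← hsh 1] at h6
        have h7 : Real.log (T0 u) = - Real.log (2 * (Fintype.card A)) +
            Real.log (R (n-1) (fun j => u (j+1))) := by
          simp only [T0]
          rw [Real.log_mul (by positivity) ((hR' _ h1).1 _).ne', Real.log_inv]
        have h8 := birk_add f g 1 (n-1) x
        rw [show 1 + (n-1) = n by omega] at h8
        have h9 : birk f g 1 x = g x := by simp [birk]
        linarith
      · have hle : T i u ≤ T0 u + ∑ i ∈ I, T i u := by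
          have : T i u ≤ ∑ i ∈ I, T i u := Finset.single_le_sum (f := fun i => T i u) (fun i hi => (hT i hi u).le) hi
          have := hT0 u
          linarith
        have h5 := Real.log_le_log (hT i hi u) hle
        have hh := hl i hi
        have h6 := (hR' _ (hli i hi)).2.2.2 (f^[l i] x)
        rw [← hsh (l i)] at h6
        have h7 : Real.log (T i u) = Real.log (q i) - Real.log 2 +
            (∑ j ∈ Finset.range (l i), Real.log (e i j (u j)) +
            Real.log (R (n-l i) (fun j => u (j+l i)))) := by
          simp only [T]
          have hqi := hq i
          rw [Real.log_mul (by positivity), Real.log_mul,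
            Real.log_prod, Real.log_div (by positivity) (by norm_num)]
          · intro j _; exact (he _ _ _).ne'
          · exact (Finset.prod_pos fun j _ => he _ _ _).ne'
          · exact ((hR' _ (hli i hi)).1 _).ne'
          · exact (mul_pos (Finset.prod_pos fun j _ => he _ _ _) ((hR' _ (hli i hi)).1 _)).ne'
        have h8 := birk_add f g (l i) (n-l i) x
        rw [show l i + (n-l i) = n by omega] at h8
        linarith

end Words
section Names
variable {X : Type*} [MeasurableSpace X]

lemma exists_name (s : Finset (Set X)) (hs : IsFinPartition s) :
    ∃ π : X → {A // A ∈ s}, ∀ x A, π x = A ↔ x ∈ A.1 := by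
  have h : ∀ x, ∃ A : {A // A ∈ s}, x ∈ A.1 := by
    intro x
    have : x ∈ ⋃₀ (s : Set (Set X)) := by rw [hs.2.1]; trivial
    obtain ⟨A, hA, hx⟩ := this
    exact ⟨⟨A, hA⟩, hx⟩
  choose π hπ using h
  refine ⟨π, fun x A => ⟨fun h => h ▸ hπ x, fun h => ?_⟩⟩
  by_contra hne
  have := hs.2.2 (π x).2 A.2 (fun h => hne (Subtype.ext h))
  exact Set.disjoint_left.1 this (hπ x) h

/-- cell of a word -/
def cell (f : X → X) {s : Finset (Set X)} {n : ℕ} (w : Fin n → {A // A ∈ s}) : Set X :=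
  ⋂ i : Fin n, f^[(i : ℕ)] ⁻¹' ((w i : Set X))

lemma mem_cell {f : X → X} {s : Finset (Set X)} {π : X → {A // A ∈ s}}
    (hπ : ∀ x A, π x = A ↔ x ∈ A.1) {n : ℕ} (w : Fin n → {A // A ∈ s}) (x : X) :
    x ∈ cell f w ↔ (fun i : Fin n => π (f^[(i:ℕ)] x)) = w := by
  simp only [cell, Set.mem_iInter, Set.mem_preimage, funext_iff, hπ]

lemma measurableSet_cell {f : X → X} (hf : Measurable f) {s : Finset (Set X)}
    (hs : IsFinPartition s) {n : ℕ} (w : Fin n → {A // A ∈ s}) : MeasurableSet (cell f w) :=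
  MeasurableSet.iInter fun i => (hf.iterate _) (hs.1 _ (w i).2)

lemma word_eq_sum {f : X → X} {s : Finset (Set X)} {π : X → {A // A ∈ s}}
    (hπ : ∀ x A, π x = A ↔ x ∈ A.1) {n : ℕ} (F : (Fin n → {A // A ∈ s}) → ℝ) :
    (fun x => F (fun i : Fin n => π (f^[(i:ℕ)] x))) =
      fun x => ∑ w, (cell f w).indicator (fun _ => F w) x := by
  classical
  funext x
  simp only [Set.indicator_apply, mem_cell hπ, Finset.sum_ite_eq, Finset.mem_univ, if_true]

lemma measurable_word {f : X → X} (hf : Measurable f) {s : Finset (Set X)}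
    (hs : IsFinPartition s) {π : X → {A // A ∈ s}}
    (hπ : ∀ x A, π x = A ↔ x ∈ A.1) {n : ℕ} (F : (Fin n → {A // A ∈ s}) → ℝ) :
    Measurable (fun x => F (fun i : Fin n => π (f^[(i:ℕ)] x))) := by
  rw [word_eq_sum hπ]
  exact Finset.measurable_sum _ fun w _ => measurable_const.indicator (measurableSet_cell hf hs w)

lemma integrable_word {f : X → X} (hf : Measurable f) {s : Finset (Set X)}
    (hs : IsFinPartition s) {π : X → {A // A ∈ s}}
    (hπ : ∀ x A, π x = A ↔ x ∈ A.1) (μ : Measure X) [IsProbabilityMeasure μ]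
    {n : ℕ} (F : (Fin n → {A // A ∈ s}) → ℝ) :
    Integrable (fun x => F (fun i : Fin n => π (f^[(i:ℕ)] x))) μ := by
  rw [word_eq_sum hπ]
  exact integrable_finsetSum _ fun w _ =>
    (integrable_const _).indicator (measurableSet_cell hf hs w)

lemma integral_word {f : X → X} (hf : Measurable f) {s : Finset (Set X)}
    (hs : IsFinPartition s) {π : X → {A // A ∈ s}}
    (hπ : ∀ x A, π x = A ↔ x ∈ A.1) (μ : Measure X) [IsProbabilityMeasure μ]
    {n : ℕ} (F : (Fin n → {A // A ∈ s}) → ℝ) :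
    ∫ x, F (fun i : Fin n => π (f^[(i:ℕ)] x)) ∂μ = ∑ w, (μ (cell f w)).toReal * F w := by
  rw [word_eq_sum hπ, integral_finsetSum]
  · refine Finset.sum_congr rfl fun w _ => ?_
    rw [integral_indicator_const _ (measurableSet_cell hf hs w)]
    rfl
  · exact fun w _ => (integrable_const _).indicator (measurableSet_cell hf hs w)

lemma sum_cell {f : X → X} (hf : Measurable f) {s : Finset (Set X)}
    (hs : IsFinPartition s) {π : X → {A // A ∈ s}}
    (hπ : ∀ x A, π x = A ↔ x ∈ A.1) (μ : Measure X) [IsProbabilityMeasure μ]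
    {n : ℕ} : ∑ w : Fin n → {A // A ∈ s}, (μ (cell f w)).toReal = 1 := by
  have := integral_word hf hs hπ μ (n := n) (fun _ => 1)
  simpa using this.symm

lemma gibbs {f : X → X} (hf : Measurable f) {s : Finset (Set X)}
    (hs : IsFinPartition s) {π : X → {A // A ∈ s}}
    (hπ : ∀ x A, π x = A ↔ x ∈ A.1) (μ : Measure X) [IsProbabilityMeasure μ]
    {n : ℕ} (Q : (Fin n → {A // A ∈ s}) → ℝ) (hQ : ∀ w, 0 < Q w) (hQs : ∑ w, Q w ≤ 1) :
    dynH f μ s n ≤ ∫ x, - Real.log (Q (fun i : Fin n => π (f^[(i:ℕ)] x))) ∂μ := by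
  rw [integral_word hf hs hπ μ (fun w => - Real.log (Q w))]
  have h1 : ∀ w, -((μ (cell f w)).toReal * Real.log (μ (cell f w)).toReal) -
      (μ (cell f w)).toReal * (- Real.log (Q w)) ≤ Q w - (μ (cell f w)).toReal := by
    intro w
    rcases (ENNReal.toReal_nonneg (a := μ (cell f w))).eq_or_lt with h | h
    · rw [← h]; have := hQ w; simp; exact this.le
    · set p := (μ (cell f w)).toReal
      have h2 := Real.log_le_sub_one_of_pos (div_pos (hQ w) h)
      rw [Real.log_div (hQ w).ne' h.ne'] at h2
      have h3 := mul_le_mul_of_nonneg_left h2 h.le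
      have h4 : p * (Q w / p - 1) = Q w - p := by field_simp
      rw [h4] at h3
      linarith
  have h2 := Finset.sum_le_sum fun w (_ : w ∈ Finset.univ) => h1 w
  rw [Finset.sum_sub_distrib, Finset.sum_sub_distrib, sum_cell hf hs hπ μ,
    Finset.sum_neg_distrib] at h2
  have h3 : dynH f μ s n = -∑ w : Fin n → {A // A ∈ s},
    (μ (cell f w)).toReal * Real.log (μ (cell f w)).toReal := rfl
  linarith

lemma integral_birk {f : X → X} {μ : Measure X} (h : MeasurePreserving f μ μ) {g : X → ℝ}
    (hg : Integrable g μ) (n : ℕ) :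
    Integrable (birk f g n) μ ∧ ∫ x, birk f g n x ∂μ = n * ∫ x, g x ∂μ := by
  have h1 : ∀ i, Integrable (fun x => g (f^[i] x)) μ := fun i =>
    (h.iterate i).integrable_comp_of_integrable hg
  have h2 : ∀ i, ∫ x, g (f^[i] x) ∂μ = ∫ x, g x ∂μ := fun i => by
    have := integral_map (h.iterate i).measurable.aemeasurable (f := g)
      (by rw [(h.iterate i).map_eq]; exact hg.aestronglyMeasurable)
    rw [(h.iterate i).map_eq] at this
    exact this.symm
  refine ⟨integrable_finsetSum _ fun i _ => h1 i, ?_⟩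
  simp only [birk]
  rw [integral_finsetSum _ fun i _ => h1 i]
  simp [h2]

/-- entropy bound from coding -/
lemma liminf_le_of_coding {f : X → X} {s : Finset (Set X)}
    (hs : IsFinPartition s) {π : X → {A // A ∈ s}}
    (hπ : ∀ x A, π x = A ↔ x ∈ A.1) (μ : Measure X) [IsProbabilityMeasure μ]
    (hinv : MeasurePreserving f μ μ) [Inhabited {A // A ∈ s}] (g : X → ℝ) (hg : Integrable g μ)
    (K : ℝ)
    (H : ∀ n, ∃ Q : (ℕ → {A // A ∈ s}) → ℝ, (∀ u, 0 < Q u) ∧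
      (∀ u v, (∀ j < n, u j = v j) → Q u = Q v) ∧
      sumW n Q ≤ 1 ∧ ∀ x, - Real.log (Q (fun j => π (f^[j] x))) ≤ birk f g n x + K) :
    Filter.atTop.liminf (fun n : ℕ => ((dynH f μ s n / n : ℝ) : EReal)) ≤
      ((∫ x, g x ∂μ : ℝ) : EReal) := by
  have h1 : ∀ n, dynH f μ s n ≤ n * ∫ x, g x ∂μ + K := by
    intro n
    obtain ⟨Q, hQ, hdep, hsum, hcost⟩ := H n
    rw [sumW_eq] at hsum
    refine (gibbs hinv.measurable hs hπ μ (fun w => Q (extW n w)) (fun w => hQ _) hsum).trans ?_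
    have hb := integral_birk hinv hg n
    have : ∫ x, (birk f g n x + K) ∂μ = n * ∫ x, g x ∂μ + K := by
      rw [integral_add hb.1 (integrable_const _), hb.2]; simp
    rw [← this]
    refine integral_mono (integrable_word hinv.measurable hs hπ μ
      (fun w => - Real.log (Q (extW n w)))) (hb.1.add (integrable_const _)) fun x => ?_
    refine le_trans (le_of_eq ?_) (hcost x)
    show - Real.log (Q _) = _
    rw [hdep _ (fun j => π (f^[j] x))]
    intro j hj
    simp [extW, hj]
  have h2 : Tendsto (fun n : ℕ => (((∫ x, g x ∂μ) + K / n : ℝ) : EReal)) atTop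
      (nhds ((∫ x, g x ∂μ : ℝ) : EReal)) := by
    refine (continuous_coe_real_ereal.tendsto _).comp ?_
    have := (tendsto_const_div_atTop_nhds_zero_nat K).const_add (∫ x, g x ∂μ)
    simpa using this
  rw [← h2.liminf_eq]
  refine Filter.liminf_le_liminf ?_
  filter_upwards [eventually_gt_atTop 0] with n hn
  have hn' : (0:ℝ) < n := by exact_mod_cast hn
  refine EReal.coe_le_coe_iff.2 ?_
  rw [div_le_iff₀ hn']
  have := h1 n
  field_simp
  linarith

end Names
section Lower
variable {X : Type*} [MetricSpace X] [CompactSpace X] [MeasurableSpace X] [BorelSpace X]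

lemma measurableSet_bowenBall {f : X → X} (hf : Continuous f) (x : X) (n : ℕ) (ε : ℝ) :
    MeasurableSet (bowenBall f x n ε) := by
  have : bowenBall f x n ε = ⋂ i : ℕ, ⋂ _ : i < n, {y | dist (f^[i] x) (f^[i] y) < ε} := by
    ext y; simp [bowenBall]
  rw [this]
  refine MeasurableSet.iInter fun i => MeasurableSet.iInter fun _ => ?_
  exact (isOpen_lt (continuous_const.dist (hf.iterate i)) continuous_const).measurableSet

/-- compact inner approximations, with a guessing map -/
lemma exists_guess {s : Finset (Set X)} (hs : IsFinPartition s) {π : X → {A // A ∈ s}}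
    (hπ : ∀ x A, π x = A ↔ x ∈ A.1) (μ : Measure X) [IsProbabilityMeasure μ]
    [Inhabited {A // A ∈ s}] (δ : ℝ) (hδ : 0 < δ) :
    ∃ U : Set X, MeasurableSet U ∧ (μ U).toReal ≤ δ ∧ ∃ ε₀ > 0, ∃ G : X → {A // A ∈ s},
      ∀ c y, dist c y < ε₀ → y ∉ U → G c = π y := by
  classical
  set M : ℝ := ((Fintype.card {A // A ∈ s} : ℕ) : ℝ)
  have hM : 0 < M := by simp only [M]; exact_mod_cast Fintype.card_pos
  have hK : ∀ A : {A // A ∈ s}, ∃ K : Set X, K ⊆ A.1 ∧ IsCompact K ∧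
      μ (A.1 \ K) < ENNReal.ofReal (δ / M) := by
    intro A
    obtain ⟨K, h1, h2, h3⟩ := (hs.1 A.1 A.2).exists_isCompact_sdiff_lt (μ := μ)
      (measure_ne_top _ _) (ε := ENNReal.ofReal (δ / M)) (by simp; positivity)
    exact ⟨K, h1, h2, h3⟩
  choose K hKs hKc hKm using hK
  have hsep : ∀ A B, A ≠ B → ∀ᶠ ε in nhdsWithin (0:ℝ) (Set.Ioi 0),
      Disjoint (Metric.thickening ε (K A)) (Metric.thickening ε (K B)) := by
    intro A B hAB
    have hd : Disjoint (K A) (K B) := by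
      refine Set.disjoint_left.2 fun x hA hB => hAB ?_
      rw [← (hπ x A).2 (hKs A hA), ← (hπ x B).2 (hKs B hB)]
    obtain ⟨d, hd0, hdd⟩ := hd.exists_thickenings (hKc A) (hKc B).isClosed
    filter_upwards [Ioo_mem_nhdsGT hd0] with e he
    exact hdd.mono (Metric.thickening_mono he.2.le _) (Metric.thickening_mono he.2.le _)
  have hsep2 : ∀ᶠ ε in nhdsWithin (0:ℝ) (Set.Ioi 0), ∀ A B, A ≠ B →
      Disjoint (Metric.thickening ε (K A)) (Metric.thickening ε (K B)) := by
    refine eventually_all.2 fun A => eventually_all.2 fun B => ?_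
    by_cases h : A = B
    · exact Eventually.of_forall fun _ h' => (h' h).elim
    · filter_upwards [hsep A B h] with e he _ using he
  obtain ⟨ε, hε, hε0⟩ := (hsep2.and self_mem_nhdsWithin).exists
  refine ⟨⋃ A : {A // A ∈ s}, (A.1 \ K A), MeasurableSet.iUnion fun A =>
    (hs.1 _ A.2).diff (hKc A).measurableSet, ?_, ε, hε0,
    fun c => if h : ∃ A, c ∈ Metric.thickening ε (K A) then h.choose else default, ?_⟩
  · refine ENNReal.toReal_le_of_le_ofReal hδ.le ?_
    refine (measure_iUnion_le _).trans ?_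
    rw [tsum_fintype]
    refine (Finset.sum_le_sum fun A _ => (hKm A).le).trans ?_
    rw [Finset.sum_const, ← ENNReal.ofReal_nsmul]
    refine ENNReal.ofReal_le_ofReal ?_
    rw [nsmul_eq_mul]
    have : ((Finset.univ : Finset {A // A ∈ s}).card : ℝ) = M := rfl
    rw [this]
    field_simp
    exact le_rfl
  · intro c y hcy hy
    have hyK : y ∈ K (π y) := by
      by_contra h
      exact hy (Set.mem_iUnion.2 ⟨π y, (hπ y _).1 rfl, h⟩)
    have hc : c ∈ Metric.thickening ε (K (π y)) := Metric.mem_thickening_iff.2 ⟨y, hyK, hcy⟩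
    have hex : ∃ A, c ∈ Metric.thickening ε (K A) := ⟨_, hc⟩
    simp only [hex, dif_pos]
    by_contra hne
    exact Set.disjoint_left.1 (hε _ _ hne) hex.choose_spec hc

lemma lower_core {f : X → X} (hf : Continuous f) {φ : X → ℝ} (hφ : Continuous φ)
    {s : Finset (Set X)} (hs : IsFinPartition s)
    (μ : Measure X) [IsProbabilityMeasure μ] (hinv : MeasurePreserving f μ μ) (κ : ℝ)
    (hκ : 0 < κ) : ∃ ε > 0, ∀ (Z : Set X) (α : ℝ), μ Z = 1 → mZ f φ Z α ε = 0 →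
      Filter.atTop.liminf (fun n : ℕ => ((dynH f μ s n / n : ℝ) : EReal)) ≤
      ((α - ∫ x, φ x ∂μ + 5 * κ : ℝ) : EReal) := by
  classical
  obtain ⟨π, hπ⟩ := exists_name s hs
  have hX : Nonempty X := by
    by_contra h
    rw [not_nonempty_iff] at h
    have := measure_univ (μ := μ)
    simp [Measure.eq_zero_of_isEmpty μ] at this
  have : Inhabited {A // A ∈ s} := ⟨π hX.some⟩
  set M : ℝ := ((Fintype.card {A // A ∈ s} : ℕ) : ℝ) with hMdef
  have hM : 1 ≤ M := by simp only [M]; exact_mod_cast Fintype.card_pos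
  set η : ℝ := 1 - Real.exp (-κ) with hη
  have hη1 : 0 < 1 - η := by rw [hη]; simp [Real.exp_pos]
  have hη0 : 0 < η := by rw [hη]; have : Real.exp (-κ) < 1 := by simpa using hκ
                         linarith
  have hlogη : Real.log (1 - η) = -κ := by rw [hη]; simp
  set c1 : ℝ := Real.log (M / η) with hc1
  have hc1' : 0 ≤ c1 := Real.log_nonneg (by rw [le_div_iff₀ hη0]; linarith)
  obtain ⟨U, hUm, hU, ε₀, hε₀, G, hG⟩ := exists_guess hs hπ μ (κ / (c1 + 1)) (by positivity)
  obtain ⟨ε₁, hε₁, hφε⟩ := Metric.uniformContinuous_iff.1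
    (CompactSpace.uniformContinuous_of_continuous hφ) κ hκ
  obtain ⟨B, hB⟩ := (isCompact_range hφ).isBounded.exists_norm_le
  have hB' : ∀ x, |φ x| ≤ B := fun x => hB _ ⟨x, rfl⟩
  have hB0 : 0 ≤ B := (abs_nonneg _).trans (hB' hX.some)
  refine ⟨min ε₀ ε₁, lt_min hε₀ hε₁, fun Z α hZ hm => ?_⟩
  set ε := min ε₀ ε₁ with hε
  obtain ⟨N, hN⟩ := exists_nat_gt (Real.log 2 / κ)
  have hlog2 : 0 < Real.log 2 := Real.log_pos (by norm_num)
  have hN0 : (0:ℝ) < N := lt_trans (by positivity) hN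
  have hN2 : Real.log 2 ≤ κ * N := by rw [div_lt_iff₀ hκ] at hN; linarith
  have hN1 : 1 ≤ N := by exact_mod_cast hN0
  have hMc : Mcov f φ Z α N ε < 1 := by
    have : Mcov f φ Z α N ε ≤ mZ f φ Z α ε := le_iSup (fun N => Mcov f φ Z α N ε) N
    rw [hm] at this
    exact this.trans_lt (by simp)
  simp only [Mcov, iInf_lt_iff] at hMc
  obtain ⟨c, ⟨hcN, hcov⟩, hsum⟩ := hMc
  set q : ℕ → ℝ := fun i => Real.exp (-α * ((c i).2 : ℝ) + birk f φ (c i).2 (c i).1) with hq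
  have hqs : ∀ I : Finset ℕ, ∑ i ∈ I, q i ≤ 1 := by
    intro I
    have h1 : ∑ i ∈ I, ENNReal.ofReal (q i) ≤ 1 := (ENNReal.sum_le_tsum I).trans hsum.le
    rw [← ENNReal.ofReal_sum_of_nonneg (fun i _ => (Real.exp_pos _).le)] at h1
    exact ENNReal.ofReal_le_one.1 h1
  set C : ℝ := Real.log (2 * M) + |α| + B with hC
  have hC0 : 0 ≤ C := by
    have : 0 ≤ Real.log (2 * M) := Real.log_nonneg (by linarith)
    positivity
  -- finitely many balls
  let W : ℕ → Set X := fun n => ⋃ i ∈ Finset.range n, bowenBall f (c i).1 (c i).2 ε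
  have hWm : ∀ n, MeasurableSet (W n) := fun n =>
    Finset.measurableSet_biUnion _ fun i _ => measurableSet_bowenBall hf _ _ _
  have hWmono : Monotone W := by
    intro a b hab
    exact Set.biUnion_subset_biUnion_left (Finset.range_mono hab)
  have hWU : μ (⋃ n, W n) = 1 := by
    refine le_antisymm prob_le_one (hZ ▸ measure_mono (hcov.trans ?_))
    refine Set.iUnion_subset fun i => ?_
    refine Set.subset_iUnion_of_subset (i+1) ?_
    exact Set.subset_biUnion_of_mem (u := fun i => bowenBall f (c i).1 (c i).2 ε)
      (Finset.mem_coe.2 (Finset.self_mem_range_succ i))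
  have htend := tendsto_measure_iUnion_atTop (μ := μ) hWmono
  rw [hWU] at htend
  have htend2 : Tendsto (fun n => (μ (W n)ᶜ).toReal) atTop (nhds 0) := by
    have h1 := (ENNReal.tendsto_toReal (ENNReal.one_ne_top)).comp htend
    have h2 : (fun n => (μ (W n)ᶜ).toReal) = fun n => 1 - (μ (W n)).toReal := by
      funext n
      have := probReal_compl_eq_one_sub (μ := μ) (hWm n)
      exact this
    rw [h2]
    have := h1.const_sub 1
    simpa using this
  obtain ⟨I, hI⟩ := ((tendsto_order.1 htend2).2 (κ / (C + 1)) (by positivity)).exists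
  set bad := (W I)ᶜ with hbad
  have hbadm : MeasurableSet bad := (hWm I).compl
  set g : X → ℝ := fun y => (α - φ y + 3 * κ) + U.indicator (fun _ => c1) y +
    bad.indicator (fun _ => C) y with hg
  have hφi : Integrable φ μ := Integrable.of_bound hφ.aestronglyMeasurable B
    (Eventually.of_forall hB')
  have hgi0 : Integrable (fun y => α - φ y) μ := (integrable_const _).sub hφi
  have hgi1 : Integrable (fun y => α - φ y + 3 * κ) μ :=
    ((integrable_const _).sub hφi).add (integrable_const _)
  have hgi2 : Integrable (U.indicator (fun _ => c1)) μ := (integrable_const _).indicator hUm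
  have hgi3 : Integrable (bad.indicator (fun _ => C)) μ := (integrable_const _).indicator hbadm
  have hgi12 : Integrable (fun y => (α - φ y + 3 * κ) + U.indicator (fun _ => c1) y) μ :=
    hgi1.add hgi2
  have hgi : Integrable g μ := hgi12.add hgi3
  have hgint : ∫ x, g x ∂μ ≤ α - ∫ x, φ x ∂μ + 5 * κ := by
    simp only [hg]
    rw [integral_add hgi12 hgi3, integral_add hgi1 hgi2,
      integral_add hgi0 (integrable_const _),
      integral_sub (integrable_const _) hφi, integral_indicator_const _ hUm,
      integral_indicator_const _ hbadm]
    simp only [integral_const, smul_eq_mul, Measure.real, measure_univ, ENNReal.toReal_one, one_mul]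
    have a1 : (μ U).toReal * c1 ≤ κ := by
      calc (μ U).toReal * c1 ≤ κ / (c1 + 1) * c1 := by gcongr
        _ ≤ κ / (c1 + 1) * (c1 + 1) := by gcongr; linarith
        _ = κ := by field_simp
    have a2 : (μ bad).toReal * C ≤ κ := by
      calc (μ bad).toReal * C ≤ κ / (C + 1) * C := by gcongr
        _ ≤ κ / (C + 1) * (C + 1) := by gcongr; linarith
        _ = κ := by field_simp
    linarith
  have hg0 : ∀ y, α - φ y + 3 * κ + U.indicator (fun _ => c1) y ≤ g y := fun y => by
    have : 0 ≤ bad.indicator (fun _ => C) y := Set.indicator_nonneg (fun _ _ => hC0) y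
    simp only [hg]; linarith
  have hU0 : ∀ y, 0 ≤ U.indicator (fun _ => c1) y := fun y =>
    Set.indicator_nonneg (fun _ _ => hc1') y
  have hglow : ∀ y, -(|α| + B) ≤ g y := fun y => by
    have h1 := hg0 y
    have h2 := hU0 y
    have h3 := abs_le.1 (hB' y)
    have h4 := neg_abs_le α
    linarith
  set L : ℕ := (∑ i ∈ Finset.range I, (c i).2) + 1 with hL
  set K : ℝ := L * (Real.log M + |α| + B) with hK
  have hlogM : 0 ≤ Real.log M := Real.log_nonneg hM
  refine (liminf_le_of_coding hs hπ μ hinv g hgi K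
    (coding f π (Finset.range I) (fun i => (c i).2) L (by omega) ?_ q (fun i => Real.exp_pos _)
      (hqs _) (fun i j a => if a = G (f^[j] (c i).1) then 1 - η else η / M) ?_ ?_ g K ?_ ?_)).trans
    (EReal.coe_le_coe_iff.2 hgint)
  · intro i hi
    refine ⟨hN1.trans (hcN i), ?_⟩
    have := Finset.single_le_sum (f := fun i => (c i).2) (fun i _ => Nat.zero_le _) hi
    omega
  · intro i j a
    split_ifs
    · exact hη1
    · positivity
  · intro i j
    calc ∑ a : {A // A ∈ s}, (if a = G (f^[j] (c i).1) then 1 - η else η / M)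
        ≤ ∑ a : {A // A ∈ s}, ((if a = G (f^[j] (c i).1) then 1 - η else 0) + η / M) := by
          refine Finset.sum_le_sum fun a _ => ?_
          split_ifs
          · have : 0 ≤ η / M := by positivity
            linarith
          · linarith
      _ = 1 := by
          rw [Finset.sum_add_distrib, Finset.sum_ite_eq']
          simp only [Finset.mem_univ, if_true, Finset.sum_const, nsmul_eq_mul]
          have : ((Finset.univ : Finset {A // A ∈ s}).card : ℝ) = M := rfl
          rw [this]
          field_simp
          ring
  · intro x
    by_cases hx : x ∈ bad
    · left
      have h2 := hU0 x
      have h3 := abs_le.1 (hB' x)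
      have h4 := neg_abs_le α
      simp only [hg, Set.indicator_of_mem hx, hC]
      linarith
    · right
      have hx' : x ∈ W I := by simpa [hbad] using hx
      simp only [W, Set.mem_iUnion] at hx'
      obtain ⟨i, hi, hxi⟩ := hx'
      refine ⟨i, hi, ?_⟩
      have e1 : ∀ j < (c i).2, κ + (α - φ (f^[j] (c i).1)) -
          Real.log (if π (f^[j] x) = G (f^[j] (c i).1) then 1 - η else η / M)
          ≤ g (f^[j] x) := by
        intro j hj
        have hd := hxi j hj
        have h5 := hg0 (f^[j] x)
        have h6 := hφε (lt_of_lt_of_le hd (min_le_right _ _))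
        rw [Real.dist_eq] at h6
        have h7 := abs_lt.1 h6
        have h8 : - Real.log (if π (f^[j] x) = G (f^[j] (c i).1) then 1 - η else η / M) ≤
            κ + U.indicator (fun _ => c1) (f^[j] x) := by
          split_ifs with hif
          · have := hU0 (f^[j] x); rw [hlogη]; linarith
          · have hyU : f^[j] x ∈ U := by
              by_contra hyU
              exact hif (hG _ _ (lt_of_lt_of_le hd (min_le_left _ _)) hyU).symm
            rw [Set.indicator_of_mem hyU, hc1, ← Real.log_inv, inv_div]
            linarith
        linarith
      have e2 := Finset.sum_le_sum fun j (hj : j ∈ Finset.range (c i).2) =>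
        e1 j (Finset.mem_range.1 hj)
      rw [Finset.sum_sub_distrib, Finset.sum_add_distrib, Finset.sum_sub_distrib] at e2
      simp only [Finset.sum_const, Finset.card_range, nsmul_eq_mul] at e2
      have e3 : Real.log (q i) = -α * (c i).2 + birk f φ (c i).2 (c i).1 := by
        simp [hq]
      have e4 : (N:ℝ) ≤ (c i).2 := by exact_mod_cast hcN i
      have e5 : κ * N ≤ κ * (c i).2 := by gcongr
      rw [e3]
      simp only [birk] at *
      linarith
  · intro x n hn
    have h1 : -((n:ℝ) * (|α| + B)) ≤ birk f g n x := by
      have := Finset.sum_le_sum fun j (_ : j ∈ Finset.range n) => hglow (f^[j] x)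
      simp only [Finset.sum_const, Finset.card_range, nsmul_eq_mul] at this
      simp only [birk]
      linarith
    have h2 : (n:ℝ) ≤ L := by exact_mod_cast hn.le
    have h3 : (n:ℝ) * (Real.log M + |α| + B) ≤ L * (Real.log M + |α| + B) := by
      gcongr
    have h4 : Real.log (Fintype.card {A // A ∈ s} : ℝ) = Real.log M := rfl
    rw [h4]
    linarith

lemma lower_bound {f : X → X} (hf : Continuous f) {φ : X → ℝ} (hφ : Continuous φ)
    (μ : Measure X) [IsProbabilityMeasure μ] (hinv : MeasurePreserving f μ μ) :
    ksEntropy f μ + ((∫ x, φ x ∂μ : ℝ) : EReal) ≤ Pmu f φ μ := by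
  rw [← EReal.le_sub_iff_add_le (Or.inl (EReal.coe_ne_bot _)) (Or.inl (EReal.coe_ne_top _))]
  refine iSup₂_le fun s hs => ?_
  rw [EReal.le_sub_iff_add_le (Or.inl (EReal.coe_ne_bot _)) (Or.inl (EReal.coe_ne_top _))]
  set h := Filter.atTop.liminf (fun n : ℕ => ((dynH f μ s n / n : ℝ) : EReal)) with hh
  refine le_of_forall_lt_imp_le_of_dense fun b hb => ?_
  -- pick a real between
  obtain ⟨b', hb1, hb2⟩ := EReal.lt_iff_exists_real_btwn.1 hb
  obtain ⟨b'', hb3, hb4⟩ := EReal.lt_iff_exists_real_btwn.1 hb2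
  have hbb : b' < b'' := EReal.coe_lt_coe_iff.1 hb3
  obtain ⟨ε, hε, H⟩ := lower_core hf hφ hs μ hinv ((b'' - b') / 5) (by linarith)
  refine hb1.le.trans ?_
  refine le_trans ?_ (le_iSup₂ (f := fun (ε : ℝ) (_ : 0 < ε) =>
    ⨅ (Z : Set X) (_ : MeasurableSet Z ∧ μ Z = 1), PZeps f φ Z ε) ε hε)
  refine le_iInf₂ fun Z hZ => le_iInf₂ fun α hα => ?_
  have h1 := H Z α hZ.2 hα
  rw [← hh] at h1
  have h2 : (b'' : EReal) < ((α - ∫ x, φ x ∂μ + 5 * ((b'' - b') / 5) : ℝ) : EReal) +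
      ((∫ x, φ x ∂μ : ℝ) : EReal) := hb4.trans_le (add_le_add_left h1 _)
  rw [← EReal.coe_add, EReal.coe_lt_coe_iff] at h2
  refine EReal.coe_le_coe_iff.2 ?_
  linarith

end Lower
section Upper
variable {X : Type*} [MetricSpace X] [CompactSpace X] [MeasurableSpace X] [BorelSpace X]

lemma exists_partition (ε : ℝ) (hε : 0 < ε) : ∃ s : Finset (Set X), IsFinPartition s ∧
    ∀ A ∈ s, ∀ x ∈ A, ∀ y ∈ A, dist x y < ε := by
  classical
  rcases isEmpty_or_nonempty X with hX | hX
  · refine ⟨∅, ⟨by simp, ?_, by simp⟩, by simp⟩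
    ext x; exact (hX.false x).elim
  let B : ℕ → Set X := fun n => Metric.ball (TopologicalSpace.denseSeq X n) (ε/2)
  have hcov : (Set.univ : Set X) ⊆ ⋃ n, B n := by
    intro x _
    obtain ⟨n, hn⟩ := (TopologicalSpace.denseRange_denseSeq X).exists_dist_lt x (half_pos hε)
    exact Set.mem_iUnion.2 ⟨n, hn⟩
  obtain ⟨t, ht⟩ := isCompact_univ.elim_finite_subcover B (fun _ => Metric.isOpen_ball) hcov
  let D : ℕ → Set X := fun n => B n \ ⋃ j ∈ Finset.range n, B j
  have hDd : ∀ i j, i < j → Disjoint (D i) (D j) := by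
    intro i j hij
    refine Set.disjoint_left.2 fun x hx hx' => hx'.2 ?_
    exact Set.mem_biUnion (Finset.mem_coe.2 (Finset.mem_range.2 hij)) hx.1
  refine ⟨(Finset.range (t.sup id + 1)).image D, ⟨?_, ?_, ?_⟩, ?_⟩
  · intro A hA
    obtain ⟨i, _, rfl⟩ := Finset.mem_image.1 hA
    exact Metric.isOpen_ball.measurableSet.diff
      (Finset.measurableSet_biUnion _ fun j _ => Metric.isOpen_ball.measurableSet)
  · refine Set.eq_univ_of_forall fun x => ?_
    obtain ⟨i, hi, hxi⟩ : ∃ i ∈ t, x ∈ B i := by simpa using ht (Set.mem_univ x)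
    have hex : ∃ i, x ∈ B i := ⟨i, hxi⟩
    refine ⟨D (Nat.find hex), ?_, Nat.find_spec hex, ?_⟩
    · refine Finset.mem_coe.2 (Finset.mem_image_of_mem _ (Finset.mem_range.2 ?_))
      have h1 := Nat.find_min' hex hxi
      have h2 : i ≤ t.sup id := Finset.le_sup (f := id) hi
      omega
    · simp only [Set.mem_iUnion, not_exists]
      intro j hj
      exact Nat.find_min hex (Finset.mem_range.1 hj)
  · intro A hA A' hA' hne
    obtain ⟨i, _, rfl⟩ := Finset.mem_image.1 (Finset.mem_coe.1 hA)
    obtain ⟨j, _, rfl⟩ := Finset.mem_image.1 (Finset.mem_coe.1 hA')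
    rcases lt_trichotomy i j with h | h | h
    · exact hDd i j h
    · exact (hne (by rw [h])).elim
    · exact (hDd j i h).symm
  · intro A hA x hx y hy
    obtain ⟨i, _, rfl⟩ := Finset.mem_image.1 hA
    have h1 := Metric.mem_ball.1 hx.1
    have h2 := Metric.mem_ball'.1 hy.1
    have := dist_triangle x (TopologicalSpace.denseSeq X i) y
    linarith
end Upper

section MZ
variable {X : Type*} [MetricSpace X] [MeasurableSpace X]

/-- weight of a Bowen ball -/
noncomputable def wt (f : X → X) (φ : X → ℝ) (α : ℝ) (p : X × ℕ) : ℝ≥0∞ :=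
  ENNReal.ofReal (Real.exp (-α * (p.2 : ℝ) + birk f φ p.2 p.1))

lemma Mcov_le {f : X → X} {φ : X → ℝ} {Z : Set X} {α : ℝ} {N : ℕ} {ε : ℝ} (c : ℕ → X × ℕ)
    (h1 : ∀ i, N ≤ (c i).2) (h2 : Z ⊆ ⋃ i, bowenBall f (c i).1 (c i).2 ε) :
    Mcov f φ Z α N ε ≤ ∑' i, wt f φ α (c i) :=
  iInf₂_le (f := fun (c : ℕ → X × ℕ) (_ : (∀ i, N ≤ (c i).2) ∧
    Z ⊆ ⋃ i, bowenBall f (c i).1 (c i).2 ε) => ∑' i, wt f φ α (c i)) c ⟨h1, h2⟩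

lemma Mcov_mono_N {f : X → X} {φ : X → ℝ} {Z : Set X} {α : ℝ} {ε : ℝ} :
    Monotone fun N => Mcov f φ Z α N ε := by
  intro N N' h
  refine le_iInf₂ fun c hc => ?_
  exact Mcov_le c (fun i => h.trans (hc.1 i)) hc.2

lemma Mcov_le_of_countable {f : X → X} {φ : X → ℝ} {Z : Set X} {α : ℝ} {N : ℕ} {ε : ℝ}
    {ι : Type*} [Countable ι] (c : ι → X × ℕ)
    (h1 : ∀ i, N ≤ (c i).2) (h2 : Z ⊆ ⋃ i, bowenBall f (c i).1 (c i).2 ε)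
    (pad : ∀ δ : ℝ≥0∞, 0 < δ → ∃ p : X × ℕ, N ≤ p.2 ∧ wt f φ α p ≤ δ) :
    Mcov f φ Z α N ε ≤ ∑' i, wt f φ α (c i) := by
  refine ENNReal.le_of_forall_pos_le_add fun δ hδ _ => ?_
  obtain ⟨d, hd0, hd⟩ := ENNReal.exists_pos_sum_of_countable
    (ε := (δ : ℝ≥0∞)) (by simpa using hδ.ne') ℕ
  choose p hpN hp using fun n => pad (d n) (by simpa using hd0 n)
  obtain ⟨_⟩ := nonempty_denumerable (ι ⊕ ℕ)
  let e := (Denumerable.eqv (ι ⊕ ℕ)).symm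
  refine (Mcov_le (fun n => Sum.elim c p (e n)) ?_ ?_).trans ?_
  · intro n
    rcases h : e n with i | j
    · simpa [h] using h1 i
    · simpa [h] using hpN j
  · intro x hx
    obtain ⟨i, hi⟩ := Set.mem_iUnion.1 (h2 hx)
    refine Set.mem_iUnion.2 ⟨e.symm (Sum.inl i), ?_⟩
    simpa using hi
  · rw [e.tsum_eq (fun t => wt f φ α (Sum.elim c p t)),
      Summable.tsum_sum ENNReal.summable ENNReal.summable]
    simp only [Sum.elim_inl, Sum.elim_inr]
    gcongr
    exact (ENNReal.tsum_le_tsum hp).trans hd.le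

lemma mZ_iUnion {f : X → X} {φ : X → ℝ} {α : ℝ} {ε : ℝ} {ι : Type*} [Countable ι] [Nonempty ι]
    (Z : ι → Set X) (h : ∀ i, mZ f φ (Z i) α ε = 0) : mZ f φ (⋃ i, Z i) α ε = 0 := by
  obtain ⟨e, he⟩ := exists_surjective_nat ι
  rw [mZ, ENNReal.iSup_eq_zero]
  intro N
  rw [← nonpos_iff_eq_zero]
  refine ENNReal.le_of_forall_pos_le_add fun δ hδ _ => ?_
  rw [zero_add]
  obtain ⟨d, hd0, hd⟩ := ENNReal.exists_pos_sum_of_countable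
    (ε := (δ : ℝ≥0∞)) (by simpa using hδ.ne') ℕ
  have hc : ∀ n, ∃ c : ℕ → X × ℕ, ((∀ i, N ≤ (c i).2) ∧
      Z (e n) ⊆ ⋃ i, bowenBall f (c i).1 (c i).2 ε) ∧ ∑' i, wt f φ α (c i) < d n := by
    intro n
    have h1 := h (e n)
    rw [mZ, ENNReal.iSup_eq_zero] at h1
    have h2 : Mcov f φ (Z (e n)) α N ε < d n := by rw [h1 N]; simpa using hd0 n
    simp only [Mcov, iInf_lt_iff] at h2
    obtain ⟨c, hc, hc'⟩ := h2
    exact ⟨c, hc, hc'⟩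
  choose c hc hcs using hc
  refine (Mcov_le (fun n => c (Nat.unpair n).1 (Nat.unpair n).2) ?_ ?_).trans ?_
  · intro n; exact (hc _).1 _
  · intro x hx
    obtain ⟨i, hi⟩ := Set.mem_iUnion.1 hx
    obtain ⟨n, rfl⟩ := he i
    obtain ⟨j, hj⟩ := Set.mem_iUnion.1 ((hc n).2 hi)
    refine Set.mem_iUnion.2 ⟨Nat.pair n j, ?_⟩
    simpa using hj
  · have h3 : ∑' n, wt f φ α (c (Nat.unpair n).1 (Nat.unpair n).2) =
        ∑' p : ℕ × ℕ, wt f φ α (c p.1 p.2) :=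
      Nat.pairEquiv.symm.tsum_eq (fun p : ℕ × ℕ => wt f φ α (c p.1 p.2))
    rw [h3, ENNReal.tsum_prod (f := fun a b => wt f φ α (c a b))]
    exact (ENNReal.tsum_le_tsum fun n => (hcs n).le).trans hd.le

lemma PZeps_anti {f : X → X} {φ : X → ℝ} {Z : Set X} {ε ε' : ℝ} (h : ε ≤ ε') :
    PZeps f φ Z ε' ≤ PZeps f φ Z ε := by
  refine le_iInf₂ fun α hα => iInf₂_le α ?_
  rw [mZ, ENNReal.iSup_eq_zero] at hα ⊢
  intro N
  rw [← nonpos_iff_eq_zero, ← hα N]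
  refine le_iInf₂ fun c hc => Mcov_le c hc.1 (hc.2.trans ?_)
  exact Set.iUnion_mono fun i y hy j hj => (hy j hj).trans_le h

lemma PZeps_mono {f : X → X} {φ : X → ℝ} {Z Z' : Set X} {ε : ℝ} (h : Z ⊆ Z') :
    PZeps f φ Z ε ≤ PZeps f φ Z' ε := by
  refine le_iInf₂ fun α hα => iInf₂_le α ?_
  rw [mZ, ENNReal.iSup_eq_zero] at hα ⊢
  intro N
  rw [← nonpos_iff_eq_zero, ← hα N]
  exact le_iInf₂ fun c hc => Mcov_le c hc.1 (h.trans hc.2)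

/-- name of length `k` -/
def word {A : Type*} (f : X → X) (π : X → A) (k : ℕ) (x : X) : Fin k → A :=
  fun i => π (f^[(i:ℕ)] x)

/-- The set of points that are cheaply coded infinitely often. -/
def ZZ {A : Type*} (f : X → X) (φ : X → ℝ) (π : X → A) (β : ℝ) (k : ℕ) (ρ : (Fin k → A) → ℝ) :
    Set X :=
  {x | ∃ᶠ m : ℕ in atTop, ∃ r < k, birk f φ (k * m) x +
    ∑ i ∈ Finset.range m, ρ (word f π k (f^[r + k * i] x)) < β * (k * m : ℕ)}

lemma mZ_ZZ {A : Type*} [Fintype A] {f : X → X} {φ : X → ℝ} {π : X → A} {ε : ℝ}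
    (hπ : ∀ x y, π x = π y → dist x y < ε) {β : ℝ} {k : ℕ} (hk : 1 ≤ k)
    {ρ : (Fin k → A) → ℝ} (hρ : ∑ v, Real.exp (-ρ v) ≤ 1) (hne : (ZZ f φ π β k ρ).Nonempty)
    {α : ℝ} (hα : β < α) : mZ f φ (ZZ f φ π β k ρ) α ε = 0 := by
  classical
  have hρ0 : ∀ v, 0 ≤ ρ v := by
    intro v
    have h1 := Finset.single_le_sum (f := fun v => Real.exp (-ρ v))
      (fun v _ => (Real.exp_pos _).le) (Finset.mem_univ v)
    have h2 := h1.trans hρ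
    simp only [Real.exp_le_one_iff] at h2
    linarith
  set γ := α - β with hγ
  have hγ0 : 0 < γ := by linarith
  have hk0 : (0:ℝ) < k := by exact_mod_cast hk
  set th : ℝ := Real.exp (-(γ * k)) with hth
  have hth1 : th < 1 := by rw [hth]; simp; positivity
  have hth0 : 0 < th := Real.exp_pos _
  have hthm : ∀ m : ℕ, Real.exp (-(γ * (k * m : ℕ))) = th ^ m := by
    intro m; rw [hth, ← Real.exp_nat_mul]; congr 1; push_cast; ring
  -- padding
  have pad : ∀ N, ∀ δ : ℝ≥0∞, 0 < δ → ∃ p : X × ℕ, N ≤ p.2 ∧ wt f φ α p ≤ δ := by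
    intro N δ hδ
    obtain ⟨x, hx⟩ := hne
    have ht : Tendsto (fun m : ℕ => ENNReal.ofReal (th ^ m)) atTop (nhds 0) := by
      have := ENNReal.tendsto_ofReal (tendsto_pow_atTop_nhds_zero_of_lt_one hth0.le hth1)
      simpa using this
    obtain ⟨m, ⟨r, hr, hm⟩, hmN, hmd⟩ := (hx.and_eventually
      ((eventually_ge_atTop N).and ((tendsto_order.1 ht).2 δ hδ))).exists
    refine ⟨(x, k * m), by dsimp only; nlinarith, le_trans ?_ hmd.le⟩
    refine ENNReal.ofReal_le_ofReal ?_
    rw [← hthm]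
    refine Real.exp_le_exp.2 ?_
    have : 0 ≤ ∑ i ∈ Finset.range m, ρ (word f π k (f^[r + k * i] x)) :=
      Finset.sum_nonneg fun i _ => hρ0 _
    simp only [hγ]
    linarith
  set D : ℝ := (k : ℝ) * (Fintype.card (Fin k → A)) with hD
  have key : ∀ N, Mcov f φ (ZZ f φ π β k ρ) α N ε ≤
      ∑' m : ℕ, ENNReal.ofReal (D * th ^ (m + N)) := by
    intro N
    let T : ℕ → Type _ := fun m => Fin k × (Fin k → A) × (Fin (m + N) → (Fin k → A))
    let good : (Σ m, T m) → X → Prop := fun t x =>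
      word f π k x = t.2.2.1 ∧ (∀ i : Fin (t.1 + N), word f π k (f^[(t.2.1 : ℕ) + k * (i : ℕ)] x) = t.2.2.2 i) ∧
      birk f φ (k * (t.1 + N)) x + ∑ i, ρ (t.2.2.2 i) < β * (k * (t.1 + N) : ℕ)
    let J := {t : Σ m, T m // ∃ x, good t x}
    have hx : ∀ t : J, ∃ x, good t.1 x := fun t => t.2
    choose xx hxx using hx
    have : Countable J := inferInstance
    refine (Mcov_le_of_countable (ι := J) (fun t => (xx t, k * (t.1.1 + N))) ?_ ?_ (pad N)).trans ?_
    · intro t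
      dsimp only
      nlinarith
    · intro x hx
      obtain ⟨m, ⟨r, hr, hm⟩, hmN⟩ := (hx.and_eventually (eventually_ge_atTop N)).exists
      obtain ⟨m', rfl⟩ := Nat.exists_eq_add_of_le hmN
      rw [add_comm N m'] at hm
      let t : Σ m, T m := ⟨m', ⟨r, hr⟩, word f π k x, fun i => word f π k (f^[r + k * (i:ℕ)] x)⟩
      have hgood : good t x := by
        refine ⟨rfl, fun i => rfl, ?_⟩
        simp only [t]
        rw [Finset.sum_range] at hm
        exact hm
      refine Set.mem_iUnion.2 ⟨⟨t, x, hgood⟩, ?_⟩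
      have hy := hxx ⟨t, x, hgood⟩
      set y := xx ⟨t, x, hgood⟩
      intro j hj
      change j < k * (m' + N) at hj
      refine hπ _ _ ?_
      by_cases hjk : j < k
      · have h1 := congrFun (hy.1.trans hgood.1.symm) ⟨j, hjk⟩
        exact h1
      · have hb : (j - r) % k < k := Nat.mod_lt _ (by omega)
        have hi : (j - r) / k < m' + N := by
          rw [Nat.div_lt_iff_lt_mul (by omega), mul_comm]; omega
        have h1 := congrFun ((hy.2.1 ⟨(j-r)/k, hi⟩).trans (hgood.2.1 ⟨(j-r)/k, hi⟩).symm)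
          ⟨(j-r)%k, hb⟩
        simp only [word, ← Function.iterate_add_apply] at h1
        have h2 : (j - r) % k + (((t.2.1 : Fin k) : ℕ) + k * ((j - r) / k)) = j := by
          have h3 := Nat.mod_add_div (j - r) k
          have h4 : ((t.2.1 : Fin k) : ℕ) = r := rfl
          omega
        rw [h2] at h1
        exact h1
    · let F : (Σ m, T m) → ℝ≥0∞ := fun t =>
        ENNReal.ofReal (th ^ (t.1 + N) * ∏ i, Real.exp (-ρ (t.2.2.2 i)))
      have h1 : ∀ t : J, wt f φ α (xx t, k * (t.1.1 + N)) ≤ F t.1 := by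
        intro t
        refine ENNReal.ofReal_le_ofReal ?_
        rw [← hthm, ← Real.exp_sum, ← Real.exp_add]
        refine Real.exp_le_exp.2 ?_
        have := (hxx t).2.2
        rw [Finset.sum_neg_distrib]
        simp only [hγ]
        linarith
      refine (ENNReal.tsum_le_tsum h1).trans ?_
      refine (ENNReal.tsum_comp_le_tsum_of_injective Subtype.val_injective F).trans ?_
      rw [ENNReal.tsum_sigma']
      refine ENNReal.tsum_le_tsum fun m => ?_
      rw [tsum_fintype]
      simp only [F]
      rw [← ENNReal.ofReal_sum_of_nonneg (fun i _ => by positivity)]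
      refine ENNReal.ofReal_le_ofReal ?_
      rw [← Finset.mul_sum]
      have h3 : ∑ b : Fin k × (Fin k → A) × (Fin (m + N) → (Fin k → A)),
          ∏ i : Fin (m + N), Real.exp (-ρ (b.2.2 i)) =
          D * (∑ v, Real.exp (-ρ v)) ^ (m + N) := by
        simp only [Fintype.sum_prod_type]
        rw [← Fintype.sum_pow (fun v => Real.exp (-ρ v)) (m + N)]
        simp only [Finset.sum_const, Finset.card_univ, nsmul_eq_mul, Fintype.card_fin]
        rw [hD]; ring
      change th ^ (m + N) * ∑ b : Fin k × (Fin k → A) × (Fin (m + N) → (Fin k → A)),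
          ∏ i : Fin (m + N), Real.exp (-ρ (b.2.2 i)) ≤ _
      rw [h3]
      have h2 : (∑ v, Real.exp (-ρ v)) ^ (m + N) ≤ 1 :=
        pow_le_one₀ (Finset.sum_nonneg fun v _ => (Real.exp_pos _).le) hρ
      calc _ = D * th ^ (m + N) * (∑ v, Real.exp (-ρ v)) ^ (m + N) := by ring
        _ ≤ D * th ^ (m + N) * 1 := by gcongr
        _ = _ := by ring
  have hfin : ∑' m : ℕ, ENNReal.ofReal (D * th ^ m) ≠ ∞ := by
    have hs : Summable fun m : ℕ => D * th ^ m :=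
      (summable_geometric_of_lt_one hth0.le hth1).mul_left D
    rw [← ENNReal.ofReal_tsum_of_nonneg (fun m => by positivity) hs]
    exact ENNReal.ofReal_ne_top
  have hlim := ENNReal.tendsto_sum_nat_add _ hfin
  rw [mZ, ENNReal.iSup_eq_zero]
  intro N
  rw [← nonpos_iff_eq_zero]
  refine ge_of_tendsto hlim ?_
  filter_upwards [eventually_ge_atTop N] with M hM
  exact (Mcov_mono_N hM).trans (key M)

end MZ
section Fatou
variable {X : Type*} [MeasurableSpace X]

lemma measurable_birk {f : X → X} (hf : Measurable f) {g : X → ℝ} (hg : Measurable g) (n : ℕ) :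
    Measurable (birk f g n) :=
  Finset.measurable_sum _ fun i _ => hg.comp (hf.iterate i)

lemma measurableSet_frequently {P : ℕ → X → Prop} (h : ∀ m, MeasurableSet {x | P m x}) :
    MeasurableSet {x | ∃ᶠ m in atTop, P m x} := by
  have : {x | ∃ᶠ m in atTop, P m x} = ⋂ a : ℕ, ⋃ m : ℕ, ⋃ _ : a ≤ m, {x | P m x} := by
    ext x; simp [frequently_atTop]
  rw [this]
  exact MeasurableSet.iInter fun a => MeasurableSet.iUnion fun m => MeasurableSet.iUnion fun _ => h m

lemma ergodic_frequently {f : X → X} {ν : Measure X} [IsProbabilityMeasure ν] (he : Ergodic f ν)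
    {g : X → ℝ} (hg : Measurable g) {B : ℝ} (hB : ∀ x, |g x| ≤ B) {β : ℝ}
    (hβ : ∫ x, g x ∂ν < β) {k : ℕ} (hk : 1 ≤ k) :
    ∀ᵐ x ∂ν, ∃ᶠ m : ℕ in atTop, birk f g (k * m) x < β * (k * m : ℕ) := by
  have hf := he.toMeasurePreserving.measurable
  have hgi : Integrable g ν := Integrable.of_bound hg.aestronglyMeasurable B
    (Eventually.of_forall hB)
  let E : Set X := ⋃ c : {c : ℚ // (c:ℝ) < β},
    {x | ∃ᶠ m : ℕ in atTop, birk f g (k * m) x < (c : ℝ) * (k * m : ℕ)}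
  have hEm : MeasurableSet E := MeasurableSet.iUnion fun c => measurableSet_frequently fun m =>
    measurableSet_lt (measurable_birk hf hg _) measurable_const
  have hclose : ∀ n x, |birk f g n (f x) - birk f g n x| ≤ 2 * B := by
    intro n x
    have h1 := birk_add f g 1 n x
    have h2 := birk_add f g n 1 x
    rw [add_comm 1 n] at h1
    have h3 : ∀ y, birk f g 1 y = g y := fun y => by simp [birk]
    rw [h3] at h1 h2
    have h4 : birk f g n (f x) - birk f g n x = g (f^[n] x) - g x := by
      simp only [Function.iterate_one] at h1; linarith
    rw [h4]
    have := abs_le.1 (hB x)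
    have := abs_le.1 (hB (f^[n] x))
    exact abs_le.2 ⟨by linarith, by linarith⟩
  have htend : ∀ d : ℝ, 0 < d → ∀ᶠ m : ℕ in atTop, 2 * B ≤ d * (k * m : ℕ) := by
    intro d hd
    have : Tendsto (fun m : ℕ => d * (k * m : ℕ)) atTop atTop := by
      refine Tendsto.const_mul_atTop hd (tendsto_natCast_atTop_atTop.comp ?_)
      exact tendsto_id.const_mul_atTop' (by omega)
    exact this.eventually_ge_atTop _
  have hinvE : f ⁻¹' E = E := by
    have aux : ∀ x y, (∀ n, birk f g n y ≤ birk f g n x + 2 * B) → x ∈ E → y ∈ E := by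
      intro x y hxy hx
      obtain ⟨⟨c, hc⟩, hx⟩ := Set.mem_iUnion.1 hx
      obtain ⟨c', hc1, hc2⟩ := exists_rat_btwn hc
      refine Set.mem_iUnion.2 ⟨⟨c', hc2⟩, ?_⟩
      refine (hx.and_eventually (htend ((c':ℝ) - c) (by linarith))).mono ?_
      rintro m ⟨h1, h2⟩
      have := hxy (k * m)
      simp only at h1 ⊢
      linarith
    ext x
    constructor
    · exact aux (f x) x fun n => by have := abs_le.1 (hclose n x); linarith
    · exact aux x (f x) fun n => by have := abs_le.1 (hclose n x); linarith
  rcases he.toPreErgodic.ae_mem_or_ae_notMem hEm hinvE with h | h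
  · filter_upwards [h] with x hx
    obtain ⟨⟨c, hc⟩, hx⟩ := Set.mem_iUnion.1 hx
    refine hx.mono fun m hm => hm.trans_le ?_
    simp only
    gcongr
  · exfalso
    obtain ⟨c, hc1, hc2⟩ := exists_rat_btwn hβ
    have hlim : Tendsto (fun m : ℕ => ∫ x, min (birk f g (k * m) x / (k * m : ℕ)) c ∂ν) atTop
        (nhds (∫ _, (c:ℝ) ∂ν)) := by
      refine tendsto_integral_of_dominated_convergence (fun _ => B + |(c:ℝ)|) ?_
        (integrable_const _) ?_ ?_
      · intro m
        exact (((measurable_birk hf hg _).div_const _).min measurable_const).aestronglyMeasurable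
      · intro m
        refine Eventually.of_forall fun x => ?_
        have h1 : |birk f g (k * m) x / (k * m : ℕ)| ≤ B := by
          have hB0 : 0 ≤ B := (abs_nonneg _).trans (hB x)
          rw [abs_div, Nat.abs_cast]
          refine div_le_of_le_mul₀ (by positivity) hB0 ?_
          refine (Finset.abs_sum_le_sum_abs _ _).trans ?_
          refine (Finset.sum_le_sum fun i _ => hB (f^[i] x)).trans ?_
          simp [mul_comm]
        rw [Real.norm_eq_abs]
        refine abs_le.2 ?_
        have h2 := abs_le.1 h1
        have h3 := abs_nonneg (c:ℝ)
        have h4 := neg_abs_le (c:ℝ)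
        have h5 := le_abs_self (c:ℝ)
        refine ⟨le_min (by linarith) (by linarith), (min_le_right _ _).trans (by linarith)⟩
      · filter_upwards [h] with x hx
        have hx' : ∀ᶠ m : ℕ in atTop, (c:ℝ) * (k * m : ℕ) ≤ birk f g (k * m) x := by
          have : ¬ ∃ᶠ m : ℕ in atTop, birk f g (k * m) x < (c : ℝ) * (k * m : ℕ) :=
            fun hh => hx (Set.mem_iUnion.2 ⟨⟨c, hc2⟩, hh⟩)
          simpa only [not_frequently, not_lt] using this
        refine tendsto_const_nhds.congr' ?_
        filter_upwards [hx', eventually_gt_atTop 0] with m hm hm0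
        symm
        refine min_eq_right ?_
        rw [le_div_iff₀ (by exact_mod_cast Nat.mul_pos hk hm0)]
        exact hm
    have hle : ∀ᶠ m : ℕ in atTop,
        ∫ x, min (birk f g (k * m) x / (k * m : ℕ)) c ∂ν ≤ ∫ x, g x ∂ν := by
      filter_upwards [eventually_gt_atTop 0] with m hm0
      have hb := integral_birk he.toMeasurePreserving hgi (k * m)
      have hkm : (0:ℝ) < (k * m : ℕ) := by exact_mod_cast Nat.mul_pos hk hm0
      calc ∫ x, min (birk f g (k * m) x / (k * m : ℕ)) c ∂ν
          ≤ ∫ x, birk f g (k * m) x / (k * m : ℕ) ∂ν := by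
            refine integral_mono ((hb.1.div_const _).inf (integrable_const _)) (hb.1.div_const _)
              fun x => min_le_left _ _
        _ = _ := by
            rw [integral_div, hb.2]
            field_simp
    have := le_of_tendsto hlim hle
    simp at this
    linarith

lemma exists_rat_code {W : Type*} [Fintype W] [Nonempty W] (p : W → ℝ) (hp : ∀ w, 0 ≤ p w)
    (hps : ∑ w, p w = 1) (γ : ℝ) (hγ : 0 < γ) : ∃ r : W → ℚ, ∑ w, Real.exp (-(r w : ℝ)) ≤ 1 ∧
      ∑ w, p w * r w ≤ -∑ w, p w * Real.log (p w) + γ := by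
  set θ : ℝ := 1 - Real.exp (-(γ / 2)) with hθ
  have hθ1 : 0 < 1 - θ := by rw [hθ]; simp [Real.exp_pos]
  have hθ0 : 0 < θ := by
    rw [hθ]
    have : Real.exp (-(γ / 2)) < 1 := by simpa using hγ
    linarith
  have hlogθ : Real.log (1 - θ) = -(γ / 2) := by rw [hθ]; simp
  set M : ℝ := ((Fintype.card W : ℕ) : ℝ) with hM
  have hM0 : 0 < M := by rw [hM]; exact_mod_cast Fintype.card_pos
  let y : W → ℝ := fun w => (1 - θ) * p w + θ / M
  have hy : ∀ w, 0 < y w := fun w => by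
    have := hp w
    simp only [y]; positivity
  have hys : ∑ w, y w = 1 := by
    simp only [y]
    rw [Finset.sum_add_distrib, ← Finset.mul_sum, hps, Finset.sum_const, nsmul_eq_mul,
      Finset.card_univ, ← hM]
    field_simp
    ring
  choose r hr1 hr2 using fun w => exists_rat_btwn
    (show -Real.log (y w) < -Real.log (y w) + γ / 2 by linarith)
  refine ⟨r, ?_, ?_⟩
  · rw [← hys]
    refine Finset.sum_le_sum fun w _ => ?_
    rw [← Real.exp_log (hy w)]
    exact Real.exp_le_exp.2 (by have := hr1 w; linarith)
  · have h1 : ∀ w, p w * r w ≤ -(p w * Real.log (p w)) + p w * γ := by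
      intro w
      rcases (hp w).eq_or_lt with h | h
      · rw [← h]; simp
      · have h2 : Real.log ((1 - θ) * p w) ≤ Real.log (y w) := by
          refine Real.log_le_log (by positivity) ?_
          have : 0 ≤ θ / M := by positivity
          simp only [y]; linarith
        rw [Real.log_mul hθ1.ne' h.ne', hlogθ] at h2
        have h3 : (r w : ℝ) ≤ - Real.log (p w) + γ := by have := hr2 w; linarith
        have := mul_le_mul_of_nonneg_left h3 h.le
        linarith
    refine (Finset.sum_le_sum fun w _ => h1 w).trans ?_
    rw [Finset.sum_add_distrib, ← Finset.sum_mul, hps, Finset.sum_neg_distrib, one_mul]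

end Fatou

section Step
variable {X : Type*} [MetricSpace X] [CompactSpace X] [MeasurableSpace X] [BorelSpace X]

lemma sum_range_mul_eq (h : ℕ → ℝ) (k m : ℕ) :
    ∑ j ∈ Finset.range (k * m), h j =
      ∑ r ∈ Finset.range k, ∑ i ∈ Finset.range m, h (r + k * i) := by
  induction m with
  | zero => simp
  | succ m ih =>
    rw [Nat.mul_succ, Finset.sum_range_add, ih, ← Finset.sum_add_distrib]
    refine Finset.sum_congr rfl fun r _ => ?_
    rw [Finset.sum_range_succ, add_comm (k * m) r]

lemma measurableSet_ZZ {f : X → X} (hf : Continuous f) {φ : X → ℝ} (hφ : Continuous φ)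
    {s : Finset (Set X)} (hs : IsFinPartition s) {π : X → {A // A ∈ s}}
    (hπ : ∀ x A, π x = A ↔ x ∈ A.1) (β : ℝ) (k : ℕ) (ρ : (Fin k → {A // A ∈ s}) → ℝ) :
    MeasurableSet (ZZ f φ π β k ρ) := by
  refine measurableSet_frequently fun m => ?_
  have : {x | ∃ r < k, birk f φ (k * m) x +
    ∑ i ∈ Finset.range m, ρ (word f π k (f^[r + k * i] x)) < β * (k * m : ℕ)} =
    ⋃ r : ℕ, ⋃ _ : r < k, {x | birk f φ (k * m) x +
    ∑ i ∈ Finset.range m, ρ (word f π k (f^[r + k * i] x)) < β * (k * m : ℕ)} := by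
    ext x; simp
  rw [this]
  refine MeasurableSet.iUnion fun r => MeasurableSet.iUnion fun _ => ?_
  refine measurableSet_lt ((measurable_birk hf.measurable hφ.measurable _).add
    (Finset.measurable_sum _ fun i _ => ?_)) measurable_const
  exact (measurable_word hf.measurable hs hπ ρ).comp (hf.measurable.iterate _)

lemma ergodic_step {f : X → X} (hf : Continuous f) {φ : X → ℝ} (hφ : Continuous φ)
    {s : Finset (Set X)} (hs : IsFinPartition s) {π : X → {A // A ∈ s}}
    (hπ : ∀ x A, π x = A ↔ x ∈ A.1) {ν : Measure X} [IsProbabilityMeasure ν] (he : Ergodic f ν)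
    {β : ℝ} (hβ : ksEntropy f ν + ((∫ x, φ x ∂ν : ℝ) : EReal) < β) :
    ∃ k : ℕ, 1 ≤ k ∧ ∃ r : (Fin k → {A // A ∈ s}) → ℚ, ∑ v, Real.exp (-(r v : ℝ)) ≤ 1 ∧
      ∀ᵐ x ∂ν, x ∈ ZZ f φ π β k (fun v => (r v : ℝ)) := by
  have hX : Nonempty X := by
    by_contra h
    rw [not_nonempty_iff] at h
    have := measure_univ (μ := ν)
    simp [Measure.eq_zero_of_isEmpty ν] at this
  have hA : Nonempty {A // A ∈ s} := ⟨π hX.some⟩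
  obtain ⟨B, hB⟩ := (isCompact_range hφ).isBounded.exists_norm_le
  have hB' : ∀ x, |φ x| ≤ B := fun x => hB _ ⟨x, rfl⟩
  have hφi : Integrable φ ν := Integrable.of_bound hφ.aestronglyMeasurable B
    (Eventually.of_forall hB')
  have h1 : Filter.atTop.liminf (fun n : ℕ => ((dynH f ν s n / n : ℝ) : EReal)) <
      ((β - ∫ x, φ x ∂ν : ℝ) : EReal) := by
    refine lt_of_le_of_lt (le_iSup₂ (f := fun (s : Finset (Set X)) (_ : IsFinPartition s) =>
      Filter.atTop.liminf (fun n : ℕ => ((dynH f ν s n / n : ℝ) : EReal))) s hs) ?_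
    rw [EReal.coe_sub]
    exact EReal.lt_sub_iff_add_lt (Or.inl (EReal.coe_ne_bot _)) (Or.inl (EReal.coe_ne_top _)) |>.2 hβ
  have h2 := frequently_lt_of_liminf_lt (by isBoundedDefault) h1
  obtain ⟨k, hk, hk1⟩ := (h2.and_eventually (eventually_ge_atTop 1)).exists
  rw [EReal.coe_lt_coe_iff] at hk
  have hk0 : (0:ℝ) < k := by exact_mod_cast hk1
  obtain ⟨r, hr1, hr2⟩ := exists_rat_code (fun w : Fin k → {A // A ∈ s} => (ν (cell f w)).toReal)
    (fun w => ENNReal.toReal_nonneg) (sum_cell hf.measurable hs hπ ν)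
    ((β - ∫ x, φ x ∂ν - dynH f ν s k / k) * k / 2)
    (by have : 0 < β - ∫ x, φ x ∂ν - dynH f ν s k / k := by linarith
        positivity)
  refine ⟨k, hk1, r, hr1, ?_⟩
  let ρ : (Fin k → {A // A ∈ s}) → ℝ := fun v => (r v : ℝ)
  let g : X → ℝ := fun x => ρ (word f π k x) / k + φ x
  have hwm : Measurable (fun x => ρ (word f π k x)) := measurable_word hf.measurable hs hπ ρ
  have hgm : Measurable g := (hwm.div_const _).add hφ.measurable
  have hgB : ∀ x, |g x| ≤ (∑ v, |ρ v|) / k + B := by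
    intro x
    refine (abs_add_le _ _).trans (add_le_add ?_ (hB' x))
    rw [abs_div, Nat.abs_cast]
    gcongr
    exact Finset.single_le_sum (f := fun v => |ρ v|) (fun v _ => abs_nonneg _) (Finset.mem_univ _)
  have hgint : ∫ x, g x ∂ν < β := by
    have hwi : Integrable (fun x => ρ (word f π k x)) ν := integrable_word hf.measurable hs hπ ν ρ
    have hwint : ∫ x, ρ (word f π k x) ∂ν = ∑ w, (ν (cell f w)).toReal * ρ w :=
      integral_word hf.measurable hs hπ ν ρ
    simp only [g]
    rw [integral_add (hwi.div_const _) hφi, integral_div, hwint]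
    have h3 : dynH f ν s k = -∑ w : Fin k → {A // A ∈ s},
      (ν (cell f w)).toReal * Real.log (ν (cell f w)).toReal := rfl
    rw [← h3] at hr2
    have h4 : (∑ w, (ν (cell f w)).toReal * ρ w) / k ≤
        (dynH f ν s k + (β - ∫ x, φ x ∂ν - dynH f ν s k / k) * k / 2) / k := by
      gcongr
    have h5 : (dynH f ν s k + (β - ∫ x, φ x ∂ν - dynH f ν s k / k) * k / 2) / k =
        dynH f ν s k / k + (β - ∫ x, φ x ∂ν - dynH f ν s k / k) / 2 := by
      field_simp
    linarith
  filter_upwards [ergodic_frequently he hgm hgB hgint hk1] with x hx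
  refine hx.mono fun m hm => ?_
  have h6 : birk f g (k * m) x = (∑ j ∈ Finset.range (k * m), ρ (word f π k (f^[j] x))) / k +
      birk f φ (k * m) x := by
    simp only [birk, g]
    rw [Finset.sum_add_distrib, Finset.sum_div]
  rw [sum_range_mul_eq] at h6
  set S : ℕ → ℝ := fun r => ∑ i ∈ Finset.range m, ρ (word f π k (f^[r + k * i] x)) with hS
  obtain ⟨r', hr', hle⟩ := Finset.exists_le_of_sum_le (s := Finset.range k) (f := S)
    (g := fun _ => (∑ r ∈ Finset.range k, S r) / k) ⟨0, Finset.mem_range.2 hk1⟩ (by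
      simp only [Finset.sum_const, Finset.card_range, nsmul_eq_mul]
      field_simp
      exact le_rfl)
  refine ⟨r', Finset.mem_range.1 hr', ?_⟩
  have h7 : S r' = ∑ i ∈ Finset.range m, ρ (word f π k (f^[r' + k * i] x)) := rfl
  rw [← h7]
  linarith

end Step
section Final
variable {X : Type*} [MetricSpace X] [CompactSpace X] [MeasurableSpace X] [BorelSpace X]

instance borelSpacePM : BorelSpace (ProbabilityMeasure X) := ⟨rfl⟩

lemma measurable_toMeasure :
    Measurable (fun ν : ProbabilityMeasure X => (ν.toMeasure : Measure X)) := by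
  refine Measurable.measure_of_isPiSystem_of_isProbabilityMeasure
    (S := {s | IsOpen s}) ?_ isPiSystem_isOpen ?_
  · rw [BorelSpace.measurable_eq (α := X)]; rfl
  · intro G hG
    apply LowerSemicontinuous.measurable
    rw [lowerSemicontinuous_iff_le_liminf]
    intro ν
    exact ProbabilityMeasure.le_liminf_measure_open_of_tendsto tendsto_id hG

lemma measurable_eval {A : Set X} (hA : MeasurableSet A) :
    Measurable (fun ν : ProbabilityMeasure X => ν.toMeasure A) :=
  (Measure.measurable_coe hA).comp measurable_toMeasure

lemma decomp_measure {f : X → X} {J : Set X} {μ : Measure X} [IsProbabilityMeasure μ]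
    {τ : Measure (ProbabilityMeasure X)} (hτ : IsErgodicDecomp f J μ τ) {A : Set X}
    (hA : MeasurableSet A) : μ A = ∫⁻ ν, ν.toMeasure A ∂τ := by
  have := hτ.1
  have h := hτ.2.2 (A.indicator fun _ => (1:ℝ)) ((integrable_const _).indicator hA)
  have h1 : ∀ ν : Measure X, ∫ x, A.indicator (fun _ => (1:ℝ)) x ∂ν = (ν A).toReal := by
    intro ν
    rw [integral_indicator hA]; simp [Measure.real]
  simp only [h1] at h
  rw [integral_toReal (measurable_eval hA).aemeasurable (ae_of_all _ fun ν => measure_lt_top _ _)] at h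
  have h2 : ∫⁻ ν, ν.toMeasure A ∂τ ≠ ⊤ := by
    refine ne_top_of_le_ne_top ENNReal.one_ne_top ?_
    calc ∫⁻ ν, ν.toMeasure A ∂τ ≤ ∫⁻ ν, 1 ∂τ := lintegral_mono fun ν => prob_le_one
      _ = 1 := by simp
  exact (ENNReal.toReal_eq_toReal_iff' (measure_ne_top _ _) h2).1 h

lemma decomp_ae_iff {f : X → X} {J : Set X} {μ : Measure X} [IsProbabilityMeasure μ]
    {τ : Measure (ProbabilityMeasure X)} (hτ : IsErgodicDecomp f J μ τ) {Z : Set X}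
    (hZ : MeasurableSet Z) : μ Z = 1 ↔ ∀ᵐ ν ∂τ, ν.toMeasure Z = 1 := by
  have h := decomp_measure hτ hZ.compl
  have h1 : ∀ (ν : Measure X) [IsProbabilityMeasure ν], ν Z = 1 ↔ ν Zᶜ = 0 := fun ν _ =>
    (prob_compl_eq_zero_iff hZ).symm
  rw [h1 μ, h, lintegral_eq_zero_iff (measurable_eval hZ.compl)]
  refine eventually_congr (Eventually.of_forall fun ν => ?_)
  simp [h1 ν.toMeasure]

/-- A measurable condition satisfied by almost all ergodic measures holds almost surely. -/
lemma ae_of_ergodic {f : X → X} {μ : Measure X}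
    {τ : Measure (ProbabilityMeasure X)} (hτ : IsErgodicDecomp f Set.univ μ τ)
    {p q : ProbabilityMeasure X → Prop} (hp : MeasurableSet {ν | p ν})
    (hq : ∀ᵐ ν ∂τ, q ν) (h : ∀ ν, Ergodic f ν.toMeasure → q ν → p ν) : ∀ᵐ ν ∂τ, p ν := by
  have := hτ.1
  change {ν | p ν} ∈ ae τ
  rw [mem_ae_iff, prob_compl_eq_zero_iff hp]
  refine le_antisymm prob_le_one ?_
  rw [← hτ.2.1]
  calc _ ≤ τ ({ν | p ν} ∪ {ν | ¬ q ν}) := by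
        refine measure_mono fun ν hν => ?_
        by_cases hqν : q ν
        · exact Or.inl (h ν hν.1 hqν)
        · exact Or.inr hqν
    _ ≤ τ {ν | p ν} + τ {ν | ¬ q ν} := measure_union_le _ _
    _ = τ {ν | p ν} := by rw [ae_iff.1 hq, add_zero]

lemma ae_invariant {f : X → X} (hf : Continuous f) {μ : Measure X}
    {τ : Measure (ProbabilityMeasure X)} (hτ : IsErgodicDecomp f Set.univ μ τ) :
    ∀ᵐ ν ∂τ, MeasurePreserving f ν.toMeasure ν.toMeasure := by
  have hcl : IsClosed {ν : ProbabilityMeasure X | ν.map hf.measurable.aemeasurable = ν} :=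
    isClosed_eq (ProbabilityMeasure.continuous_map hf) continuous_id
  have h := ae_of_ergodic hτ (q := fun _ => True) hcl.measurableSet (ae_of_all _ fun _ => trivial)
    (fun ν he _ => by
      apply Subtype.ext
      exact he.toMeasurePreserving.map_eq)
  filter_upwards [h] with ν hν
  exact ⟨hf.measurable, congrArg Subtype.val hν⟩

lemma upper_bound {f : X → X} (hf : Continuous f) {φ : X → ℝ} (hφ : Continuous φ) {μ : Measure X}
    [IsProbabilityMeasure μ] {τ : Measure (ProbabilityMeasure X)}
    (hτ : IsErgodicDecomp f Set.univ μ τ) {b : ℝ}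
    (hb : ∀ᵐ ν ∂τ, ksEntropy f (ProbabilityMeasure.toMeasure ν) +
      ((∫ x, φ x ∂(ProbabilityMeasure.toMeasure ν) : ℝ) : EReal) < b) :
    Pmu f φ μ ≤ b := by
  refine iSup₂_le fun ε hε => ?_
  obtain ⟨s, hs, hsd⟩ := exists_partition (X := X) ε hε
  obtain ⟨π, hπ⟩ := exists_name s hs
  have hπd : ∀ x y, π x = π y → dist x y < ε := fun x y hxy =>
    hsd (π y).1 (π y).2 x ((hπ x _).1 hxy) y ((hπ y _).1 rfl)
  let I := {p : Σ k : ℕ, ((Fin k → {A // A ∈ s}) → ℚ) // 1 ≤ p.1 ∧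
    ∑ v, Real.exp (-(p.2 v : ℝ)) ≤ 1 ∧ (ZZ f φ π b p.1 (fun v => (p.2 v : ℝ))).Nonempty}
  let Z : I → Set X := fun p => ZZ f φ π b p.1.1 (fun v => (p.1.2 v : ℝ))
  have hZm : MeasurableSet (⋃ i, Z i) :=
    MeasurableSet.iUnion fun i => measurableSet_ZZ hf hφ hs hπ _ _ _
  have hZ1 : μ (⋃ i, Z i) = 1 := by
    rw [decomp_ae_iff hτ hZm]
    refine ae_of_ergodic hτ (measurable_eval hZm (measurableSet_singleton 1)) hb ?_
    intro ν he hν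
    obtain ⟨k, hk, r, hr, hae⟩ := ergodic_step hf hφ hs hπ he hν
    refine le_antisymm prob_le_one ?_
    have h1 : ν.toMeasure (ZZ f φ π b k (fun v => (r v : ℝ))) = 1 := by
      rw [← mem_ae_iff_prob_eq_one (measurableSet_ZZ hf hφ hs hπ _ _ _)]
      exact hae
    have hne : (ZZ f φ π b k (fun v => (r v : ℝ))).Nonempty := by
      apply nonempty_of_measure_ne_zero (μ := ν.toMeasure)
      rw [h1]; exact one_ne_zero
    rw [← h1]
    exact measure_mono (Set.subset_iUnion Z ⟨⟨k, r⟩, hk, hr, hne⟩)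
  have hI : Nonempty I := by
    by_contra h
    rw [not_nonempty_iff] at h
    simp at hZ1
  refine (iInf₂_le (⋃ i, Z i) ⟨hZm, hZ1⟩).trans ?_
  refine le_of_forall_gt_imp_ge_of_dense fun c hc => ?_
  obtain ⟨a, ha1, ha2⟩ := EReal.lt_iff_exists_real_btwn.1 hc
  refine le_trans (iInf₂_le a ?_) ha2.le
  exact mZ_iUnion Z fun i => mZ_ZZ hπd i.2.1 i.2.2.1 i.2.2.2 (by exact_mod_cast ha1)

lemma ae_Pmu_le {f : X → X} {φ : X → ℝ} {μ : Measure X}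
    [IsProbabilityMeasure μ] {τ : Measure (ProbabilityMeasure X)}
    (hτ : IsErgodicDecomp f Set.univ μ τ) :
    ∀ᵐ ν ∂τ, Pmu f φ (ProbabilityMeasure.toMeasure ν) ≤ Pmu f φ μ := by
  have key : ∀ (j : ℕ) (q : ℚ), Pmu f φ μ < ((q : ℝ) : EReal) → ∀ᵐ ν ∂τ,
      (⨅ (Z : Set X) (_ : MeasurableSet Z ∧ (ProbabilityMeasure.toMeasure ν) Z = 1),
        PZeps f φ Z (1 / ((j:ℝ) + 1))) < ((q : ℝ) : EReal) := by
    intro j q hq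
    have h1 : (⨅ (Z : Set X) (_ : MeasurableSet Z ∧ μ Z = 1),
        PZeps f φ Z (1 / ((j:ℝ) + 1))) < ((q : ℝ) : EReal) :=
      lt_of_le_of_lt (le_iSup₂ (f := fun (ε : ℝ) (_ : 0 < ε) =>
        ⨅ (Z : Set X) (_ : MeasurableSet Z ∧ μ Z = 1), PZeps f φ Z ε)
          (1 / ((j:ℝ) + 1)) (by positivity)) hq
    simp only [iInf_lt_iff] at h1
    obtain ⟨Z, ⟨hZ, hZ1⟩, hlt⟩ := h1
    filter_upwards [(decomp_ae_iff hτ hZ).1 hZ1] with ν hν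
    exact lt_of_le_of_lt (iInf₂_le Z ⟨hZ, hν⟩) hlt
  have key2 : ∀ᵐ ν ∂τ, ∀ (j : ℕ) (q : ℚ), Pmu f φ μ < ((q : ℝ) : EReal) →
      (⨅ (Z : Set X) (_ : MeasurableSet Z ∧ (ProbabilityMeasure.toMeasure ν) Z = 1),
        PZeps f φ Z (1 / ((j:ℝ) + 1))) < ((q : ℝ) : EReal) := by
    rw [ae_all_iff]; intro j
    rw [ae_all_iff]; intro q
    by_cases h : Pmu f φ μ < ((q : ℝ) : EReal)
    · filter_upwards [key j q h] with ν hν _ using hν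
    · exact ae_of_all _ fun ν h' => (h h').elim
  filter_upwards [key2] with ν hν
  refine iSup₂_le fun ε hε => ?_
  refine le_of_forall_gt_imp_ge_of_dense fun c hc => ?_
  obtain ⟨q, hq1, hq2⟩ := EReal.lt_iff_exists_rat_btwn.1 hc
  obtain ⟨j, hj⟩ := exists_nat_one_div_lt hε
  refine le_trans ?_ ((hν j q hq1).le.trans hq2.le)
  exact iInf₂_mono fun Z _ => PZeps_anti hj.le

end Final
end PressureAux
/-- Theorem 4.5 (main theorem): for any ergodic decomposition `τ` of `μ`,
`P_μ(f,φ) = ess sup {P_ν(f,φ) : ν ∈ E(X,f)} = ess sup {h_ν(f) + ∫φ dν : ν ∈ E(X,f)}`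
(essential suprema w.r.t. `τ`); consequently `P_μ(f,φ) ≥ h_μ(f) + ∫φ dμ`. -/
theorem pressure_eq_essSup_ergodic_decomposition {X : Type*} [MetricSpace X] [CompactSpace X] [MeasurableSpace X] [BorelSpace X]
    (f : X → X) (hf : Continuous f) (φ : X → ℝ) (hφ : Continuous φ)
    (μ : Measure X) (hp : IsProbabilityMeasure μ) (hinv : MeasurePreserving f μ μ)
    (τ : Measure (MeasureTheory.ProbabilityMeasure X))
    (hτ : IsErgodicDecomp f Set.univ μ τ) :
    Pmu f φ μ =
      essSup (fun ν : MeasureTheory.ProbabilityMeasure X => Pmu f φ ν.toMeasure) τ ∧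
    Pmu f φ μ =
      essSup (fun ν : MeasureTheory.ProbabilityMeasure X =>
        ksEntropy f ν.toMeasure + ((∫ x, φ x ∂ν.toMeasure : ℝ) : EReal)) τ ∧
    ksEntropy f μ + ((∫ x, φ x ∂μ : ℝ) : EReal) ≤ Pmu f φ μ := by
  have h1 : Pmu f φ μ ≤ essSup (fun ν : MeasureTheory.ProbabilityMeasure X =>
        ksEntropy f ν.toMeasure + ((∫ x, φ x ∂ν.toMeasure : ℝ) : EReal)) τ := by
    refine le_of_forall_gt_imp_ge_of_dense fun c hc => ?_
    obtain ⟨b, hb1, hb2⟩ := EReal.lt_iff_exists_real_btwn.1 hc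
    exact (PressureAux.upper_bound hf hφ hτ (ae_lt_of_essSup_lt hb1)).trans hb2.le
  have h2 : essSup (fun ν : MeasureTheory.ProbabilityMeasure X =>
        ksEntropy f ν.toMeasure + ((∫ x, φ x ∂ν.toMeasure : ℝ) : EReal)) τ ≤
      essSup (fun ν : MeasureTheory.ProbabilityMeasure X => Pmu f φ ν.toMeasure) τ := by
    refine essSup_mono_ae ?_
    filter_upwards [PressureAux.ae_invariant hf hτ] with ν hν
    exact PressureAux.lower_bound hf hφ ν.toMeasure hν
  have h3 : essSup (fun ν : MeasureTheory.ProbabilityMeasure X => Pmu f φ ν.toMeasure) τ ≤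
      Pmu f φ μ := essSup_le_of_ae_le _ (PressureAux.ae_Pmu_le hτ)
  exact ⟨le_antisymm (h1.trans h2) h3, le_antisymm h1 (h2.trans h3),
    PressureAux.lower_bound hf hφ μ hinv⟩
end

section
/- Let (X,f) be a TDS and μ ∈ M(X,f). For any ergodic decomposition τ of μ, E_μ(f) = ess sup{h_ν(f) : ν ∈ E(X,f)}, with the essential supremum taken with respect to τ. Consequently, E_μ(f) ≥ h_μ(f). -/
open MeasureTheory Filter Set
open scoped ENNReal NNReal

open Paper

namespace Paper

set_option linter.unusedSectionVars false

section Coding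

variable {ι : Type*} [Fintype ι] [DecidableEq ι] {B : Type*} [Fintype B]

/-- Mixture weight of a word of length `L`, over all parsings into blocks. -/
noncomputable def qrec (len : B → ℕ) (W : B → (ℕ → ι) → ℝ) (L : ℕ) (ω : ℕ → ι) : ℝ :=
  if L = 0 then 1 else
    ∑ b, if _h : 0 < len b ∧ len b ≤ L then
      W b ω * qrec len W (L - len b) (fun i => ω (i + len b)) else 0
termination_by L
decreasing_by omega

/-- Extend a finite word by a default symbol. -/
def wext (d : ι) {L : ℕ} (w : Fin L → ι) : ℕ → ι :=
  fun i => if h : i < L then w ⟨i, h⟩ else d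

lemma qrec_nonneg (len : B → ℕ) (W : B → (ℕ → ι) → ℝ) (hW0 : ∀ b ω, 0 ≤ W b ω) (L : ℕ) :
    ∀ ω, 0 ≤ qrec len W L ω := by
  induction L using Nat.strong_induction_on with
  | _ L ih =>
    intro ω
    rw [qrec]
    split_ifs with h
    · norm_num
    · refine Finset.sum_nonneg fun b _ => ?_
      split_ifs with hb
      · exact mul_nonneg (hW0 _ _) (ih _ (by omega) _)
      · exact le_rfl

lemma qrec_ge (len : B → ℕ) (W : B → (ℕ → ι) → ℝ) (hW0 : ∀ b ω, 0 ≤ W b ω) (L : ℕ)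
    (ω : ℕ → ι) (b : B) (h1 : 0 < len b) (h2 : len b ≤ L) :
    W b ω * qrec len W (L - len b) (fun i => ω (i + len b)) ≤ qrec len W L ω := by
  conv_rhs => rw [qrec]
  rw [if_neg (by omega)]
  have := Finset.single_le_sum (s := Finset.univ) (f := fun b => if _h : 0 < len b ∧ len b ≤ L then
      W b ω * qrec len W (L - len b) (fun i => ω (i + len b)) else 0) (fun b _ => by
      split_ifs with hb
      · exact mul_nonneg (hW0 _ _) (qrec_nonneg len W hW0 _ _)
      · exact le_rfl) (Finset.mem_univ b)
  rw [dif_pos ⟨h1, h2⟩] at this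
  exact this

lemma qrec_sum_le (d : ι) (len : B → ℕ) (W : B → (ℕ → ι) → ℝ) (hW0 : ∀ b ω, 0 ≤ W b ω)
    (hloc : ∀ b ω ω', (∀ i < len b, ω i = ω' i) → W b ω = W b ω')
    (hsum : ∑ b, ∑ u : Fin (len b) → ι, W b (wext d u) ≤ 1) (L : ℕ) :
    ∑ w : Fin L → ι, qrec len W L (wext d w) ≤ 1 := by
  induction L using Nat.strong_induction_on with
  | _ L ih =>
    by_cases hL : L = 0
    · subst hL
      simp [qrec]
    · have : ∀ w : Fin L → ι, qrec len W L (wext d w) = ∑ b, if _h : 0 < len b ∧ len b ≤ L then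
          W b (wext d w) * qrec len W (L - len b) (fun i => wext d w (i + len b)) else 0 := by
        intro w
        rw [qrec, if_neg hL]
      simp_rw [this]
      rw [Finset.sum_comm]
      refine le_trans (Finset.sum_le_sum fun b _ => ?_) hsum
      by_cases hb : 0 < len b ∧ len b ≤ L
      · simp only [hb, and_self, dite_true]
        obtain ⟨m, rfl⟩ := Nat.exists_eq_add_of_le hb.2
        rw [← (Fin.appendEquiv (len b) m).sum_comp]
        rw [Fintype.sum_prod_type]
        have key : ∀ (u : Fin (len b) → ι) (v : Fin m → ι),
            W b (wext d (Fin.appendEquiv (len b) m (u, v))) *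
              qrec len W (len b + m - len b)
                (fun i => wext d (Fin.appendEquiv (len b) m (u, v)) (i + len b)) =
            W b (wext d u) * qrec len W m (wext d v) := by
          intro u v
          congr 1
          · apply hloc
            intro i hi
            simp only [wext, hi, dite_true, show i < len b + m by omega]
            exact Fin.append_left u v ⟨i, hi⟩
          · rw [Nat.add_sub_cancel_left]
            congr 1
            funext i
            simp only [wext]
            by_cases hi : i < m
            · rw [dif_pos hi, dif_pos (by omega)]
              have := Fin.append_right u v ⟨i, hi⟩
              rw [← this]
              show Fin.append u v _ = _
              congr 1
              ext
              simp [Nat.add_comm]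
            · rw [dif_neg hi, dif_neg (by omega)]
        simp_rw [key, ← Finset.mul_sum]
        refine Finset.sum_le_sum fun u _ => ?_
        exact mul_le_of_le_one_right (hW0 _ _) (ih m (by omega))
      · simp only [hb, dite_false, Finset.sum_const_zero]
        exact Finset.sum_nonneg fun u _ => hW0 _ _

/-- Product weights sum to one. -/
lemma sum_prod_wt (n : ℕ) (wt : ℕ → ι → ℝ) (hwt : ∀ j, ∑ a, wt j a = 1) (d : ι) :
    ∑ u : Fin n → ι, ∏ j ∈ Finset.range n, wt j (wext d u j) = 1 := by
  have : ∀ u : Fin n → ι, ∏ j ∈ Finset.range n, wt j (wext d u j) = ∏ j : Fin n, wt j (u j) := by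
    intro u
    rw [← Fin.prod_univ_eq_prod_range (fun j => wt j (wext d u j)) n]
    refine Finset.prod_congr rfl fun j _ => ?_
    simp [wext]
  simp_rw [this]
  have h := Finset.prod_univ_sum (fun _ : Fin n => (Finset.univ : Finset ι)) (fun j a => wt j a)
  simp only [Fintype.piFinset_univ] at h
  rw [← h]
  simp [hwt]

lemma gibbs {V : Type*} [Fintype V] (p q : V → ℝ) (hp : ∀ v, 0 ≤ p v) (hp1 : ∑ v, p v = 1)
    (hq : ∀ v, 0 ≤ q v) (hq1 : ∑ v, q v ≤ 1) (hpq : ∀ v, 0 < p v → 0 < q v) :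
    -∑ v, p v * Real.log (p v) ≤ ∑ v, p v * (-Real.log (q v)) := by
  have h : ∀ v, -(p v * Real.log (p v)) ≤ p v * (-Real.log (q v)) + (q v - p v) := by
    intro v
    rcases (hp v).eq_or_lt with h0 | h0
    · rw [← h0]; simpa using hq v
    · have hq0 := hpq v h0
      have h1 := Real.log_le_sub_one_of_pos (div_pos hq0 h0)
      rw [Real.log_div hq0.ne' h0.ne'] at h1
      have h2 := mul_le_mul_of_nonneg_left h1 h0.le
      have h3 : p v * (q v / p v - 1) = q v - p v := by field_simp
      nlinarith
  rw [← Finset.sum_neg_distrib]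
  calc _ ≤ ∑ v, (p v * (-Real.log (q v)) + (q v - p v)) := Finset.sum_le_sum fun v _ => h v
    _ ≤ _ := by rw [Finset.sum_add_distrib, Finset.sum_sub_distrib]; linarith

end Coding

end Paper

namespace Paper

section CodingPoint

variable {X : Type*} {ι : Type*} [Fintype ι] [DecidableEq ι]

/-- Symbol weights concentrated on a reference symbol. -/
noncomputable def swt (κ : ℝ) (r a : ι) : ℝ :=
  (if a = r then Real.exp (-κ) else 0) + (1 - Real.exp (-κ)) / Fintype.card ι

lemma swt_sum [Nonempty ι] (κ : ℝ) (r : ι) : ∑ a, swt κ r a = 1 := by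
  have : (Fintype.card ι : ℝ) ≠ 0 := by exact_mod_cast Fintype.card_ne_zero
  simp only [swt, Finset.sum_add_distrib]
  simp
  field_simp
  ring

lemma swt_nonneg (κ : ℝ) (hκ : 0 < κ) (r a : ι) : 0 ≤ swt κ r a := by
  have : Real.exp (-κ) ≤ 1 := Real.exp_le_one_iff.2 (by linarith)
  have h2 : 0 ≤ (1 - Real.exp (-κ)) / Fintype.card ι := div_nonneg (by linarith) (by positivity)
  unfold swt
  split_ifs
  · positivity
  · linarith

/-- Block weights. -/
noncomputable def bwt (κ α : ℝ) {T : ℕ} (len : Fin T → ℕ) (r : Fin T → ℕ → ι) :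
    Option (Fin T) → (ℕ → ι) → ℝ
  | none, _ => 1 / (2 * Fintype.card ι)
  | some i, ω => Real.exp (-α * len i) / 2 * ∏ j ∈ Finset.range (len i), swt κ (r i j) (ω j)

/-- Block lengths. -/
def blen {T : ℕ} (len : Fin T → ℕ) : Option (Fin T) → ℕ
  | none => 1
  | some i => len i

lemma bwt_nonneg (κ α : ℝ) (hκ : 0 < κ) {T : ℕ} (len : Fin T → ℕ) (r : Fin T → ℕ → ι) :
    ∀ b ω, 0 ≤ bwt κ α len r b ω := by
  intro b ω
  cases b with
  | none => simp only [bwt]; positivity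
  | some i =>
    simp only [bwt]
    exact mul_nonneg (by positivity) (Finset.prod_nonneg fun j _ => swt_nonneg κ hκ _ _)

lemma bwt_sum [Nonempty ι] (d : ι) (κ α : ℝ) {T : ℕ} (len : Fin T → ℕ)
    (r : Fin T → ℕ → ι) (hs : ∑ i, Real.exp (-α * len i) ≤ 1) (L : ℕ) (hκ : 0 < κ) :
    ∑ w : Fin L → ι, qrec (blen len) (bwt κ α len r) L (wext d w) ≤ 1 := by
  refine qrec_sum_le d _ _ (bwt_nonneg κ α hκ len r) ?_ ?_ L
  · intro b ω ω' h
    cases b with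
    | none => rfl
    | some i =>
      simp only [bwt]
      congr 1
      refine Finset.prod_congr rfl fun j hj => ?_
      rw [h j (Finset.mem_range.1 hj)]
  · rw [Fintype.sum_option]
    have h1 : ∑ u : Fin (blen len none) → ι, bwt κ α len r none (wext d u) = 1 / 2 := by
      have : (Fintype.card ι : ℝ) ≠ 0 := by exact_mod_cast Fintype.card_ne_zero
      show ∑ u : Fin 1 → ι, (1 / (2 * (Fintype.card ι : ℝ))) = 1 / 2
      simp
    have h2 : ∀ i, ∑ u : Fin (blen len (some i)) → ι, bwt κ α len r (some i) (wext d u)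
        = Real.exp (-α * len i) / 2 := by
      intro i
      show ∑ u : Fin (len i) → ι, Real.exp (-α * len i) / 2 *
        ∏ j ∈ Finset.range (len i), swt κ (r i j) (wext d u j) = _
      rw [← Finset.mul_sum]
      rw [sum_prod_wt (len i) (fun j => swt κ (r i j)) (fun j => swt_sum κ _) d, mul_one]
    rw [h1]
    simp_rw [h2]
    rw [← Finset.sum_div]
    linarith

lemma q_lower [Nonempty ι] (f : X → X) (a : X → ι) (κ α : ℝ) (hκ : 0 < κ) (hα : 0 ≤ α) {T : ℕ}
    (len : Fin T → ℕ) (r : Fin T → ℕ → ι) (M : ℕ) (hM : ∀ i, len i ≤ M) (h0 : ∀ i, 0 < len i)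
    (G : Fin T → Set X) (g : X → ℝ) (hg : ∀ x, 0 ≤ g x)
    (h1 : ∀ x, (∀ i, x ∉ G i) → Real.log (2 * Fintype.card ι) ≤ g x)
    (h2 : ∀ i, ∀ x ∈ G i, Real.exp (-(α * len i + birkhoffSum f g (len i) x)) ≤
      bwt κ α len r (some i) (fun j => a (f^[j] x))) (L : ℕ) :
    ∀ x, Real.exp (-(α * L + birkhoffSum f g L x +
        (min L M : ℕ) * Real.log (2 * Fintype.card ι))) ≤
      qrec (blen len) (bwt κ α len r) L (fun j => a (f^[j] x)) := by
  have hk : (1 : ℝ) ≤ Fintype.card ι := by exact_mod_cast Fintype.card_pos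
  have hlog : 0 ≤ Real.log (2 * Fintype.card ι) := Real.log_nonneg (by linarith)
  have hbs : ∀ n x, 0 ≤ birkhoffSum f g n x := fun n x => Finset.sum_nonneg fun _ _ => hg _
  induction L using Nat.strong_induction_on with
  | _ L ih =>
    intro x
    have hW0 := bwt_nonneg κ α hκ len r
    by_cases hL : L = 0
    · subst hL
      simp [qrec]
    have single : ∀ c : ℝ, Real.log (2 * Fintype.card ι) ≤ c →
        Real.exp (-(α * (L - 1 : ℕ) + birkhoffSum f g (L - 1) (f x) +
        (min (L - 1) M : ℕ) * Real.log (2 * Fintype.card ι) + c)) ≤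
        qrec (blen len) (bwt κ α len r) L (fun j => a (f^[j] x)) := by
      intro c hc
      refine le_trans ?_ (qrec_ge (blen len) _ hW0 L _ none (by simp [blen]) (by simp [blen]; omega))
      simp only [blen, bwt]
      rw [neg_add, Real.exp_add, mul_comm]
      have := ih (L - 1) (by omega) (f x)
      refine mul_le_mul ?_ this (Real.exp_pos _).le (by positivity)
      rw [one_div, ← Real.exp_log (show (0:ℝ) < 2 * Fintype.card ι by linarith), ← Real.exp_neg]
      rw [Real.exp_le_exp]
      linarith
    have hLe : L = L - 1 + 1 := by omega
    have hLc : (L : ℝ) = (L - 1 : ℕ) + 1 := by exact_mod_cast hLe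
    have hbsL : birkhoffSum f g L x = g x + birkhoffSum f g (L - 1) (f x) := by
      conv_lhs => rw [hLe]
      rw [birkhoffSum_succ']
    by_cases hLM : L ≤ M
    · refine le_trans ?_ (single _ le_rfl)
      rw [Real.exp_le_exp, neg_le_neg_iff, min_eq_left hLM, min_eq_left (by omega), hbsL, hLc]
      nlinarith [hg x]
    · rw [min_eq_right (by omega)]
      by_cases hx : ∃ i, x ∈ G i
      · obtain ⟨i, hi⟩ := hx
        have hn := hM i
        refine le_trans ?_ (qrec_ge (blen len) _ hW0 L _ (some i) (by simpa [blen] using h0 i)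
          (by simp only [blen]; omega))
        simp only [blen]
        have e := ih (L - len i) (by have := h0 i; omega) (f^[len i] x)
        simp only [← Function.iterate_add_apply] at e
        refine le_trans ?_ (mul_le_mul (h2 i x hi) e (Real.exp_pos _).le (hW0 _ _))
        rw [← Real.exp_add, Real.exp_le_exp]
        have e1 : birkhoffSum f g L x = birkhoffSum f g (len i) x +
            birkhoffSum f g (L - len i) (f^[len i] x) := by
          rw [← birkhoffSum_add]; congr 1; omega
        have e2 : (L : ℝ) = len i + (L - len i : ℕ) := by
          exact_mod_cast (show L = len i + (L - len i) by omega)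
        have e3 : ((min (L - len i) M : ℕ) : ℝ) ≤ M := by exact_mod_cast min_le_right _ _
        rw [e1]
        have e4 := mul_le_mul_of_nonneg_right e3 hlog
        have e5 : α * L = α * len i + α * (L - len i : ℕ) := by rw [← mul_add, ← e2]
        rw [e5]
        linarith
      · push Not at hx
        refine le_trans ?_ (single _ (h1 x hx))
        rw [Real.exp_le_exp, neg_le_neg_iff, hbsL, hLc]
        have e3 : ((min (L - 1) M : ℕ) : ℝ) ≤ M := by exact_mod_cast min_le_right _ _
        have e4 := mul_le_mul_of_nonneg_right e3 hlog
        nlinarith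

lemma bwt_lower [Nonempty ι] (f : X → X) (a : X → ι) (κ α : ℝ) (hκ : 0 < κ) {T : ℕ}
    (len : Fin T → ℕ) (r : Fin T → ℕ → ι) (G : Fin T → Set X) (K0 : Set X)
    (N : ℕ) (hN0 : 0 < N) (hN : ∀ i, N ≤ len i)
    (hr : ∀ i, ∀ x ∈ G i, ∀ j < len i, f^[j] x ∉ K0 → a (f^[j] x) = r i j)
    (g : X → ℝ) (hg1 : ∀ x, Real.log 2 / N + κ ≤ g x)
    (hg2 : ∀ x ∈ K0, Real.log 2 / N + Real.log (Fintype.card ι / (1 - Real.exp (-κ))) ≤ g x)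
    (i : Fin T) (x : X) (hx : x ∈ G i) :
    Real.exp (-(α * len i + birkhoffSum f g (len i) x)) ≤
      bwt κ α len r (some i) (fun j => a (f^[j] x)) := by
  have hk : (1 : ℝ) ≤ Fintype.card ι := by exact_mod_cast Fintype.card_pos
  have hlt : Real.exp (-κ) < 1 := Real.exp_lt_one_iff.2 (by linarith)
  have hN0' : (0 : ℝ) < N := by exact_mod_cast hN0
  have step : ∀ j ∈ Finset.range (len i), Real.exp (-(g (f^[j] x)) + Real.log 2 / N) ≤
      swt κ (r i j) (a (f^[j] x)) := by
    intro j hj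
    have hpos : 0 < (1 - Real.exp (-κ)) / Fintype.card ι := div_pos (by linarith) (by linarith)
    by_cases h : f^[j] x ∈ K0
    · have h3 := hg2 _ h
      have : Real.exp (-(g (f^[j] x)) + Real.log 2 / N) ≤ (1 - Real.exp (-κ)) / Fintype.card ι := by
        rw [← Real.exp_log hpos, Real.exp_le_exp]
        have : Real.log (Fintype.card ι / (1 - Real.exp (-κ))) =
          - Real.log ((1 - Real.exp (-κ)) / Fintype.card ι) := by
          rw [← Real.log_inv, inv_div]
        linarith
      refine this.trans ?_
      unfold swt
      split_ifs
      · linarith [Real.exp_pos (-κ)]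
      · linarith
    · have h4 := hr i x hx j (Finset.mem_range.1 hj) h
      unfold swt
      rw [if_pos h4]
      have : Real.exp (-(g (f^[j] x)) + Real.log 2 / N) ≤ Real.exp (-κ) := by
        rw [Real.exp_le_exp]; linarith [hg1 (f^[j] x)]
      linarith
  simp only [bwt]
  have hp := Finset.prod_le_prod (fun j _ => (Real.exp_pos _).le) step
  rw [← Real.exp_sum, Finset.sum_add_distrib, Finset.sum_neg_distrib] at hp
  refine le_trans ?_ (mul_le_mul_of_nonneg_left hp (by positivity))
  have : Real.exp (-α * len i) / 2 = Real.exp (-α * len i - Real.log 2) := by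
    rw [Real.exp_sub, Real.exp_log (by norm_num)]
  rw [this, ← Real.exp_add, Real.exp_le_exp]
  simp only [Finset.sum_const, Finset.card_range, nsmul_eq_mul, birkhoffSum]
  have : Real.log 2 ≤ len i * (Real.log 2 / N) := by
    rw [mul_div_assoc', le_div_iff₀ hN0', mul_comm]
    exact mul_le_mul_of_nonneg_right (by exact_mod_cast hN i) (Real.log_nonneg (by norm_num))
  linarith

lemma qrec_congr (κ α : ℝ) {T : ℕ} (len : Fin T → ℕ) (r : Fin T → ℕ → ι) (L : ℕ) :
    ∀ ω ω' : ℕ → ι, (∀ i < L, ω i = ω' i) →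
      qrec (blen len) (bwt κ α len r) L ω = qrec (blen len) (bwt κ α len r) L ω' := by
  induction L using Nat.strong_induction_on with
  | _ L ih =>
    intro ω ω' h
    rw [qrec, qrec]
    split_ifs with hL
    · rfl
    · refine Finset.sum_congr rfl fun b _ => ?_
      split_ifs with hb
      · congr 1
        · cases b with
          | none => rfl
          | some i =>
            simp only [bwt]
            congr 1
            refine Finset.prod_congr rfl fun j hj => ?_
            have := Finset.mem_range.1 hj
            simp only [blen] at hb
            rw [h j (by omega)]
        · exact ih _ (by omega) _ _ fun i hi => h _ (by omega)
      · rfl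

end CodingPoint

end Paper


namespace Paper

set_option linter.unusedVariables false

section LowerBound

variable {X : Type*} [MeasurableSpace X]

lemma exists_symbol {s : Finset (Set X)} (hs : IsFinPartition s) :
    ∃ a : X → {A // A ∈ s}, ∀ x A, a x = A ↔ x ∈ A.1 := by
  have h : ∀ x : X, ∃ A : {A // A ∈ s}, x ∈ A.1 := by
    intro x
    have : x ∈ ⋃₀ (s : Set (Set X)) := by rw [hs.2.1]; trivial
    obtain ⟨A, hA, hx⟩ := this
    exact ⟨⟨A, hA⟩, hx⟩
  choose a ha using h
  refine ⟨a, fun x A => ⟨fun h => h ▸ ha x, fun h => ?_⟩⟩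
  by_contra hne
  have := hs.2.2 (a x).2 A.2 (fun h => hne (Subtype.ext h))
  exact Set.disjoint_left.1 this (ha x) h

/-- Cylinder sets. -/
def cyl {ι : Type*} (f : X → X) (a : X → ι) (n : ℕ) (w : Fin n → ι) : Set X :=
  {x | ∀ i : Fin n, a (f^[(i : ℕ)] x) = w i}

lemma measurableSet_cyl {ι : Type*} (f : X → X) (hf : Measurable f) (a : X → ι)
    (ha : ∀ i, MeasurableSet (a ⁻¹' {i})) (n : ℕ) (w : Fin n → ι) :
    MeasurableSet (cyl f a n w) := by
  have : cyl f a n w = ⋂ i : Fin n, f^[(i : ℕ)] ⁻¹' (a ⁻¹' {w i}) := by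
    ext x; simp [cyl]
  rw [this]
  exact MeasurableSet.iInter fun i => (hf.iterate i) (ha _)

lemma dynH_eq {s : Finset (Set X)} (f : X → X) (μ : Measure X) (a : X → {A // A ∈ s})
    (ha : ∀ x A, a x = A ↔ x ∈ A.1) (n : ℕ) :
    dynH f μ s n = -∑ w : Fin n → {A // A ∈ s},
      μ.real (cyl f a n w) * Real.log (μ.real (cyl f a n w)) := by
  unfold dynH
  have : ∀ w : Fin n → {A // A ∈ s}, (⋂ i : Fin n, f^[(i : ℕ)] ⁻¹' ((w i : Set X)))
      = cyl f a n w := by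
    intro w; ext x; simp [cyl, ha]
  simp_rw [this]
  rfl

lemma integral_word {ι : Type*} [Fintype ι] [DecidableEq ι] (f : X → X) (hf : Measurable f)
    (a : X → ι) (ha : ∀ i, MeasurableSet (a ⁻¹' {i})) (μ : Measure X) [IsProbabilityMeasure μ]
    (n : ℕ) (F : (Fin n → ι) → ℝ) :
    Integrable (fun x => F (fun i => a (f^[(i : ℕ)] x))) μ ∧
    ∫ x, F (fun i => a (f^[(i : ℕ)] x)) ∂μ = ∑ w, μ.real (cyl f a n w) * F w := by
  have e : (fun x => F (fun i : Fin n => a (f^[(i : ℕ)] x))) =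
      fun x => ∑ w, (cyl f a n w).indicator (fun _ => F w) x := by
    funext x
    rw [Finset.sum_eq_single (fun i : Fin n => a (f^[(i : ℕ)] x))]
    · rw [Set.indicator_of_mem]; exact fun i => rfl
    · intro w _ hw
      rw [Set.indicator_of_notMem]
      exact fun h => hw (funext fun i => (h i).symm)
    · simp
  have hi : ∀ w ∈ (Finset.univ : Finset (Fin n → ι)),
      Integrable (fun x => (cyl f a n w).indicator (fun _ => F w) x) μ := fun w _ =>
    (integrable_const _).indicator (measurableSet_cyl f hf a ha n w)
  rw [e]
  refine ⟨integrable_finsetSum _ hi, ?_⟩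
  rw [integral_finsetSum _ hi]
  refine Finset.sum_congr rfl fun w _ => ?_
  rw [integral_indicator_const _ (measurableSet_cyl f hf a ha n w), smul_eq_mul]

lemma sum_cyl {ι : Type*} [Fintype ι] [DecidableEq ι] (f : X → X) (hf : Measurable f)
    (a : X → ι) (ha : ∀ i, MeasurableSet (a ⁻¹' {i})) (μ : Measure X) [IsProbabilityMeasure μ]
    (n : ℕ) : ∑ w, μ.real (cyl f a n w) = 1 := by
  have := (integral_word f hf a ha μ n (fun _ => 1)).2
  simpa using this.symm

lemma integral_birk (f : X → X) (μ : Measure X) [IsProbabilityMeasure μ]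
    (hinv : MeasurePreserving f μ μ) (g : X → ℝ) (hg : Integrable g μ) (L : ℕ) :
    Integrable (birkhoffSum f g L) μ ∧ ∫ x, birkhoffSum f g L x ∂μ = L * ∫ x, g x ∂μ := by
  have hi : ∀ j ∈ Finset.range L, Integrable (fun x => g (f^[j] x)) μ := fun j _ =>
    (hinv.iterate j).integrable_comp_of_integrable hg
  have e : birkhoffSum f g L = fun x => ∑ j ∈ Finset.range L, g (f^[j] x) := rfl
  rw [e]
  refine ⟨integrable_finsetSum _ hi, ?_⟩
  rw [integral_finsetSum _ hi]
  have : ∀ j ∈ Finset.range L, ∫ x, g (f^[j] x) ∂μ = ∫ x, g x ∂μ := by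
    intro j _
    have hp := hinv.iterate j
    conv_rhs => rw [← hp.map_eq]
    rw [integral_map hp.aemeasurable]
    rw [hp.map_eq]; exact hg.aestronglyMeasurable
  rw [Finset.sum_congr rfl this]
  simp

lemma entropy_le_integral {ι : Type*} [Fintype ι] [DecidableEq ι] (f : X → X) (hf : Measurable f)
    (a : X → ι) (ha : ∀ i, MeasurableSet (a ⁻¹' {i})) (μ : Measure X) [IsProbabilityMeasure μ]
    (n : ℕ) (q : (Fin n → ι) → ℝ) (hq0 : ∀ w, 0 ≤ q w) (hq1 : ∑ w, q w ≤ 1)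
    (F : X → ℝ) (hF : Integrable F μ)
    (h : ∀ x, Real.exp (-F x) ≤ q (fun i => a (f^[(i : ℕ)] x))) :
    -∑ w, μ.real (cyl f a n w) * Real.log (μ.real (cyl f a n w)) ≤ ∫ x, F x ∂μ := by
  refine (gibbs _ q (fun _ => measureReal_nonneg) (sum_cyl f hf a ha μ n) hq0 hq1 ?_).trans ?_
  · intro w hw
    have : (cyl f a n w).Nonempty := by
      by_contra hne
      rw [Set.not_nonempty_iff_eq_empty] at hne
      simp [hne] at hw
    obtain ⟨x, hx⟩ := this
    have h1 := h x
    rw [show (fun i : Fin n => a (f^[(i : ℕ)] x)) = w from funext hx] at h1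
    exact (Real.exp_pos _).trans_le h1
  · obtain ⟨h1, h2⟩ := integral_word f hf a ha μ n (fun w => -Real.log (q w))
    rw [← h2]
    refine integral_mono h1 hF fun x => ?_
    have := Real.log_le_log (Real.exp_pos _) (h x)
    rw [Real.log_exp] at this
    dsimp only
    linarith

end LowerBound

section Lower2

variable {X : Type*} [MetricSpace X] [CompactSpace X] [MeasurableSpace X] [BorelSpace X]

lemma isOpen_bowenBall (f : X → X) (hf : Continuous f) (x : X) (n : ℕ) (ε : ℝ) :
    IsOpen (bowenBall f x n ε) := by
  have : bowenBall f x n ε = ⋂ i : Fin n, {y | dist (f^[(i : ℕ)] x) (f^[(i : ℕ)] y) < ε} := by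
    ext y
    simp only [bowenBall, Set.mem_ofPred_eq, Set.mem_iInter]
    exact ⟨fun h i => h i i.2, fun h i hi => h ⟨i, hi⟩⟩
  rw [this]
  refine isOpen_iInter_of_finite fun i => ?_
  exact isOpen_lt (continuous_const.dist (hf.iterate i)) continuous_const

lemma exists_cover (f : X → X) (Z : Set X) (hZ : Z.Nonempty) (α ε : ℝ)
    (hm : mZ f (fun _ => 0) Z α ε = 0) (N : ℕ) :
    ∃ c : ℕ → X × ℕ, 0 ≤ α ∧ (∀ i, N ≤ (c i).2) ∧ (Z ⊆ ⋃ i, bowenBall f (c i).1 (c i).2 ε) ∧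
      ∀ T : ℕ, ∑ i : Fin T, Real.exp (-α * (c i).2) ≤ 1 := by
  have h1 : Mcov f (fun _ => 0) Z α N ε < 1 := by
    have : Mcov f (fun _ => 0) Z α N ε ≤ mZ f (fun _ => 0) Z α ε := le_iSup
      (fun N => Mcov f (fun _ => 0) Z α N ε) N
    rw [hm] at this
    exact this.trans_lt one_pos
  unfold Mcov at h1
  rw [iInf_lt_iff] at h1
  obtain ⟨c, h1⟩ := h1
  rw [iInf_lt_iff] at h1
  obtain ⟨⟨hc1, hc2⟩, h1⟩ := h1
  have hb : ∀ n x, birk f (fun _ => (0 : ℝ)) n x = 0 := fun n x => by simp [birk]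
  simp only [hb, add_zero] at h1
  refine ⟨c, ?_, hc1, hc2, ?_⟩
  · by_contra hα
    have h2 := ENNReal.le_tsum (f := fun i => ENNReal.ofReal (Real.exp (-α * ((c i).2 : ℝ)))) 0
    have h3 : (1 : ℝ≥0∞) ≤ ENNReal.ofReal (Real.exp (-α * ((c 0).2 : ℝ))) := by
      rw [ENNReal.one_le_ofReal, Real.one_le_exp_iff]
      have : 0 ≤ -α := by linarith
      positivity
    exact absurd h1 (not_lt.2 (h3.trans h2))
  · intro T
    have h2 := ENNReal.sum_le_tsum (f := fun i => ENNReal.ofReal (Real.exp (-α * ((c i).2 : ℝ))))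
      (Finset.range T)
    rw [← ENNReal.ofReal_sum_of_nonneg (fun _ _ => (Real.exp_pos _).le)] at h2
    have h3 := h2.trans h1.le
    rw [ENNReal.ofReal_le_one] at h3
    rwa [Fin.sum_univ_eq_sum_range (fun i => Real.exp (-α * ((c i).2 : ℝ))) T]

lemma exists_sep {ι : Type*} [Fintype ι] [Nonempty ι] (K : ι → Set X) (hK : ∀ i, IsClosed (K i))
    (hd : ∀ i j, i ≠ j → Disjoint (K i) (K j)) :
    ∃ ε : ℝ, 0 < ε ∧ ∀ i j, ∀ x ∈ K i, ∀ y ∈ K j, dist x y < 2 * ε → i = j := by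
  have h : ∀ p : ι × ι, ∃ r : ℝ, 0 < r ∧ ∀ x ∈ K p.1, ∀ y ∈ K p.2, dist x y < r → p.1 = p.2 := by
    intro p
    by_cases hp : p.1 = p.2
    · exact ⟨1, one_pos, fun _ _ _ _ _ => hp⟩
    · obtain ⟨r, hr, h⟩ := Metric.exists_pos_forall_lt_edist (hK p.1).isCompact (hK p.2) (hd _ _ hp)
      refine ⟨r, by exact_mod_cast hr, fun x hx y hy hxy => ?_⟩
      have h1 := h x hx y hy
      rw [edist_dist, ← ENNReal.ofReal_coe_nnreal,
        ENNReal.ofReal_lt_ofReal_iff_of_nonneg r.coe_nonneg] at h1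
      linarith
  choose r hr h using h
  obtain ⟨p0, hp0⟩ := Finite.exists_min r
  refine ⟨r p0 / 2, by linarith [hr p0], fun i j x hx y hy hxy => ?_⟩
  exact h (i, j) x hx y hy (by linarith [hp0 (i, j)])

lemma dynH_linear_bound (f : X → X) (hf : Continuous f) (μ : Measure X) [IsProbabilityMeasure μ]
    (hinv : MeasurePreserving f μ μ) (s : Finset (Set X)) (hs : IsFinPartition s)
    (η : ℝ) (hη : 0 < η) :
    ∃ ε : ℝ, 0 < ε ∧ ∀ Z : Set X, MeasurableSet Z → μ Z = 1 → ∀ α : ℝ,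
      mZ f (fun _ => 0) Z α ε = 0 → ∃ C : ℝ, ∀ L : ℕ, dynH f μ s L ≤ (α + η) * L + C := by
  classical
  obtain ⟨a, ha⟩ := exists_symbol hs
  have hX : Nonempty X := μ.nonempty_of_neZero
  obtain ⟨x0⟩ := hX
  have : Nonempty {A // A ∈ s} := ⟨a x0⟩
  have haA : ∀ A : {A // A ∈ s}, a ⁻¹' {A} = A.1 := fun A => by ext x; simp [ha]
  have ham : ∀ A : {A // A ∈ s}, MeasurableSet (a ⁻¹' {A}) := fun A => by
    rw [haA]; exact hs.1 _ A.2
  set k : ℝ := ((Fintype.card {A // A ∈ s} : ℕ) : ℝ) with hkdef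
  have hk : 1 ≤ k := by
    rw [hkdef]; exact_mod_cast Fintype.card_pos
  set κ := η / 4 with hκdef
  have hκ : 0 < κ := by positivity
  have hlt : Real.exp (-κ) < 1 := Real.exp_lt_one_iff.2 (by linarith)
  set D := Real.log (k / (1 - Real.exp (-κ))) with hD
  have hD0 : 0 ≤ D := by
    apply Real.log_nonneg
    rw [le_div_iff₀ (by linarith)]
    linarith [Real.exp_pos (-κ)]
  set δ := η / (4 * (D + 1) * k) with hδ
  have hδ0 : 0 < δ := by positivity
  have hKex : ∀ A : {A // A ∈ s}, ∃ K ⊆ A.1, IsClosed K ∧ μ (A.1 \ K) < ENNReal.ofReal δ := by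
    intro A
    exact (hs.1 _ A.2).exists_isClosed_sdiff_lt (measure_ne_top _ _)
      (by simpa using hδ0)
  choose K hKA hKc hKμ using hKex
  set K0 : Set X := ⋃ A : {A // A ∈ s}, (A.1 \ K A) with hK0
  have hK0m : MeasurableSet K0 :=
    MeasurableSet.iUnion fun A => (hs.1 _ A.2).diff (hKc A).measurableSet
  have hK0μ : μ.real K0 * D ≤ η / 4 := by
    have h1 : μ.real K0 ≤ ∑ A : {A // A ∈ s}, μ.real (A.1 \ K A) := measureReal_iUnion_fintype_le _
    have h2 : ∑ A : {A // A ∈ s}, μ.real (A.1 \ K A) ≤ ∑ A : {A // A ∈ s}, δ := by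
      refine Finset.sum_le_sum fun A _ => ?_
      exact ENNReal.toReal_le_of_le_ofReal hδ0.le (hKμ A).le
    have h3 : μ.real K0 ≤ k * δ := by
      refine h1.trans (h2.trans (le_of_eq ?_))
      simp [hkdef]
    calc μ.real K0 * D ≤ k * δ * (D + 1) := by
          apply mul_le_mul h3 (by linarith) hD0 (by positivity)
      _ = η / 4 := by rw [hδ]; field_simp
  have hKmem : ∀ x, x ∉ K0 → x ∈ K (a x) := by
    intro x hx
    by_contra hn
    apply hx
    rw [hK0, Set.mem_iUnion]
    exact ⟨a x, (ha x (a x)).1 rfl, hn⟩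
  obtain ⟨ε, hε, hsep⟩ := exists_sep K hKc (fun i j hij =>
    (hs.2.2 i.2 j.2 (fun h => hij (Subtype.ext h))).mono (hKA i) (hKA j))
  refine ⟨ε, hε, fun Z hZm hZ α hm => ?_⟩
  have hZne : Z.Nonempty := by
    by_contra hne
    rw [Set.not_nonempty_iff_eq_empty] at hne
    simp [hne] at hZ
  obtain ⟨N, hN⟩ := exists_nat_gt (Real.log 2 / (η / 4))
  have hl2 : 0 < Real.log 2 := Real.log_pos (by norm_num)
  have hN0 : (0 : ℝ) < N := lt_trans (by positivity) hN
  have hNη : Real.log 2 / N ≤ η / 4 := by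
    rw [div_lt_iff₀ (by positivity)] at hN
    rw [div_le_iff₀ hN0]; linarith
  obtain ⟨c, hα, hcN, hcov, hcs⟩ := exists_cover f Z hZne α ε hm N
  set l2k := Real.log (2 * k) with hl2k
  have hl2k0 : 0 ≤ l2k := Real.log_nonneg (by linarith)
  have hT : ∃ T : ℕ, μ.real (⋃ i : Fin T, bowenBall f (c i).1 (c i).2 ε)ᶜ * l2k ≤ η / 4 := by
    set U : ℕ → Set X := fun T => ⋃ i : Fin T, bowenBall f (c i).1 (c i).2 ε with hU
    have hUo : ∀ T, MeasurableSet (U T) := fun T =>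
      MeasurableSet.iUnion fun i => (isOpen_bowenBall f hf _ _ _).measurableSet
    have hmono : Monotone U := by
      intro S T hST x hx
      rw [hU, Set.mem_iUnion] at hx ⊢
      obtain ⟨i, hi⟩ := hx
      exact ⟨⟨i, by omega⟩, hi⟩
    have hUZ : Z ⊆ ⋃ T, U T := by
      intro x hx
      obtain ⟨i, hi⟩ := Set.mem_iUnion.1 (hcov hx)
      exact Set.mem_iUnion.2 ⟨i + 1, Set.mem_iUnion.2 ⟨⟨i, by omega⟩, hi⟩⟩
    have hU1 : μ (⋃ T, U T) = 1 := le_antisymm prob_le_one (hZ ▸ measure_mono hUZ)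
    have ht := tendsto_measure_iUnion_atTop (μ := μ) hmono
    rw [hU1] at ht
    have ht' : Tendsto (fun T => μ.real (U T)) atTop (nhds 1) := by
      have := (ENNReal.tendsto_toReal ENNReal.one_ne_top).comp ht
      rw [ENNReal.toReal_one] at this
      exact this
    have hev := ht'.eventually (lt_mem_nhds (show 1 - η / (4 * (l2k + 1)) < 1 by
      have : 0 < η / (4 * (l2k + 1)) := by positivity
      linarith))
    obtain ⟨T, hT⟩ := hev.exists
    refine ⟨T, ?_⟩
    rw [probReal_compl_eq_one_sub (hUo T)]
    calc (1 - μ.real (U T)) * l2k ≤ (η / (4 * (l2k + 1))) * (l2k + 1) := by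
          apply mul_le_mul (by linarith) (by linarith) hl2k0 (by positivity)
      _ = η / 4 := by field_simp
  obtain ⟨T, hT⟩ := hT
  set G : Fin T → Set X := fun i => bowenBall f (c i).1 (c i).2 ε with hG
  have hGm : MeasurableSet (⋃ i, G i)ᶜ :=
    (MeasurableSet.iUnion fun i => (isOpen_bowenBall f hf _ _ _).measurableSet).compl
  set len : Fin T → ℕ := fun i => (c i).2 with hlen
  set ref : X → {A // A ∈ s} := fun z =>
    if h : ∃ A, ∃ y ∈ K A, dist z y < ε then h.choose else a z with href
  have href' : ∀ z y, y ∉ K0 → dist z y < ε → a y = ref z := by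
    intro z y hy hzy
    have hex : ∃ A, ∃ y ∈ K A, dist z y < ε := ⟨a y, y, hKmem y hy, hzy⟩
    rw [href]
    simp only [hex, dite_true]
    obtain ⟨y', hy', hd'⟩ := hex.choose_spec
    refine hsep _ _ y (hKmem y hy) y' hy' ?_
    have := dist_triangle_left y y' z
    linarith
  set r : Fin T → ℕ → {A // A ∈ s} := fun i j => ref (f^[j] (c i).1) with hr
  set M := Finset.univ.sup len with hM
  set g : X → ℝ := fun x => Real.log 2 / N + κ + K0.indicator (fun _ => D) x +
    ((⋃ i, G i)ᶜ).indicator (fun _ => l2k) x with hg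
  have hi1 : ∀ x, 0 ≤ K0.indicator (fun _ => D) x := fun x =>
    Set.indicator_nonneg (fun _ _ => hD0) x
  have hi2 : ∀ x, 0 ≤ ((⋃ i, G i)ᶜ).indicator (fun _ => l2k) x := fun x =>
    Set.indicator_nonneg (fun _ _ => hl2k0) x
  have hl2N : 0 ≤ Real.log 2 / N := by positivity
  have hg0 : ∀ x, 0 ≤ g x := fun x => by have := hi1 x; have := hi2 x; simp only [hg]; positivity
  have hgi : Integrable g μ := by
    refine ((integrable_const _).add ((integrable_const _).indicator hK0m)).add
      ((integrable_const _).indicator hGm)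
  have hgint : ∫ x, g x ∂μ ≤ η := by
    have e1 : ∫ x, g x ∂μ = Real.log 2 / N + κ + μ.real K0 * D + μ.real (⋃ i, G i)ᶜ * l2k := by
      simp only [hg]
      rw [integral_add ((integrable_const _).add ((integrable_const _).indicator hK0m))
        ((integrable_const _).indicator hGm), integral_add (integrable_const _)
        ((integrable_const _).indicator hK0m), integral_indicator_const _ hK0m,
        integral_indicator_const _ hGm]
      simp
    rw [e1]
    linarith
  refine ⟨M * l2k, fun L => ?_⟩
  rw [dynH_eq f μ a ha]
  obtain ⟨hbi, hbe⟩ := integral_birk f μ hinv g hgi L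
  have hFi : Integrable (fun x => α * L + birkhoffSum f g L x + (min L M : ℕ) * l2k) μ :=
    ((integrable_const _).add hbi).add (integrable_const _)
  have main := entropy_le_integral f hf.measurable a ham μ L
    (fun w => qrec (blen len) (bwt κ α len r) L (wext (a x0) w))
    (fun w => qrec_nonneg _ _ (bwt_nonneg κ α hκ len r) _ _)
    (bwt_sum (a x0) κ α len r (hcs T) L hκ)
    (fun x => α * L + birkhoffSum f g L x + (min L M : ℕ) * l2k) hFi ?_
  · refine main.trans ?_
    have hbi' : Integrable (fun x => α * L + birkhoffSum f g L x) μ := (integrable_const _).add hbi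
    rw [integral_add hbi' (integrable_const _), integral_add (integrable_const _) hbi, hbe]
    simp only [integral_const, probReal_univ, one_smul]
    have e3 : ((min L M : ℕ) : ℝ) ≤ M := by exact_mod_cast min_le_right _ _
    have e4 := mul_le_mul_of_nonneg_right e3 hl2k0
    have e5 := mul_le_mul_of_nonneg_left hgint (Nat.cast_nonneg (α := ℝ) L)
    linarith
  · intro x
    have h1 := q_lower f a κ α hκ hα len r M (fun i => Finset.le_sup (Finset.mem_univ i))
      (fun i => lt_of_lt_of_le (by exact_mod_cast hN0) (hcN i)) G g hg0 ?_ ?_ L x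
    · refine h1.trans (le_of_eq (qrec_congr κ α len r L _ _ fun i hi => ?_))
      simp [wext, hi]
    · intro x hx
      have : x ∈ (⋃ i, G i)ᶜ := by simpa using hx
      simp only [hg, Set.indicator_of_mem this]
      have := hi1 x
      linarith
    · intro i x hx
      refine bwt_lower f a κ α hκ len r G K0 N (by exact_mod_cast hN0) (fun i => hcN i) ?_ g ?_ ?_
        i x hx
      · intro i x hx j hj hn
        exact href' _ _ hn (hx j hj)
      · intro x
        have := hi1 x; have := hi2 x
        simp only [hg]; linarith
      · intro x hx
        have := hi2 x
        simp only [hg, Set.indicator_of_mem hx]; linarith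

theorem ksEntropy_le_Pmu (f : X → X) (hf : Continuous f) (μ : Measure X) [IsProbabilityMeasure μ]
    (hinv : MeasurePreserving f μ μ) : ksEntropy f μ ≤ Pmu f (fun _ => 0) μ := by
  unfold ksEntropy
  refine iSup₂_le fun s hs => ?_
  refine EReal.le_of_forall_lt_iff_le.1 fun β hβ => ?_
  obtain ⟨β', h1, h2⟩ := EReal.lt_iff_exists_real_btwn.1 hβ
  have h2' : β' < β := by exact_mod_cast h2
  obtain ⟨ε, hε, h⟩ := dynH_linear_bound f hf μ hinv s hs (β - β') (by linarith)
  have h3 : (⨅ (Z : Set X) (_ : MeasurableSet Z ∧ μ Z = 1), PZeps f (fun _ => 0) Z ε) < β' :=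
    lt_of_le_of_lt (le_iSup₂ (f := fun (ε : ℝ) (_ : 0 < ε) =>
      ⨅ (Z : Set X) (_ : MeasurableSet Z ∧ μ Z = 1), PZeps f (fun _ => 0) Z ε) ε hε) h1
  simp only [PZeps, iInf_lt_iff] at h3
  obtain ⟨Z, ⟨hZm, hZ⟩, α, hm, hα⟩ := h3
  have hα' : α < β' := by exact_mod_cast hα
  obtain ⟨C, hC⟩ := h Z hZm hZ α hm
  have hlim : Tendsto (fun n : ℕ => ((α + (β - β') + C / n : ℝ) : EReal)) atTop
      (nhds ((α + (β - β') : ℝ) : EReal)) := by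
    refine (continuous_coe_real_ereal.tendsto _).comp ?_
    have := (tendsto_const_nhds (x := α + (β - β'))).add (tendsto_const_div_atTop_nhds_zero_nat C)
    simpa using this
  calc _ ≤ atTop.liminf (fun n : ℕ => ((α + (β - β') + C / n : ℝ) : EReal)) := by
        refine liminf_le_liminf ?_
        filter_upwards [eventually_gt_atTop 0] with n hn
        rw [EReal.coe_le_coe_iff]
        have hn' : (0 : ℝ) < n := by exact_mod_cast hn
        rw [div_le_iff₀ hn', add_mul, div_mul_cancel₀ _ hn'.ne']
        exact hC n
    _ = ((α + (β - β') : ℝ) : EReal) := hlim.liminf_eq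
    _ ≤ β := by rw [EReal.coe_le_coe_iff]; linarith

end Lower2

end Paper

namespace Paper

section Upper

lemma exists_rat_cost {V : Type*} [Fintype V] [Nonempty V] (p : V → ℝ) (hp : ∀ v, 0 ≤ p v)
    (hp1 : ∑ v, p v = 1) (c θ : ℝ) (hθ : 0 < θ) (hc : -∑ v, p v * Real.log (p v) < c) :
    ∃ ψ : V → ℚ, (∀ v, (0 : ℝ) ≤ ψ v) ∧ ∑ v, Real.exp (-(ψ v : ℝ)) ≤ Real.exp θ ∧
      ∑ v, p v * (ψ v : ℝ) < c := by
  set γ := c + ∑ v, p v * Real.log (p v) with hγ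
  have hγ0 : 0 < γ := by linarith
  have hV : (0 : ℝ) < Fintype.card V := by exact_mod_cast Fintype.card_pos
  have h : ∀ v, ∃ t : ℚ, (0 : ℝ) ≤ t ∧ Real.exp (-(t : ℝ)) ≤ p v + θ / Fintype.card V ∧
      p v * (t : ℝ) ≤ -(p v * Real.log (p v)) + p v * (γ / 2) := by
    intro v
    rcases (hp v).eq_or_lt with h0 | h0
    · obtain ⟨t, ht⟩ := exists_rat_gt (max 0 (-Real.log (θ / Fintype.card V)))
      refine ⟨t, (le_max_left _ _).trans ht.le, ?_, ?_⟩
      · rw [← h0, zero_add, ← Real.exp_log (show 0 < θ / Fintype.card V by positivity),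
          Real.exp_le_exp]
        have := (le_max_right _ _).trans ht.le
        linarith
      · rw [← h0]; simp
    · have hle : p v ≤ 1 := by
        rw [← hp1]; exact Finset.single_le_sum (fun v _ => hp v) (Finset.mem_univ v)
      obtain ⟨t, ht1, ht2⟩ := exists_rat_btwn
        (show -Real.log (p v) < -Real.log (p v) + γ / 2 by linarith)
      have hlog : Real.log (p v) ≤ 0 := Real.log_nonpos h0.le hle
      refine ⟨t, by linarith, ?_, ?_⟩
      · have : Real.exp (-(t : ℝ)) ≤ p v := by
          conv_rhs => rw [← Real.exp_log h0]
          rw [Real.exp_le_exp]; linarith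
        have : 0 < θ / Fintype.card V := by positivity
        linarith
      · have := mul_le_mul_of_nonneg_left ht2.le h0.le
        linarith
  choose ψ h1 h2 h3 using h
  refine ⟨ψ, h1, ?_, ?_⟩
  · calc _ ≤ ∑ v, (p v + θ / Fintype.card V) := Finset.sum_le_sum fun v _ => h2 v
      _ = θ + 1 := by
        rw [Finset.sum_add_distrib, hp1]
        simp
        field_simp
        ring
      _ ≤ _ := Real.add_one_le_exp θ
  · calc _ ≤ ∑ v, (-(p v * Real.log (p v)) + p v * (γ / 2)) := Finset.sum_le_sum fun v _ => h3 v
      _ = -∑ v, p v * Real.log (p v) + γ / 2 := by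
        rw [Finset.sum_add_distrib, Finset.sum_neg_distrib, ← Finset.sum_mul, hp1, one_mul]
      _ < c := by linarith

lemma ergodic_freq {X : Type*} [MeasurableSpace X] (f : X → X) (ν : Measure X)
    [IsProbabilityMeasure ν] (hν : Ergodic f ν) (φ : X → ℝ) (hφ : Measurable φ)
    (h0 : ∀ x, 0 ≤ φ x) (R : ℝ) (hR : ∀ x, φ x ≤ R) (m : ℕ) (hm : 0 < m) (c : ℝ)
    (hc : ∫ x, φ x ∂ν < c) :
    ∀ᵐ x ∂ν, ∃ᶠ J : ℕ in atTop, birkhoffSum f φ (m * J) x < m * J * c := by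
  have hfm : Measurable f := hν.measurable
  have hφi : Integrable φ ν := by
    refine Integrable.of_bound hφ.aestronglyMeasurable R (Eventually.of_forall fun x => ?_)
    rw [Real.norm_of_nonneg (h0 x)]; exact hR x
  have hbs : ∀ n x, 0 ≤ birkhoffSum f φ n x := fun n x => Finset.sum_nonneg fun _ _ => h0 _
  have hbm : ∀ n, Measurable (birkhoffSum f φ n) := fun n =>
    Finset.measurable_sum _ fun i _ => hφ.comp (hfm.iterate i)
  set u : ℕ → X → ℝ≥0∞ := fun J x =>
    ENNReal.ofReal (birkhoffSum f φ (m * J) x / ((m * J : ℕ) : ℝ)) with hu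
  have hum : ∀ J, Measurable (u J) := fun J => ((hbm _).div_const _).ennreal_ofReal
  set L : X → ℝ≥0∞ := fun x => liminf (fun J => u J x) atTop with hL
  have hLm : Measurable L := Measurable.liminf hum
  have hLf : ∀ x, L (f x) ≤ L x := by
    intro x
    have hz : Tendsto (fun J : ℕ => ENNReal.ofReal (R / ((m * J : ℕ) : ℝ))) atTop (nhds 0) := by
      rw [← ENNReal.ofReal_zero]
      refine (ENNReal.continuous_ofReal.tendsto 0).comp ?_
      have := (tendsto_const_div_atTop_nhds_zero_nat R)
      exact this.comp (tendsto_id.const_mul_atTop' hm)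
    have := ENNReal.liminf_add_of_right_tendsto_zero hz (fun J => u J x)
    rw [hL]
    dsimp only
    rw [← this]
    refine liminf_le_liminf (Eventually.of_forall fun J => ?_)
    have hR0 : 0 ≤ R := (h0 x).trans (hR x)
    simp only [hu, Pi.add_apply]
    rw [← ENNReal.ofReal_add (div_nonneg (hbs _ _) (Nat.cast_nonneg _))
      (div_nonneg hR0 (Nat.cast_nonneg _)), ← add_div]
    refine ENNReal.ofReal_le_ofReal (div_le_div_of_nonneg_right ?_ (Nat.cast_nonneg _))
    have e := birkhoffSum_apply_sub_birkhoffSum f φ (m * J) x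
    have := hR (f^[m * J] x)
    have := h0 x
    linarith
  have hintg0 : 0 ≤ ∫ x, φ x ∂ν := integral_nonneg h0
  have hLint : ∫⁻ x, L x ∂ν ≤ ENNReal.ofReal (∫ x, φ x ∂ν) := by
    refine (lintegral_liminf_le hum).trans ?_
    refine le_of_eq ?_
    have : (fun _ : ℕ => ENNReal.ofReal (∫ x, φ x ∂ν)) =ᶠ[atTop] fun J => ∫⁻ x, u J x ∂ν := by
      filter_upwards [eventually_gt_atTop 0] with J hJ
      obtain ⟨hi, he⟩ := integral_birk f ν hν.toMeasurePreserving φ hφi (m * J)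
      simp only [hu]
      rw [← ofReal_integral_eq_lintegral_ofReal (hi.div_const _)
        (Eventually.of_forall fun x => div_nonneg (hbs _ _) (Nat.cast_nonneg _)),
        integral_div, he]
      congr 1
      have : ((m * J : ℕ) : ℝ) ≠ 0 := by
        have := Nat.mul_pos hm hJ
        exact_mod_cast this.ne'
      field_simp
    rw [← liminf_congr this]
    simp
  have hlt : ∫⁻ x, L x ∂ν < ENNReal.ofReal c :=
    hLint.trans_lt ((ENNReal.ofReal_lt_ofReal_iff_of_nonneg hintg0).2 hc)
  have hAm : MeasurableSet {x | L x < ENNReal.ofReal c} := measurableSet_lt hLm measurable_const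
  have hA : ∀ᵐ x ∂ν, L x < ENNReal.ofReal c := by
    rcases hν.ae_empty_or_univ_of_ae_le_preimage hAm.nullMeasurableSet
      (Eventually.of_forall fun x (hx : L x < _) => show L (f x) < _ from (hLf x).trans_lt hx)
      with h | h
    · exfalso
      have h1 : ∀ᵐ x ∂ν, ENNReal.ofReal c ≤ L x := by
        have := ae_eq_empty.1 h
        rw [ae_iff]
        simpa using this
      have h2 := lintegral_mono_ae h1
      simp at h2
      exact absurd hlt (not_lt.2 h2)
    · exact eventuallyEq_univ.1 h
  filter_upwards [hA] with x hx
  have h1 := frequently_lt_of_liminf_lt (by isBoundedDefault) hx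
  refine (h1.and_eventually (eventually_gt_atTop 0)).mono ?_
  rintro J ⟨h2, hJ⟩
  have hpos : (0 : ℝ) < ((m * J : ℕ) : ℝ) := by exact_mod_cast Nat.mul_pos hm hJ
  simp only [hu] at h2
  rw [ENNReal.ofReal_lt_ofReal_iff_of_nonneg (div_nonneg (hbs _ _) (Nat.cast_nonneg _)),
    div_lt_iff₀ hpos] at h2
  push_cast at h2
  linarith

lemma birk_phase {X : Type*} (f : X → X) (φ : X → ℝ) (m J : ℕ) (x : X) :
    birkhoffSum f φ (m * J) x =
      ∑ s ∈ Finset.range m, ∑ j ∈ Finset.range J, φ (f^[s + j * m] x) := by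
  induction J with
  | zero => simp
  | succ J ih =>
    rw [Nat.mul_succ, birkhoffSum_add, ih]
    simp_rw [Finset.sum_range_succ _ J]
    rw [Finset.sum_add_distrib]
    congr 1
    simp only [birkhoffSum]
    refine Finset.sum_congr rfl fun s _ => ?_
    rw [← Function.iterate_add_apply, Nat.mul_comm]

lemma freq_phase {X : Type*} (f : X → X) (φ : X → ℝ) (m : ℕ) (c : ℝ) (x : X)
    (h : ∃ᶠ J : ℕ in atTop, birkhoffSum f φ (m * J) x < m * J * c) :
    ∃ s : ℕ, ∃ᶠ J : ℕ in atTop, ∑ j ∈ Finset.range J, φ (f^[s + j * m] x) < J * c := by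
  by_contra hcon
  push Not at hcon
  have h2 : ∀ᶠ J : ℕ in atTop, ∀ s ∈ Finset.range m,
      J * c ≤ ∑ j ∈ Finset.range J, φ (f^[s + j * m] x) := by
    rw [Filter.eventually_all_finset]
    intro s _
    have := hcon s
    simpa only [not_frequently, not_lt] using this
  refine h ?_
  filter_upwards [h2] with J hJ
  rw [birk_phase, not_lt]
  have := Finset.sum_le_sum hJ
  simp at this
  linarith

/-- The word of length `n` of the itinerary of `x`. -/
def wd {X ι : Type*} (f : X → X) (a : X → ι) (n : ℕ) (x : X) : Fin n → ι :=
  fun i => a (f^[(i : ℕ)] x)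

lemma measurable_word {X : Type*} [MeasurableSpace X] {ι : Type*} [Fintype ι] [DecidableEq ι]
    (f : X → X) (hf : Measurable f) (a : X → ι) (ha : ∀ i, MeasurableSet (a ⁻¹' {i}))
    (n : ℕ) (F : (Fin n → ι) → ℝ) : Measurable (fun x => F (wd f a n x)) := by
  have e : (fun x => F (wd f a n x)) =
      fun x => ∑ w, (cyl f a n w).indicator (fun _ => F w) x := by
    funext x
    rw [Finset.sum_eq_single (wd f a n x)]
    · rw [Set.indicator_of_mem]; exact fun i => rfl
    · intro w _ hw
      rw [Set.indicator_of_notMem]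
      exact fun h => hw (funext fun i => (h i).symm)
    · simp
  rw [e]
  exact Finset.measurable_sum _ fun w _ =>
    measurable_const.indicator (measurableSet_cyl f hf a ha n w)

lemma card_bound {V : Type*} [Fintype V] (ψ : V → ℝ) (θ : ℝ)
    (hψ : ∑ v, Real.exp (-ψ v) ≤ Real.exp θ) (U : Type*) [Fintype U] (J : ℕ) (c : ℝ)
    (S : Finset (U × (Fin J → V))) (hS : ∀ p ∈ S, ∑ j, ψ (p.2 j) < c) :
    (S.card : ℝ) ≤ Fintype.card U * Real.exp (θ * J + c) := by
  classical
  have h1 : (S.card : ℝ) * Real.exp (-c) ≤ ∑ p ∈ S, ∏ j, Real.exp (-ψ (p.2 j)) := by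
    rw [← nsmul_eq_mul]
    refine Finset.card_nsmul_le_sum _ _ _ fun p hp => ?_
    rw [← Real.exp_sum, Real.exp_le_exp, Finset.sum_neg_distrib]
    linarith [hS p hp]
  have h2 : ∑ p ∈ S, ∏ j, Real.exp (-ψ (p.2 j)) ≤
      ∑ p : U × (Fin J → V), ∏ j, Real.exp (-ψ (p.2 j)) :=
    Finset.sum_le_sum_of_subset_of_nonneg (Finset.subset_univ _)
      (fun p _ _ => Finset.prod_nonneg fun _ _ => (Real.exp_pos _).le)
  have h3 : ∑ p : U × (Fin J → V), ∏ j, Real.exp (-ψ (p.2 j)) =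
      Fintype.card U * (∑ v, Real.exp (-ψ v)) ^ J := by
    rw [Fintype.sum_prod_type]
    have h := Finset.prod_univ_sum (fun _ : Fin J => (Finset.univ : Finset V))
      (fun _ v => Real.exp (-ψ v))
    simp only [Fintype.piFinset_univ] at h
    simp [← h]
  have h4 : (∑ v, Real.exp (-ψ v)) ^ J ≤ Real.exp (θ * J) := by
    rw [mul_comm, Real.exp_nat_mul]
    exact pow_le_pow_left₀ (Finset.sum_nonneg fun _ _ => (Real.exp_pos _).le) hψ J
  have h5 : (S.card : ℝ) * Real.exp (-c) ≤ Fintype.card U * Real.exp (θ * J) := by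
    rw [h3] at h2
    exact h1.trans (h2.trans (mul_le_mul_of_nonneg_left h4 (Nat.cast_nonneg _)))
  rw [Real.exp_neg, ← div_eq_mul_inv, div_le_iff₀ (Real.exp_pos _)] at h5
  rw [Real.exp_add]
  linarith

end Upper

end Paper

namespace Paper

section Upper2

variable {X : Type*} [MetricSpace X]

lemma Mcov_le_of_pair (f : X → X) (Z : Set X) (α : ℝ) (N : ℕ) (ε : ℝ) (c : ℕ → ℕ → X × ℕ)
    (h1 : ∀ i j, N ≤ (c i j).2) (h2 : ∀ x ∈ Z, ∃ i j, x ∈ bowenBall f (c i j).1 (c i j).2 ε) :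
    Mcov f (fun _ => 0) Z α N ε ≤
      ∑' i, ∑' j, ENNReal.ofReal (Real.exp (-α * ((c i j).2 : ℝ))) := by
  have hb : ∀ n x, birk f (fun _ => (0 : ℝ)) n x = 0 := fun n x => by simp [birk]
  unfold Mcov
  refine (iInf₂_le (fun i => c (Nat.unpair i).1 (Nat.unpair i).2) ⟨fun i => h1 _ _, ?_⟩).trans ?_
  swap
  · intro x hx
    obtain ⟨i, j, hij⟩ := h2 x hx
    refine Set.mem_iUnion.2 ⟨Nat.pair i j, ?_⟩
    simp only [Nat.unpair_pair]
    exact hij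
  · simp only [hb, add_zero]
    rw [← ENNReal.tsum_prod (f := fun i j => ENNReal.ofReal (Real.exp (-α * ((c i j).2 : ℝ))))]
    rw [← Equiv.tsum_eq Nat.pairEquiv.symm]
    exact le_rfl

lemma mZ_iUnion (f : X → X) (α ε : ℝ) (Z : ℕ → Set X)
    (h : ∀ i, mZ f (fun _ => 0) (Z i) α ε = 0) : mZ f (fun _ => 0) (⋃ i, Z i) α ε = 0 := by
  have hb : ∀ n x, birk f (fun _ => (0 : ℝ)) n x = 0 := fun n x => by simp [birk]
  unfold mZ
  refine le_antisymm (iSup_le fun N => ?_) zero_le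
  refine le_of_forall_pos_le_add fun e he => ?_
  rw [zero_add]
  obtain ⟨e', he', hs⟩ := ENNReal.exists_pos_sum_of_countable' he.ne' ℕ
  have : ∀ i, ∃ c : ℕ → X × ℕ, (∀ j, N ≤ (c j).2) ∧
      Z i ⊆ ⋃ j, bowenBall f (c j).1 (c j).2 ε ∧
      ∑' j, ENNReal.ofReal (Real.exp (-α * ((c j).2 : ℝ))) < e' i := by
    intro i
    have h1 : Mcov f (fun _ => 0) (Z i) α N ε < e' i := by
      have : Mcov f (fun _ => 0) (Z i) α N ε ≤ mZ f (fun _ => 0) (Z i) α ε := le_iSup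
        (fun N => Mcov f (fun _ => 0) (Z i) α N ε) N
      rw [h i] at this
      exact this.trans_lt (he' i)
    unfold Mcov at h1
    rw [iInf_lt_iff] at h1
    obtain ⟨c, h1⟩ := h1
    rw [iInf_lt_iff] at h1
    obtain ⟨⟨hc1, hc2⟩, h1⟩ := h1
    simp only [hb, add_zero] at h1
    exact ⟨c, hc1, hc2, h1⟩
  choose c hc1 hc2 hc3 using this
  refine (Mcov_le_of_pair f _ α N ε c hc1 ?_).trans ?_
  · intro x hx
    obtain ⟨i, hi⟩ := Set.mem_iUnion.1 hx
    exact ⟨i, Set.mem_iUnion.1 (hc2 i hi)⟩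
  · exact (ENNReal.tsum_le_tsum fun i => (hc3 i).le).trans hs.le

/-- Points whose block costs are infinitely often small along the phase `s`. -/
def goodSet {ι : Type*} (f : X → X) (a : X → ι) (s m : ℕ) (ψ : (Fin m → ι) → ℝ) (b : ℝ) : Set X :=
  {x | ∃ᶠ J : ℕ in atTop, ∑ j ∈ Finset.range J, ψ (wd f a m (f^[s + j * m] x)) < J * (m * b)}

lemma mZ_goodSet [Nonempty X] {ι : Type*} [Fintype ι] [DecidableEq ι] (f : X → X) (a : X → ι)
    (ε : ℝ) (ha : ∀ x y, a x = a y → dist x y < ε) (s m : ℕ) (hm : 0 < m)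
    (ψ : (Fin m → ι) → ℝ) (b θ α : ℝ) (hb : 0 ≤ b) (hθ : 0 ≤ θ)
    (hψ : ∑ v, Real.exp (-ψ v) ≤ Real.exp θ) (hα : θ < m * (α - b)) :
    mZ f (fun _ => 0) (goodSet f a s m ψ b) α ε = 0 := by
  classical
  have hm' : (0 : ℝ) < m := by exact_mod_cast hm
  have hα0 : 0 < α := by
    by_contra h
    have : (m : ℝ) * (α - b) ≤ 0 := mul_nonpos_of_nonneg_of_nonpos hm'.le (by linarith)
    linarith
  obtain ⟨x0⟩ := ‹Nonempty X›
  set A : ℝ≥0∞ := ENNReal.ofReal (Real.exp (-α)) with hA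
  have hA1 : A < 1 := by
    rw [hA, ENNReal.ofReal_lt_one, Real.exp_lt_one_iff]; linarith
  have hterm : ∀ n : ℕ, ENNReal.ofReal (Real.exp (-α * (n : ℝ))) = A ^ n := by
    intro n
    rw [mul_comm, Real.exp_nat_mul, ENNReal.ofReal_pow (Real.exp_pos _).le]
  set R : ℝ≥0∞ := ENNReal.ofReal (Real.exp (θ + m * b - m * α)) with hR
  have hR1 : R < 1 := by
    rw [hR, ENNReal.ofReal_lt_one, Real.exp_lt_one_iff]; linarith
  let code : (J : ℕ) → X → (Fin s → ι) × (Fin J → (Fin m → ι)) := fun J x =>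
    (wd f a s x, fun j => wd f a m (f^[s + j * m] x))
  let S : (J : ℕ) → Finset ((Fin s → ι) × (Fin J → (Fin m → ι))) := fun J =>
    Finset.univ.filter fun p => ∑ j, ψ (p.2 j) < J * (m * b)
  let pt : (J : ℕ) → (Fin s → ι) × (Fin J → (Fin m → ι)) → X := fun J p =>
    if h : ∃ x, code J x = p then h.choose else x0
  have hpt : ∀ J x, code J (pt J (code J x)) = code J x := by
    intro J x
    have h : ∃ y, code J y = code J x := ⟨x, rfl⟩
    simp only [pt, h, dite_true]
    exact h.choose_spec
  have hball : ∀ J x, x ∈ bowenBall f (pt J (code J x)) (s + m * J) ε := by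
    intro J x t ht
    have hc := hpt J x
    set y := pt J (code J x)
    refine ha _ _ ?_
    by_cases hts : t < s
    · exact congrFun (congrArg Prod.fst hc) ⟨t, hts⟩
    · have hj : (t - s) / m < J := by
        rw [Nat.div_lt_iff_lt_mul hm, Nat.mul_comm]; omega
      have h1 := congrFun (congrFun (congrArg Prod.snd hc) ⟨(t - s) / m, hj⟩)
        ⟨(t - s) % m, Nat.mod_lt _ hm⟩
      simp only [code, wd, ← Function.iterate_add_apply] at h1
      have h2 : (t - s) % m + (s + (t - s) / m * m) = t := by
        have := Nat.mod_add_div (t - s) m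
        rw [Nat.mul_comm ((t - s) / m) m]
        omega
      rwa [h2] at h1
  have hcard : ∀ J, ((S J).card : ℝ≥0∞) * A ^ (s + m * J) ≤
      (Fintype.card (Fin s → ι) : ℝ≥0∞) * R ^ J := by
    intro J
    have h1 := card_bound ψ θ hψ (Fin s → ι) J (J * (m * b)) (S J) (fun p hp => by
      simpa [S] using hp)
    have h2 : ((S J).card : ℝ≥0∞) ≤ (Fintype.card (Fin s → ι) : ℝ≥0∞) *
        ENNReal.ofReal (Real.exp (θ * J + J * (m * b))) := by
      rw [← ENNReal.ofReal_natCast, ← ENNReal.ofReal_natCast (Fintype.card (Fin s → ι)),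
        ← ENNReal.ofReal_mul (Nat.cast_nonneg _)]
      exact ENNReal.ofReal_le_ofReal h1
    calc _ ≤ (Fintype.card (Fin s → ι) : ℝ≥0∞) *
        ENNReal.ofReal (Real.exp (θ * J + J * (m * b))) * A ^ (m * J) := by
          refine mul_le_mul' h2 ?_
          exact pow_le_pow_right_of_le_one' hA1.le (by omega)
      _ = _ := by
        rw [mul_assoc]
        congr 1
        rw [← hterm, ← ENNReal.ofReal_mul (Real.exp_pos _).le, ← Real.exp_add, hR,
          ← ENNReal.ofReal_pow (Real.exp_pos _).le, ← Real.exp_nat_mul]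
        congr 2
        push_cast
        ring
  have hAR : ∀ J, A ^ (s + m * J) ≤ R ^ J := by
    intro J
    calc A ^ (s + m * J) ≤ A ^ (m * J) := pow_le_pow_right_of_le_one' hA1.le (by omega)
      _ = (A ^ m) ^ J := by rw [pow_mul]
      _ ≤ R ^ J := by
        refine pow_le_pow_left' ?_ J
        rw [← hterm, hR]
        refine ENNReal.ofReal_le_ofReal ?_
        rw [Real.exp_le_exp]
        have : 0 ≤ (m : ℝ) * b := by positivity
        linarith
  set C : ℝ≥0∞ := (Fintype.card (Fin s → ι) : ℝ≥0∞) + (1 - A)⁻¹ with hC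
  have hCtop : C ≠ ⊤ := by
    rw [hC]
    refine ENNReal.add_ne_top.2 ⟨ENNReal.natCast_ne_top _, ?_⟩
    exact ENNReal.inv_ne_top.2 (tsub_pos_of_lt hA1).ne'
  have key : ∀ N J0, N ≤ J0 →
      Mcov f (fun _ => 0) (goodSet f a s m ψ b) α N ε ≤ C * R ^ J0 * (1 - R)⁻¹ := by
    intro N J0 hJ0
    let c : ℕ → ℕ → X × ℕ := fun J' l =>
      if h : l < (S (J0 + J')).card then
        (pt (J0 + J') ((S (J0 + J')).equivFin.symm ⟨l, h⟩).1, s + m * (J0 + J'))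
      else (x0, s + m * (J0 + J') + l)
    have hmJ : ∀ J, J ≤ m * J := fun J => Nat.le_mul_of_pos_left J hm
    refine (Mcov_le_of_pair f _ α N ε c ?_ ?_).trans ?_
    · intro i l
      have := hmJ (J0 + i)
      simp only [c]
      split_ifs
      · show N ≤ s + m * (J0 + i); omega
      · show N ≤ s + m * (J0 + i) + l; omega
    · intro x hx
      obtain ⟨J, hJ, hlt⟩ := frequently_atTop.1 hx J0
      obtain ⟨J', rfl⟩ := Nat.exists_eq_add_of_le hJ
      have hmem : code (J0 + J') x ∈ S (J0 + J') := by
        simp only [S, Finset.mem_filter, Finset.mem_univ, true_and, code]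
        rw [Fin.sum_univ_eq_sum_range (fun j => ψ (wd f a m (f^[s + j * m] x))) (J0 + J')]
        exact hlt
      set l := (S (J0 + J')).equivFin ⟨_, hmem⟩ with hl
      refine ⟨J', l, ?_⟩
      have : c J' l = (pt (J0 + J') (code (J0 + J') x), s + m * (J0 + J')) := by
        simp only [c, l.2, dite_true]
        simp [hl]
      rw [this]
      exact hball _ _
    · have hin : ∀ J', ∑' l, ENNReal.ofReal (Real.exp (-α * ((c J' l).2 : ℝ))) ≤
          C * R ^ J0 * R ^ J' := by
        intro J'
        have h1 : ∀ l, ENNReal.ofReal (Real.exp (-α * ((c J' l).2 : ℝ))) ≤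
            (if l ∈ Finset.range (S (J0 + J')).card then A ^ (s + m * (J0 + J')) else 0) +
              A ^ (s + m * (J0 + J')) * A ^ l := by
          intro l
          rw [hterm]
          simp only [c, Finset.mem_range]
          split_ifs with hl
          · exact le_self_add
          · rw [zero_add, ← pow_add]
        refine (ENNReal.tsum_le_tsum h1).trans ?_
        rw [ENNReal.tsum_add, ENNReal.tsum_mul_left, ENNReal.tsum_geometric]
        have h2 : ∑' l, (if l ∈ Finset.range (S (J0 + J')).card then A ^ (s + m * (J0 + J')) else 0)
            = ((S (J0 + J')).card : ℝ≥0∞) * A ^ (s + m * (J0 + J')) := by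
          rw [tsum_eq_sum (s := Finset.range (S (J0 + J')).card) (fun l hl => if_neg hl)]
          rw [Finset.sum_congr rfl (fun l hl => if_pos hl)]
          simp
        rw [h2, mul_assoc, ← pow_add, hC, add_mul]
        refine add_le_add (hcard _) ?_
        rw [mul_comm]
        exact mul_le_mul' le_rfl (hAR _)
      refine (ENNReal.tsum_le_tsum hin).trans ?_
      rw [ENNReal.tsum_mul_left, ENNReal.tsum_geometric]
  unfold mZ
  refine le_antisymm (iSup_le fun N => ?_) zero_le
  have hlim : Tendsto (fun J0 : ℕ => C * R ^ J0 * (1 - R)⁻¹) atTop (nhds 0) := by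
    have h1 := ENNReal.tendsto_pow_atTop_nhds_zero_of_lt_one hR1
    have h2 := ENNReal.Tendsto.const_mul h1 (Or.inr hCtop)
    have h3 := ENNReal.Tendsto.mul_const (b := (1 - R)⁻¹) h2
      (Or.inr (ENNReal.inv_ne_top.2 (tsub_pos_of_lt hR1).ne'))
    simpa using h3
  refine ge_of_tendsto hlim ?_
  filter_upwards [eventually_ge_atTop N] with J0 hJ0
  exact key N J0 hJ0

end Upper2

section Upper3

variable {X : Type*} [MetricSpace X] [CompactSpace X] [MeasurableSpace X] [BorelSpace X]

lemma exists_small_partition (ε : ℝ) (hε : 0 < ε) :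
    ∃ s : Finset (Set X), IsFinPartition s ∧ ∀ A ∈ s, ∀ x ∈ A, ∀ y ∈ A, dist x y < ε := by
  classical
  obtain ⟨t, -, htf, ht⟩ := finite_cover_balls_of_compact (isCompact_univ (X := X))
    (half_pos hε)
  obtain ⟨t, rfl⟩ := htf.exists_finset_coe
  let B : ℕ → Set X := fun i =>
    if h : i < t.card then Metric.ball (t.equivFin.symm ⟨i, h⟩).1 (ε / 2) else ∅
  have hBm : ∀ i, MeasurableSet (B i) := by
    intro i
    simp only [B]
    split_ifs
    · exact Metric.isOpen_ball.measurableSet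
    · exact MeasurableSet.empty
  have hBd : ∀ i, ∀ x ∈ B i, ∀ y ∈ B i, dist x y < ε := by
    intro i x hx y hy
    simp only [B] at hx hy
    split_ifs at hx hy
    · have := dist_triangle_right x y (t.equivFin.symm ⟨i, by assumption⟩).1
      rw [Metric.mem_ball] at hx hy
      linarith
    · exact hx.elim
  refine ⟨(Finset.range t.card).image (disjointed B), ⟨?_, ?_, ?_⟩, ?_⟩
  · intro A hA
    obtain ⟨i, -, rfl⟩ := Finset.mem_image.1 hA
    exact MeasurableSet.disjointed hBm i
  · refine Set.eq_univ_of_forall fun x => ?_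
    have hx : x ∈ ⋃ i, B i := by
      have := ht (Set.mem_univ x)
      simp only [Set.mem_iUnion] at this
      obtain ⟨z, hz, hxz⟩ := this
      refine Set.mem_iUnion.2 ⟨t.equivFin ⟨z, hz⟩, ?_⟩
      simp only [B, Fin.is_lt, dite_true]
      simpa using hxz
    rw [← iUnion_disjointed] at hx
    obtain ⟨i, hi⟩ := Set.mem_iUnion.1 hx
    refine ⟨disjointed B i, ?_, hi⟩
    refine Finset.mem_coe.2 (Finset.mem_image.2 ⟨i, ?_, rfl⟩)
    by_contra hn
    have := disjointed_subset B i hi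
    simp only [B] at this
    rw [dif_neg (by simpa using hn)] at this
    exact this
  · intro A hA A' hA' hne
    obtain ⟨i, -, rfl⟩ := Finset.mem_image.1 (Finset.mem_coe.1 hA)
    obtain ⟨j, -, rfl⟩ := Finset.mem_image.1 (Finset.mem_coe.1 hA')
    exact disjoint_disjointed B (fun h => hne (by rw [h]))
  · intro A hA x hx y hy
    obtain ⟨i, -, rfl⟩ := Finset.mem_image.1 hA
    exact hBd i x (disjointed_subset B i hx) y (disjointed_subset B i hy)

lemma measurableSet_goodSet {ι : Type*} [Fintype ι] [DecidableEq ι] (f : X → X) (hf : Measurable f)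
    (a : X → ι) (ha : ∀ i, MeasurableSet (a ⁻¹' {i})) (s m : ℕ) (ψ : (Fin m → ι) → ℝ) (b : ℝ) :
    MeasurableSet (goodSet f a s m ψ b) := by
  have : goodSet f a s m ψ b = ⋂ N : ℕ, ⋃ J : ℕ, ⋃ (_ : N ≤ J),
      {x | ∑ j ∈ Finset.range J, ψ (wd f a m (f^[s + j * m] x)) < J * (m * b)} := by
    ext x
    simp only [goodSet, Set.mem_ofPred_eq, frequently_atTop, Set.mem_iInter, Set.mem_iUnion]
    constructor
    · intro h N
      obtain ⟨J, h1, h2⟩ := h N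
      exact ⟨J, h1, h2⟩
    · intro h N
      obtain ⟨J, h1, h2⟩ := h N
      exact ⟨J, h1, h2⟩
  rw [this]
  refine MeasurableSet.iInter fun N => MeasurableSet.iUnion fun J => MeasurableSet.iUnion fun _ => ?_
  refine measurableSet_lt (Finset.measurable_sum _ fun j _ => ?_) measurable_const
  exact (measurable_word f hf a ha m ψ).comp (hf.iterate _)

theorem exists_good_set [Nonempty X] (f : X → X) (hf : Continuous f) (ε : ℝ) (hε : 0 < ε)
    (b α : ℝ) (hb : 0 ≤ b) (hα : b < α) :
    ∃ Z : Set X, MeasurableSet Z ∧ PZeps f (fun _ => 0) Z ε ≤ α ∧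
      ∀ (ν : Measure X), IsProbabilityMeasure ν → Ergodic f ν → ksEntropy f ν < b → ν Z = 1 := by
  classical
  obtain ⟨s, hs, hsε⟩ := exists_small_partition (X := X) ε hε
  obtain ⟨a, ha⟩ := exists_symbol hs
  obtain ⟨x0⟩ := ‹Nonempty X›
  have : Nonempty {A // A ∈ s} := ⟨a x0⟩
  have hne : Nonempty X := ⟨x0⟩
  have haA : ∀ A : {A // A ∈ s}, a ⁻¹' {A} = A.1 := fun A => by ext x; simp [ha]
  have ham : ∀ A : {A // A ∈ s}, MeasurableSet (a ⁻¹' {A}) := fun A => by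
    rw [haA]; exact hs.1 _ A.2
  have had : ∀ x y, a x = a y → dist x y < ε := fun x y h =>
    hsε _ (a y).2 x ((ha x (a y)).1 h) y ((ha y (a y)).1 rfl)
  set θ := (α - b) / 2 with hθ
  have hθ0 : 0 < θ := by rw [hθ]; linarith
  let I := {p : (m : ℕ) × (((Fin m → {A // A ∈ s}) → ℚ) × ℕ) //
    0 < p.1 ∧ ∑ v, Real.exp (-(p.2.1 v : ℝ)) ≤ Real.exp θ}
  have hI : Nonempty I := by
    obtain ⟨ψ, -, h2, -⟩ := exists_rat_cost (V := Fin 1 → {A // A ∈ s})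
      (fun _ => 1 / Fintype.card (Fin 1 → {A // A ∈ s})) (fun _ => by positivity) (by
        rw [Finset.sum_const, Finset.card_univ, nsmul_eq_mul]
        have : (Fintype.card (Fin 1 → {A // A ∈ s}) : ℝ) ≠ 0 := by
          exact_mod_cast Fintype.card_ne_zero
        field_simp) _ θ hθ0 (lt_add_one _)
    exact ⟨⟨⟨1, ψ, 0⟩, one_pos, h2⟩⟩
  obtain ⟨e, he⟩ := exists_surjective_nat I
  let Zf : I → Set X := fun p => goodSet f a p.1.2.2 p.1.1 (fun v => (p.1.2.1 v : ℝ)) b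
  refine ⟨⋃ n, Zf (e n), ?_, ?_, ?_⟩
  · exact MeasurableSet.iUnion fun n => measurableSet_goodSet f hf.measurable a ham _ _ _ _
  · refine iInf₂_le α ?_
    refine mZ_iUnion f α ε _ fun n => ?_
    obtain ⟨h1, h2⟩ := (e n).2
    refine mZ_goodSet f a ε had _ _ h1 _ b θ α hb hθ0.le h2 ?_
    have h3 : (1 : ℝ) ≤ ((e n).1.1 : ℝ) := by exact_mod_cast h1
    have h4 : 1 * (α - b) ≤ ((e n).1.1 : ℝ) * (α - b) :=
      mul_le_mul_of_nonneg_right h3 (by linarith)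
    linarith
  · intro ν hνp hν hent
    have h1 : atTop.liminf (fun n : ℕ => ((dynH f ν s n / n : ℝ) : EReal)) < b :=
      lt_of_le_of_lt (le_iSup₂ (f := fun (s : Finset (Set X)) (_ : IsFinPartition s) =>
        atTop.liminf (fun n : ℕ => ((dynH f ν s n / n : ℝ) : EReal))) s hs) hent
    have h2 := frequently_lt_of_liminf_lt (by isBoundedDefault) h1
    obtain ⟨m, hm, hlt⟩ := (h2.and_eventually (eventually_gt_atTop 0)).exists.imp
      fun m h => And.symm h
    have hm' : (0 : ℝ) < m := by exact_mod_cast hm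
    rw [EReal.coe_lt_coe_iff, div_lt_iff₀ hm', dynH_eq f ν a ha] at hlt
    obtain ⟨ψ, hψ0, hψ1, hψ2⟩ := exists_rat_cost _ (fun _ => measureReal_nonneg)
      (sum_cyl f hf.measurable a ham ν m) (m * b) θ hθ0 (by linarith)
    have hintg : ∫ x, (ψ (wd f a m x) : ℝ) ∂ν < m * b := by
      have := (integral_word f hf.measurable a ham ν m (fun v => (ψ v : ℝ))).2
      refine lt_of_eq_of_lt this hψ2
    have hae := ergodic_freq f ν hν (fun x => (ψ (wd f a m x) : ℝ))
      (measurable_word f hf.measurable a ham m (fun v => (ψ v : ℝ))) (fun x => hψ0 _)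
      (∑ v, (ψ v : ℝ)) (fun x => Finset.single_le_sum (f := fun v => (ψ v : ℝ))
        (fun v _ => hψ0 v) (Finset.mem_univ _)) m hm (m * b) hintg
    have hmem : ∀ᵐ x ∂ν, x ∈ ⋃ n, Zf (e n) := by
      filter_upwards [hae] with x hx
      obtain ⟨r, hr⟩ := freq_phase f _ m (m * b) x hx
      obtain ⟨n, hn⟩ := he ⟨⟨m, ψ, r⟩, hm, hψ1⟩
      refine Set.mem_iUnion.2 ⟨n, ?_⟩
      rw [hn]
      exact hr
    rw [← measure_univ (μ := ν)]
    exact measure_congr (eventuallyEq_univ.2 hmem)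

end Upper3

end Paper

namespace Paper

section Final

variable {X : Type*} [MetricSpace X] [CompactSpace X] [MeasurableSpace X] [BorelSpace X]

lemma integral_indicator_real (ν : Measure X) (Z : Set X) (hZ : MeasurableSet Z) :
    ∫ x, Z.indicator (fun _ => (1 : ℝ)) x ∂ν = ν.real Z := by
  rw [integral_indicator hZ]; simp

lemma decomp_real (f : X → X) (μ : Measure X) [IsProbabilityMeasure μ]
    (τ : Measure (MeasureTheory.ProbabilityMeasure X))
    (hτ : IsErgodicDecomp f Set.univ μ τ) (Z : Set X) (hZ : MeasurableSet Z) :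
    μ.real Z = ∫ ν : MeasureTheory.ProbabilityMeasure X, ν.toMeasure.real Z ∂τ := by
  have h := hτ.2.2 (Z.indicator (fun _ => (1 : ℝ))) ((integrable_const _).indicator hZ)
  rw [integral_indicator_real _ _ hZ] at h
  rw [h]
  congr 1
  ext ν
  exact integral_indicator_real _ _ hZ

lemma ae_full (f : X → X) (μ : Measure X) [IsProbabilityMeasure μ]
    (τ : Measure (MeasureTheory.ProbabilityMeasure X))
    (hτ : IsErgodicDecomp f Set.univ μ τ) (Z : Set X) (hZ : MeasurableSet Z) (h1 : μ Z = 1) :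
    ∀ᵐ ν : MeasureTheory.ProbabilityMeasure X ∂τ, ν.toMeasure Z = 1 := by
  have := hτ.1
  have h := decomp_real f μ τ hτ Z hZ
  have hμ : μ.real Z = 1 := by simp [Measure.real, h1]
  have hi : Integrable (fun ν : MeasureTheory.ProbabilityMeasure X => ν.toMeasure.real Z) τ := by
    by_contra hc
    rw [integral_undef hc, hμ] at h
    norm_num at h
  have h0 : ∫ ν : MeasureTheory.ProbabilityMeasure X, (1 - ν.toMeasure.real Z) ∂τ = 0 := by
    rw [integral_sub (integrable_const _) hi, ← h, hμ]; simp
  rw [integral_eq_zero_iff_of_nonneg (fun ν => sub_nonneg.2 measureReal_le_one)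
    ((integrable_const _).sub hi)] at h0
  filter_upwards [h0] with ν hν
  have h2 : ν.toMeasure.real Z = 1 := by
    simp only [Pi.zero_apply] at hν; linarith
  have h3 := ENNReal.ofReal_toReal (measure_ne_top ν.toMeasure Z)
  rw [← h3]
  change ENNReal.ofReal (ν.toMeasure.real Z) = 1
  rw [h2]; simp

lemma ksEntropy_nonneg (f : X → X) (μ : Measure X) [IsProbabilityMeasure μ] :
    0 ≤ ksEntropy f μ := by
  refine le_iSup₂_of_le {Set.univ} ⟨by simp, by simp, by simp⟩ ?_
  refine le_liminf_of_le (by isBoundedDefault) (Eventually.of_forall fun n => ?_)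
  rw [EReal.coe_nonneg]
  refine div_nonneg ?_ (Nat.cast_nonneg _)
  unfold dynH
  rw [neg_nonneg]
  refine Finset.sum_nonpos fun w _ => ?_
  exact mul_nonpos_of_nonneg_of_nonpos measureReal_nonneg
    (Real.log_nonpos measureReal_nonneg measureReal_le_one)

lemma ae_invariant (f : X → X) (hf : Continuous f) (μ : Measure X)
    (τ : Measure (MeasureTheory.ProbabilityMeasure X))
    (hτ : IsErgodicDecomp f Set.univ μ τ) :
    ∀ᵐ ν : MeasureTheory.ProbabilityMeasure X ∂τ,
      MeasurePreserving f ν.toMeasure ν.toMeasure := by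
  have := hτ.1
  have hB : BorelSpace (MeasureTheory.ProbabilityMeasure X) := ⟨rfl⟩
  let S : Set (MeasureTheory.ProbabilityMeasure X) := {ν | ν.map hf.measurable.aemeasurable = ν}
  have hS : IsClosed S := isClosed_eq (ProbabilityMeasure.continuous_map hf) continuous_id
  have h1 : τ S = 1 := by
    refine le_antisymm prob_le_one ?_
    rw [← hτ.2.1]
    refine measure_mono fun ν hν => ?_
    apply Subtype.ext
    exact hν.1.toMeasurePreserving.map_eq
  have h2 : ∀ᵐ ν ∂τ, ν ∈ S := (prob_compl_eq_zero_iff hS.measurableSet).2 h1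
  filter_upwards [h2] with ν hν
  refine ⟨hf.measurable, ?_⟩
  exact congrArg Subtype.val hν

lemma PZeps_anti (f : X → X) (φ : X → ℝ) (Z : Set X) {ε ε' : ℝ} (h : ε ≤ ε') :
    PZeps f φ Z ε' ≤ PZeps f φ Z ε := by
  refine le_iInf₂ fun α hα => iInf₂_le α ?_
  refine le_antisymm ?_ bot_le
  rw [← bot_eq_zero, ← show mZ f φ Z α ε = ⊥ from hα]
  refine iSup_mono fun N => ?_
  refine le_iInf₂ fun c hc => iInf₂_le c ⟨hc.1, hc.2.trans ?_⟩
  refine iUnion_mono fun i => ?_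
  intro y hy j hj
  exact (hy j hj).trans_le h

lemma essSup_le_Pmu (f : X → X) (hf : Continuous f) (μ : Measure X) [IsProbabilityMeasure μ]
    (τ : Measure (MeasureTheory.ProbabilityMeasure X))
    (hτ : IsErgodicDecomp f Set.univ μ τ) :
    essSup (fun ν : MeasureTheory.ProbabilityMeasure X => ksEntropy f ν.toMeasure) τ
      ≤ Pmu f (fun _ => 0) μ := by
  refine EReal.le_of_forall_lt_iff_le.1 fun β hβ => ?_
  have hex : ∀ k : ℕ, ∃ Z, (MeasurableSet Z ∧ μ Z = 1) ∧
      PZeps f (fun _ => 0) Z (1 / ((k : ℝ) + 1)) < β := by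
    intro k
    have h1 : (⨅ (Z : Set X) (_ : MeasurableSet Z ∧ μ Z = 1),
        PZeps f (fun _ => 0) Z (1 / ((k : ℝ) + 1))) < β := by
      refine lt_of_le_of_lt ?_ hβ
      exact le_iSup₂_of_le (f := fun (ε : ℝ) (_ : 0 < ε) =>
        ⨅ (Z : Set X) (_ : MeasurableSet Z ∧ μ Z = 1), PZeps f (fun _ => 0) Z ε)
        (1 / ((k : ℝ) + 1)) (by positivity) le_rfl
    simp only [iInf_lt_iff] at h1
    obtain ⟨Z, hZ, h⟩ := h1
    exact ⟨Z, hZ, h⟩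
  choose Z hZ hlt using hex
  refine essSup_le_of_ae_le _ ?_
  have hall : ∀ᵐ ν : MeasureTheory.ProbabilityMeasure X ∂τ, ∀ k, ν.toMeasure (Z k) = 1 :=
    ae_all_iff.2 fun k => ae_full f μ τ hτ (Z k) (hZ k).1 (hZ k).2
  filter_upwards [hall, ae_invariant f hf μ τ hτ] with ν h1 h2
  refine (ksEntropy_le_Pmu f hf ν.toMeasure h2).trans ?_
  refine iSup₂_le fun ε hε => ?_
  obtain ⟨k, hk⟩ := exists_nat_one_div_lt hε
  exact iInf₂_le_of_le (Z k) ⟨(hZ k).1, h1 k⟩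
    ((PZeps_anti f _ (Z k) hk.le).trans (hlt k).le)

lemma Pmu_le_essSup (f : X → X) (hf : Continuous f) (μ : Measure X) [IsProbabilityMeasure μ]
    (τ : Measure (MeasureTheory.ProbabilityMeasure X))
    (hτ : IsErgodicDecomp f Set.univ μ τ) :
    Pmu f (fun _ => 0) μ ≤
      essSup (fun ν : MeasureTheory.ProbabilityMeasure X => ksEntropy f ν.toMeasure) τ := by
  have := hτ.1
  have hne : Nonempty X := μ.nonempty_of_neZero
  refine EReal.le_of_forall_lt_iff_le.1 fun α hα => ?_
  obtain ⟨b, hb1, hb2⟩ := EReal.lt_iff_exists_real_btwn.1 hα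
  have hae := ae_lt_of_essSup_lt hb1
  have hb0 : 0 ≤ b := by
    obtain ⟨ν, hν⟩ := hae.exists
    exact_mod_cast ((ksEntropy_nonneg f ν.toMeasure).trans_lt hν).le
  have hba : b < α := by exact_mod_cast hb2
  refine iSup₂_le fun ε hε => ?_
  obtain ⟨Z, hZ, hP, hgood⟩ := exists_good_set f hf ε hε b α hb0 hba
  refine iInf₂_le_of_le Z ⟨hZ, ?_⟩ hP
  have hout : ∀ T : Set (MeasureTheory.ProbabilityMeasure X),
      (∀ ν : MeasureTheory.ProbabilityMeasure X, ν.toMeasure Z = 1 → ν ∈ T) → τ T = 1 := by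
    intro T hT
    refine le_antisymm prob_le_one ?_
    rw [← hτ.2.1]
    refine measure_mono_ae ?_
    filter_upwards [hae] with ν hν hE
    exact hT ν (hgood ν.toMeasure inferInstance hE.1 hν)
  have hdec := decomp_real f μ τ hτ Z hZ
  have hi : Integrable (fun ν : MeasureTheory.ProbabilityMeasure X => ν.toMeasure.real Z) τ := by
    by_contra hc
    rw [integral_undef hc, measureReal_eq_zero_iff] at hdec
    have h1 : μ Zᶜ = 1 := by rwa [prob_compl_eq_one_iff hZ]
    have h2 := ae_full f μ τ hτ Zᶜ hZ.compl h1
    have h3 := hout {ν | ¬ ν.toMeasure Zᶜ = 1} (fun ν hν => by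
      simp only [mem_setOf_eq]
      rw [prob_compl_eq_one_iff hZ, hν]; simp)
    have h4 : τ {ν | ¬ ν.toMeasure Zᶜ = 1} = 0 := h2
    rw [h3] at h4
    exact one_ne_zero h4
  have hT1 := hout {ν | ν.toMeasure.real Z = 1} (fun ν hν => by simp [Measure.real, hν])
  have hnm : NullMeasurableSet {ν : MeasureTheory.ProbabilityMeasure X | ν.toMeasure.real Z = 1} τ :=
    hi.aestronglyMeasurable.aemeasurable.nullMeasurable (measurableSet_singleton (1 : ℝ))
  have hae1 : ∀ᵐ ν : MeasureTheory.ProbabilityMeasure X ∂τ, ν.toMeasure.real Z = 1 :=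
    (prob_compl_eq_zero_iff₀ hnm).2 hT1
  have hfin : μ.real Z = 1 := by
    rw [hdec, integral_congr_ae hae1]; simp
  have h3 := ENNReal.ofReal_toReal (measure_ne_top μ Z)
  rw [← h3]
  change ENNReal.ofReal (μ.real Z) = 1
  rw [hfin]; simp

end Final

end Paper

/-- Corollary 4.6: for any ergodic decomposition `τ` of `μ`,
`E_μ(f) = ess sup {h_ν(f) : ν ∈ E(X,f)}` (essential supremum w.r.t. `τ`);
consequently `E_μ(f) ≥ h_μ(f)`. -/
theorem entropyPressure_eq_essSup_ergodic_decomposition {X : Type*} [MetricSpace X] [CompactSpace X] [MeasurableSpace X] [BorelSpace X]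
    (f : X → X) (hf : Continuous f)
    (μ : Measure X) (hp : IsProbabilityMeasure μ) (hinv : MeasurePreserving f μ μ)
    (τ : Measure (MeasureTheory.ProbabilityMeasure X))
    (hτ : IsErgodicDecomp f Set.univ μ τ) :
    Pmu f (fun _ => 0) μ =
      essSup (fun ν : MeasureTheory.ProbabilityMeasure X => ksEntropy f ν.toMeasure) τ ∧
    ksEntropy f μ ≤ Pmu f (fun _ => 0) μ := by
  exact ⟨le_antisymm (Pmu_le_essSup f hf μ τ hτ) (essSup_le_Pmu f hf μ τ hτ),
    ksEntropy_le_Pmu f hf μ hinv⟩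
end
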